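/- arXiv:2008.03091 — 4 statements merged into one kernel-verified Lean document; each statement's English description precedes it below -/
import Mathlib

section
/- Any n-node finite connected graph G with diameter D and minor density δ = δ(G) admits, for every collection of parts P_1,...,P_k, a shortcut with congestion at most 8δD·⌈log₂ n⌉ and dilation at most 8δ(2D+1); in particular, G admits shortcuts with congestion O(δD log n) and dilation O(δD). -/
open SimpleGraph

/-- `H` is a minor of `G`. -/
def IsMinor {V W : Type} (G : SimpleGraph V) (H : SimpleGraph W) : Prop :=
  ∃ f : W → Set V,
    (∀ w, (f w).Nonempty) ∧
    (∀ w, (G.induce (f w)).Connected) ∧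
    (Pairwise fun w₁ w₂ => Disjoint (f w₁) (f w₂)) ∧
    (∀ w₁ w₂, H.Adj w₁ w₂ → ∃ u ∈ f w₁, ∃ v ∈ f w₂, G.Adj u v)

/-- The minor density `δ(G)`: the supremum of `|E'| / |V'|` over all minors `H = (V', E')`
of `G`. -/
noncomputable def minorDensity {V : Type} [Fintype V] (G : SimpleGraph V) : ℝ :=
  sSup {d : ℝ | ∃ (W : Type) (_ : Fintype W) (H : SimpleGraph W),
    IsMinor G H ∧ d = (Nat.card H.edgeSet : ℝ) / (Nat.card W : ℝ)}

/-- The subgraph `G[P] + H`: the union of the subgraph of `G` induced by `P` with the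
subgraph `H`. -/
def partGraph {V : Type} (G : SimpleGraph V) (P : Set V) (H : G.Subgraph) : G.Subgraph :=
  (⊤ : G.Subgraph).induce P ⊔ H

/-- The graph `Γ` has diameter at most `d`: it is connected and all pairwise distances are
at most `d`. -/
def DiamLE {α : Type} (Γ : SimpleGraph α) (d : ℝ) : Prop :=
  Γ.Connected ∧ ∀ u v : α, (Γ.dist u v : ℝ) ≤ d

/-- Sets defined by recursion from the deepest level upwards. -/
lemma exists_fix {V : Type} (d : V → ℕ) (D : ℕ) (hd : ∀ v, d v ≤ D) (F : Set V → V → Prop)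
    (hF : ∀ O O' : Set V, ∀ v, (∀ w, d v < d w → (w ∈ O ↔ w ∈ O')) → (F O v ↔ F O' v)) :
    ∃ O : Set V, ∀ v, v ∈ O ↔ F O v := by
  have key : ∀ j : ℕ, ∃ O : Set V, ∀ v, D < d v + j → (v ∈ O ↔ F O v) := by
    intro j
    induction j with
    | zero => exact ⟨∅, fun v hv => by have := hd v; omega⟩
    | succ j ih =>
      obtain ⟨O, hO⟩ := ih
      refine ⟨{v | F O v}, fun v hv => ?_⟩
      apply hF
      intro w hw
      exact hO w (by omega)
  obtain ⟨O, hO⟩ := key (D + 1)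
  exact ⟨O, fun v => hO v (by omega)⟩

/-- weight of a random subset -/
noncomputable def wt {ι : Type} [Fintype ι] [DecidableEq ι] (p : ℝ) (S : Finset ι) : ℝ :=
  (∏ _i ∈ S, p) * ∏ _i ∈ Finset.univ \ S, (1 - p)

lemma wt_nonneg {ι : Type} [Fintype ι] [DecidableEq ι] (p : ℝ) (h0 : 0 ≤ p) (h1 : p ≤ 1)
    (S : Finset ι) : 0 ≤ wt p S := by
  unfold wt
  apply mul_nonneg <;> apply Finset.prod_nonneg <;> intros <;> linarith

lemma wt_sum {ι : Type} [Fintype ι] [DecidableEq ι] (p : ℝ) :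
    ∑ S : Finset ι, wt p S = 1 := by
  have := Finset.prod_add (fun _ : ι => p) (fun _ => 1 - p) Finset.univ
  simp only [Finset.powerset_univ] at this
  unfold wt
  rw [← this]
  simp

lemma wt_event {ι : Type} [Fintype ι] [DecidableEq ι] (p : ℝ) (i : ι) (B : Finset ι)
    (hi : i ∉ B) :
    ∑ S : Finset ι, wt p S * (if i ∈ S ∧ Disjoint S B then 1 else 0) = p * (1 - p) ^ B.card := by
  have h := Finset.prod_add (fun j : ι => if j ∈ B then 0 else p)
    (fun j => if j = i then 0 else 1 - p) Finset.univ
  simp only [Finset.powerset_univ] at h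
  have h1 : ∀ S : Finset ι, wt p S * (if i ∈ S ∧ Disjoint S B then 1 else 0)
      = (∏ j ∈ S, if j ∈ B then 0 else p) * ∏ j ∈ Finset.univ \ S, if j = i then 0 else 1 - p := by
    intro S
    by_cases hiS : i ∈ S
    · by_cases hB : Disjoint S B
      · rw [if_pos ⟨hiS, hB⟩, mul_one, wt]
        congr 1
        · apply Finset.prod_congr rfl
          intro j hj
          rw [if_neg (Finset.disjoint_left.mp hB hj)]
        · apply Finset.prod_congr rfl
          intro j hj
          rw [if_neg]
          rintro rfl
          simp [hiS] at hj
      · rw [if_neg (by tauto), mul_zero]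
        rw [Finset.not_disjoint_iff] at hB
        obtain ⟨j, hj, hjB⟩ := hB
        rw [Finset.prod_eq_zero hj (by simp [hjB]), zero_mul]
    · rw [if_neg (by tauto), mul_zero]
      rw [Finset.prod_eq_zero (s := Finset.univ \ S) (i := i) (by simp [hiS]) (by simp), mul_zero]
  rw [Finset.sum_congr rfl (fun S _ => h1 S), ← h]
  have h2 : ∀ j : ι, ((if j ∈ B then 0 else p) + if j = i then 0 else 1 - p)
      = (if j = i then p else 1) * (if j ∈ B then 1 - p else 1) := by
    intro j
    by_cases hj : j = i
    · subst hj; simp [hi]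
    · by_cases hB : j ∈ B <;> simp [hj, hB]
  rw [Finset.prod_congr rfl (fun j _ => h2 j), Finset.prod_mul_distrib]
  simp [Finset.prod_ite_eq']

lemma wt_card {ι : Type} [Fintype ι] [DecidableEq ι] (p : ℝ) :
    ∑ S : Finset ι, wt p S * (S.card : ℝ) = p * Fintype.card ι := by
  have : ∀ S : Finset ι, (S.card : ℝ) = ∑ i : ι, if i ∈ S ∧ Disjoint S ∅ then (1:ℝ) else 0 := by
    intro S; simp
  simp_rw [this, Finset.mul_sum]
  rw [Finset.sum_comm]
  rw [Finset.sum_congr rfl (fun i _ => wt_event p i ∅ (by simp))]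
  simp [mul_comm]

lemma num_ineq (D : ℕ) (hD : 1 ≤ D) :
    (7 / 12 : ℝ) < (1 - 1 / (2 * D)) ^ (D - 1) * (1 - 1 / (4 * D)) := by
  obtain ⟨m, rfl⟩ : ∃ m, D = m + 1 := ⟨D - 1, by omega⟩
  simp only [Nat.add_sub_cancel]
  set x : ℝ := 1 - 1 / (2 * ((m + 1 : ℕ) : ℝ)) with hx
  set y : ℝ := 1 - 1 / (4 * ((m + 1 : ℕ) : ℝ)) with hy
  have hm : (0:ℝ) ≤ m := Nat.cast_nonneg m
  have hx0 : 0 < x := by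
    rw [hx]; push_cast
    rw [sub_pos, div_lt_one (by positivity)]; linarith
  have hy0 : 0 < y := by
    rw [hy]; push_cast
    rw [sub_pos, div_lt_one (by positivity)]; linarith
  have hxy : x ≤ y ^ 2 := by
    have : y ^ 2 = x + (1 / (4 * ((m + 1 : ℕ) : ℝ))) ^ 2 := by
      rw [hx, hy]; push_cast; field_simp; ring
    rw [this]; nlinarith [sq_nonneg (1 / (4 * ((m + 1 : ℕ) : ℝ)))]
  have hexp : Real.exp (-1) ≤ x ^ (2 * m + 1) := by
    have h1 : x⁻¹ ≤ Real.exp (1 / (2 * m + 1)) := by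
      have : x⁻¹ = 1 / (2 * m + 1) + 1 := by
        rw [hx]; push_cast
        have : (2 * ((m:ℝ) + 1) - 1) = 2 * m + 1 := by ring
        have h3 : 1 - 1 / (2 * ((m:ℝ) + 1)) = (2 * m + 1) / (2 * (m + 1)) := by
          field_simp; ring
        rw [h3]; field_simp; ring
      rw [this]; exact Real.add_one_le_exp _
    have h2 : (x⁻¹) ^ (2 * m + 1) ≤ Real.exp 1 := by
      calc (x⁻¹) ^ (2 * m + 1) ≤ (Real.exp (1 / (2 * m + 1))) ^ (2 * m + 1) :=
            pow_le_pow_left₀ (by positivity) h1 _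
        _ = Real.exp 1 := by
            rw [← Real.exp_nat_mul]; congr 1; push_cast; field_simp
    rw [Real.exp_neg, inv_le_comm₀ (Real.exp_pos 1) (by positivity), ← inv_pow]
    exact h2
  have he : (7 / 12 : ℝ) ^ 2 < Real.exp (-1) := by
    rw [Real.exp_neg, lt_inv_comm₀ (by positivity) (Real.exp_pos 1)]
    have := Real.exp_one_lt_d9
    norm_num at this ⊢; linarith
  have : (7 / 12 : ℝ) ^ 2 < (x ^ m * y) ^ 2 := by
    calc _ < Real.exp (-1) := he
      _ ≤ x ^ (2 * m + 1) := hexp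
      _ = (x ^ m) ^ 2 * x := by ring
      _ ≤ (x ^ m) ^ 2 * y ^ 2 := by gcongr
      _ = _ := by ring
  exact lt_of_pow_lt_pow_left₀ 2 (by positivity) this

/-- minors: edges at most `δ` times vertices -/
lemma minor_bdd {V : Type} [Fintype V] (G : SimpleGraph V) :
    BddAbove {d : ℝ | ∃ (W : Type) (_ : Fintype W) (H : SimpleGraph W),
    IsMinor G H ∧ d = (Nat.card H.edgeSet : ℝ) / (Nat.card W : ℝ)} := by
  classical
  refine ⟨(Fintype.card V : ℝ), ?_⟩
  rintro d ⟨W, _, H, ⟨f, hne, -, hdis, -⟩, rfl⟩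
  choose g hg using hne
  have hinj : Function.Injective g := by
    intro a b hab
    by_contra hne
    exact Set.disjoint_left.mp (hdis hne) (hg a) (hab ▸ hg b)
  have hc : Fintype.card W ≤ Fintype.card V := Fintype.card_le_of_injective g hinj
  apply div_le_of_le_mul₀ (by positivity) (by positivity)
  rw [Nat.card_eq_fintype_card, Nat.card_eq_fintype_card]
  have h1 : Fintype.card H.edgeSet ≤ Fintype.card W * Fintype.card W := by
    rw [← SimpleGraph.edgeFinset_card]
    refine H.card_edgeFinset_le_card_choose_two.trans ?_
    rw [Nat.choose_two_right]
    exact (Nat.div_le_self _ _).trans (Nat.mul_le_mul_left _ (Nat.sub_le _ _))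
  have h2 : Fintype.card H.edgeSet ≤ Fintype.card V * Fintype.card W :=
    h1.trans (Nat.mul_le_mul_right _ hc)
  exact_mod_cast h2

lemma minor_edges_le {V : Type} [Fintype V] (G : SimpleGraph V) (W : Type) [Fintype W]
    (H : SimpleGraph W) (h : IsMinor G H) :
    (Nat.card H.edgeSet : ℝ) ≤ minorDensity G * Nat.card W := by
  have h1 := le_csSup (minor_bdd G) ⟨W, inferInstance, H, h, rfl⟩
  by_cases hW : Nat.card W = 0
  · have : IsEmpty W := by
      rw [Nat.card_eq_fintype_card] at hW
      exact Fintype.card_eq_zero_iff.mp hW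
    have : IsEmpty H.edgeSet := ⟨fun e => by
      obtain ⟨e, he⟩ := e
      induction e with | h a b => exact IsEmpty.false a⟩
    simp
  · have : (0:ℝ) < Nat.card W := by exact_mod_cast Nat.pos_of_ne_zero hW
    rw [div_le_iff₀ this] at h1
    exact h1

lemma minorDensity_nonneg {V : Type} [Fintype V] (G : SimpleGraph V) : 0 ≤ minorDensity G := by
  apply Real.sSup_nonneg
  rintro d ⟨W, _, H, -, rfl⟩
  positivity

lemma half_le_minorDensity {V : Type} [Fintype V] (G : SimpleGraph V) (u v : V)
    (h : G.Adj u v) : 1 / 2 ≤ minorDensity G := by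
  have hm : IsMinor G (⊤ : SimpleGraph Bool) := by
    refine ⟨fun b => {if b then u else v}, fun w => by simp, fun w => ?_, ?_, ?_⟩
    · apply SimpleGraph.Connected.mk
      rintro ⟨a, ha⟩ ⟨b, hb⟩
      obtain rfl : a = b := ha.trans hb.symm
      exact SimpleGraph.Reachable.refl _
    · intro a b hab
      have := h.ne
      have := h.ne'
      cases a <;> cases b <;> simp_all
    · intro a b hab
      have := h.symm
      cases a <;> cases b <;> simp_all
  have := minor_edges_le G Bool ⊤ hm
  have h1 : Nat.card (⊤ : SimpleGraph Bool).edgeSet = 1 := by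
    rw [Nat.card_eq_fintype_card, ← SimpleGraph.edgeFinset_card,
      SimpleGraph.card_edgeFinset_top_eq_card_choose_two]
    rfl
  rw [h1] at this
  simp at this
  linarith

/-- One step towards the root, starting from a non-root vertex outside `X`. -/
def RR {V : Type} (r : V) (par : V → V) (X : Set V) (a b : V) : Prop :=
  a ≠ r ∧ a ∉ X ∧ b = par a

abbrev Reach {V : Type} (r : V) (par : V → V) (X : Set V) : V → V → Prop :=
  Relation.ReflTransGen (RR r par X)

/-- `par` is the parent function of a rooted tree of depth at most `D`, with depth `d`. -/
structure IsTr {V : Type} (G : SimpleGraph V) (D : ℕ) (r : V) (par : V → V) (d : V → ℕ) : Prop where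
  adj : ∀ v, v ≠ r → G.Adj v (par v)
  dep : ∀ v, v ≠ r → d (par v) + 1 = d v
  le : ∀ v, d v ≤ D

lemma exists_tr {V : Type} (G : SimpleGraph V) (hG : G.Connected) (D : ℕ)
    (hD : ∀ u v : V, G.dist u v ≤ D) (r : V) :
    ∃ par : V → V, IsTr G D r par (fun v => G.dist r v) := by
  have : ∀ v, ∃ w, v ≠ r → G.Adj v w ∧ G.dist r w + 1 = G.dist r v := by
    intro v
    by_cases hv : v = r
    · exact ⟨r, fun h => (h hv).elim⟩
    · obtain ⟨p, hp⟩ := (hG v r).exists_walk_length_eq_dist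
      cases p with
      | nil => exact absurd rfl hv
      | @cons _ w _ h q =>
        refine ⟨w, fun _ => ⟨h, ?_⟩⟩
        have h1 : G.dist w r ≤ q.length := SimpleGraph.dist_le q
        have h2 : G.dist v r ≤ G.dist v w + G.dist w r := hG.dist_triangle
        have h3 : G.dist v w = 1 := SimpleGraph.dist_eq_one_iff_adj.mpr h
        rw [SimpleGraph.Walk.length_cons] at hp
        rw [SimpleGraph.dist_comm (u := r) (v := w), SimpleGraph.dist_comm (u := r) (v := v)]
        omega
  choose par hpar using this
  exact ⟨par, fun v hv => (hpar v hv).1, fun v hv => (hpar v hv).2, fun v => hD _ _⟩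

lemma Reach.depth {V : Type} {G : SimpleGraph V} {D : ℕ} {r : V} {par : V → V} {d : V → ℕ}
    (T : IsTr G D r par d) {X : Set V} {x v : V} (h : Reach r par X x v) : d v ≤ d x := by
  induction h with
  | refl => exact le_rfl
  | tail _ hs ih =>
    obtain ⟨h1, -, rfl⟩ := hs
    have := T.dep _ h1
    omega

lemma Reach.congr {V : Type} {G : SimpleGraph V} {D : ℕ} {r : V} {par : V → V} {d : V → ℕ}
    (T : IsTr G D r par d) {X Y : Set V} {x v : V} (h : Reach r par X x v)
    (hXY : ∀ w, d v < d w → (w ∈ X ↔ w ∈ Y)) : Reach r par Y x v := by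
  induction h using Relation.ReflTransGen.head_induction_on with
  | refl => exact .refl
  | head hs hr ih =>
    refine .head ?_ ih
    obtain ⟨h1, h2, rfl⟩ := hs
    refine ⟨h1, ?_, rfl⟩
    have := T.dep _ h1
    have h3 := Reach.depth T hr
    rwa [← hXY _ (by omega)]

lemma exists_top {V : Type} {G : SimpleGraph V} {D : ℕ} {r : V} {par : V → V} {d : V → ℕ}
    (T : IsTr G D r par d) (X : Set V) (x : V) :
    ∃ v, Reach r par X x v ∧ (v ∈ X ∨ v = r) := by
  have : ∀ n, ∀ x, d x ≤ n → ∃ v, Reach r par X x v ∧ (v ∈ X ∨ v = r) := by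
    intro n
    induction n with
    | zero =>
      intro x hx
      refine ⟨x, .refl, Or.inr ?_⟩
      by_contra h
      have := T.dep x h
      omega
    | succ n ih =>
      intro x hx
      by_cases h : x = r
      · exact ⟨x, .refl, Or.inr h⟩
      by_cases h' : x ∈ X
      · exact ⟨x, .refl, Or.inl h'⟩
      have := T.dep x h
      obtain ⟨v, hv, hv'⟩ := ih (par x) (by omega)
      exact ⟨v, .head ⟨h, h', rfl⟩ hv, hv'⟩
  exact this _ x le_rfl

lemma reach_unique {V : Type} {r : V} {par : V → V} {X O : Set V} (hOX : O ⊆ X)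
    {x v w : V} (hv : Reach r par X x v) (hw : Reach r par X x w) (hvO : v ∈ O) (hwO : w ∈ O) :
    v = w := by
  have hU : Relator.RightUnique (RR r par X) := by
    rintro a b c ⟨-, -, rfl⟩ ⟨-, -, rfl⟩; rfl
  have aux : ∀ {a b : V}, a ∈ O → Reach r par X a b → a = b := by
    intro a b ha h
    rcases Relation.ReflTransGen.cases_head h with h | ⟨c, ⟨-, h, -⟩, -⟩
    · exact h
    · exact absurd (hOX ha) h
  rcases Relation.ReflTransGen.total_of_right_unique hU hv hw with h | h
  · exact aux hvO h
  · exact (aux hwO h).symm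

/-- parts hanging below `v` -/
noncomputable def II {V ι : Type} [Fintype ι] (r : V) (par : V → V) (P : ι → Set V) (O : Set V)
    (v : V) : Finset ι :=
  open Classical in Finset.univ.filter fun i => ∃ x ∈ P i, Reach r par O x v

lemma mem_II {V ι : Type} [Fintype ι] {r : V} {par : V → V} {P : ι → Set V} {O : Set V}
    {v : V} {i : ι} : i ∈ II r par P O v ↔ ∃ x ∈ P i, Reach r par O x v := by
  simp [II]

lemma exists_O {V ι : Type} [Fintype ι] {G : SimpleGraph V} {D : ℕ} {r : V} {par : V → V}
    {d : V → ℕ} (T : IsTr G D r par d) (P : ι → Set V) (c : ℝ) :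
    ∃ O : Set V, ∀ v, v ∈ O ↔ (v ≠ r ∧ c < (II r par P O v).card) := by
  apply exists_fix d D T.le (fun O v => v ≠ r ∧ c < ((II r par P O v).card : ℝ))
  intro O O' v h
  have : II r par P O v = II r par P O' v := by
    ext i
    rw [mem_II, mem_II]
    constructor
    · rintro ⟨x, hx, hr⟩
      exact ⟨x, hx, hr.congr T h⟩
    · rintro ⟨x, hx, hr⟩
      exact ⟨x, hx, hr.congr T (fun w hw => (h w hw).symm)⟩
  simp only [this]

/-- The event making the pair `(v, i)` an edge of the minor. -/
lemma exists_event {V ι : Type} [Fintype ι] [DecidableEq ι] {G : SimpleGraph V} {D : ℕ} {r : V}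
    {par : V → V} {d : V → ℕ} (T : IsTr G D r par d) (P : ι → Set V)
    (hdisj : Pairwise fun i j => Disjoint (P i) (P j)) (O : Set V) (i : ι) {x v : V}
    (hx : x ∈ P i) (h : Reach r par O x v) (hv : v ∉ P i) :
    ∃ B : Finset ι, i ∉ B ∧ B.card + d v ≤ d x ∧ ∀ S : Finset ι, Disjoint S B →
      ∃ u ∈ P i, u ≠ r ∧ Reach r par (O ∪ ⋃ j ∈ S, P j) (par u) v ∧ v ∉ ⋃ j ∈ S, P j := by
  classical
  induction h with
  | refl => exact absurd hx hv
  | @tail y w hr hs ih =>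
    obtain ⟨h1, h2, rfl⟩ := hs
    have hd := T.dep _ h1
    set C : Finset ι := Finset.univ.filter fun j => par y ∈ P j with hC
    have hC1 : C.card ≤ 1 := by
      rw [Finset.card_le_one]
      intro a ha b hb
      by_contra hab
      simp only [hC, Finset.mem_filter, Finset.mem_univ, true_and] at ha hb
      exact Set.disjoint_left.mp (hdisj hab) ha hb
    have hiC : i ∉ C := by simpa [hC] using hv
    have hCS : ∀ S : Finset ι, Disjoint S C → par y ∉ ⋃ j ∈ S, P j := by
      intro S hS hmem
      simp only [Set.mem_iUnion] at hmem
      obtain ⟨j, hj, hj'⟩ := hmem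
      exact Finset.disjoint_left.mp hS hj (by simpa [hC] using hj')
    by_cases hy : y ∈ P i
    · refine ⟨C, hiC, ?_, fun S hS => ⟨y, hy, h1, .refl, hCS S hS⟩⟩
      have := Reach.depth T hr
      omega
    · obtain ⟨B, hB1, hB2, hB3⟩ := ih hy
      refine ⟨B ∪ C, by simp [hB1, hiC], ?_, fun S hS => ?_⟩
      · have := Finset.card_union_le B C
        omega
      · rw [Finset.disjoint_union_right] at hS
        obtain ⟨u, hu, hur, hu2, hu3⟩ := hB3 S hS.1
        refine ⟨u, hu, hur, hu2.tail ⟨h1, ?_, rfl⟩, hCS S hS.2⟩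
        rintro (h | h)
        · exact h2 h
        · exact hu3 h

/-- For every sample `S`, the constructed minor bounds the number of good pairs. -/
lemma pairs_le {V ι : Type} [Fintype V] [Fintype ι] [DecidableEq ι] {G : SimpleGraph V} {D : ℕ}
    {r : V} {par : V → V} {d : V → ℕ} (T : IsTr G D r par d) (P : ι → Set V)
    (hdisj : Pairwise fun i j => Disjoint (P i) (P j)) (hconn : ∀ i, (G.induce (P i)).Connected)
    (O : Finset V) (S : Finset ι) (N : Finset (V × ι))
    (hN : ∀ q ∈ N, q.1 ∈ O ∧ q.2 ∈ S ∧ ∃ u ∈ P q.2, u ≠ r ∧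
      Reach r par ((O : Set V) ∪ ⋃ j ∈ S, P j) (par u) q.1 ∧ q.1 ∉ ⋃ j ∈ S, P j) :
    (N.card : ℝ) ≤ minorDensity G * (O.card + S.card) := by
  classical
  set Q : Set V := ⋃ j ∈ S, P j with hQ
  set X : Set V := (O : Set V) ∪ Q with hX
  let W := {v : V // v ∈ O ∧ v ∉ Q} ⊕ {i : ι // i ∈ S}
  let f : W → Set V := Sum.elim (fun v => {x | Reach r par X x v.1}) (fun i => P i.1)
  have hfQ : ∀ (v : {v : V // v ∈ O ∧ v ∉ Q}) x, Reach r par X x v.1 → x ∉ Q := by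
    intro v x hx
    rcases Relation.ReflTransGen.cases_head hx with h | ⟨c, ⟨-, h, -⟩, -⟩
    · rw [h]; exact v.2.2
    · exact fun h' => h (Or.inr h')
  have hPQ : ∀ (i : {i : ι // i ∈ S}) x, x ∈ P i.1 → x ∈ Q := by
    intro i x hx
    simp only [hQ, Set.mem_iUnion]
    exact ⟨i.1, i.2, hx⟩
  let H : SimpleGraph W := SimpleGraph.fromRel (fun a b => ∃ u ∈ f a, ∃ v ∈ f b, G.Adj u v)
  have hcon : ∀ w, (G.induce (f w)).Connected := by
    rintro (v | i)
    · have hv : v.1 ∈ f (Sum.inl v) := Relation.ReflTransGen.refl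
      have key : ∀ x, Reach r par X x v.1 → ∃ hx : x ∈ f (Sum.inl v),
          (G.induce (f (Sum.inl v))).Reachable ⟨x, hx⟩ ⟨v.1, hv⟩ := by
        intro x hx
        induction hx using Relation.ReflTransGen.head_induction_on with
        | refl => exact ⟨hv, SimpleGraph.Reachable.refl _⟩
        | @head a c hs hr ih =>
          obtain ⟨hc, ih⟩ := ih
          refine ⟨Relation.ReflTransGen.head hs hr, SimpleGraph.Reachable.trans ?_ ih⟩
          apply SimpleGraph.Adj.reachable
          obtain ⟨h1, h2, rfl⟩ := hs
          exact T.adj _ h1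
      have : Nonempty (f (Sum.inl v)) := ⟨⟨v.1, hv⟩⟩
      apply SimpleGraph.Connected.mk
      rintro ⟨a, ha⟩ ⟨b, hb⟩
      obtain ⟨_, h1⟩ := key a ha
      obtain ⟨_, h2⟩ := key b hb
      exact h1.trans h2.symm
    · exact hconn i.1
  have hminor : IsMinor G H := by
    refine ⟨f, ?_, hcon, ?_, ?_⟩
    · intro w
      obtain ⟨x⟩ := (hcon w).nonempty
      exact ⟨x.1, x.2⟩
    · rintro (v | i) (w | j) hne
      · rw [Set.disjoint_left]
        intro x hx hy
        apply hne
        congr 1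
        exact Subtype.ext (reach_unique (O := (O : Set V)) (X := X) Set.subset_union_left hx hy
          v.2.1 w.2.1)
      · rw [Set.disjoint_left]
        intro x hx hy
        exact hfQ v x hx (hPQ j x hy)
      · rw [Set.disjoint_left]
        intro x hx hy
        exact hfQ w x hy (hPQ i x hx)
      · apply hdisj
        intro h
        exact hne (congrArg Sum.inr (Subtype.ext h))
    · intro a b hab
      rw [SimpleGraph.fromRel_adj] at hab
      rcases hab.2 with h | ⟨u, hu, v, hv, h⟩
      · exact h
      · exact ⟨v, hv, u, hu, h.symm⟩
  have h1 := minor_edges_le G W H hminor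
  have hW : (Nat.card W : ℝ) ≤ O.card + S.card := by
    rw [Nat.card_eq_fintype_card, Fintype.card_sum, Fintype.card_coe]
    have : Fintype.card {v : V // v ∈ O ∧ v ∉ Q} ≤ O.card := by
      rw [Fintype.card_subtype]
      apply Finset.card_le_card
      intro v hv
      simp at hv
      exact hv.1
    push_cast
    have : (Fintype.card {v : V // v ∈ O ∧ v ∉ Q} : ℝ) ≤ O.card := by exact_mod_cast this
    linarith
  have hE : N.card ≤ Nat.card H.edgeSet := by
    rw [Nat.card_eq_fintype_card, ← Fintype.card_coe]
    let g : N → H.edgeSet := fun q =>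
      ⟨s(Sum.inl ⟨q.1.1, (hN q.1 q.2).1, by
          obtain ⟨-, -, u, -, -, -, h⟩ := hN q.1 q.2; exact h⟩,
        Sum.inr ⟨q.1.2, (hN q.1 q.2).2.1⟩), by
          obtain ⟨-, -, u, hu, hur, hr, h⟩ := hN q.1 q.2
          rw [SimpleGraph.mem_edgeSet, SimpleGraph.fromRel_adj]
          exact ⟨by simp, Or.inl ⟨par u, hr, u, hu, (T.adj u hur).symm⟩⟩⟩
    apply Fintype.card_le_of_injective g
    rintro ⟨⟨a, b⟩, h⟩ ⟨⟨a', b'⟩, h'⟩ hg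
    have := congrArg Subtype.val hg
    simp only [g, Sym2.eq_iff, reduceCtorEq, and_false, or_false] at this
    have h1 := congrArg Subtype.val (Sum.inl.inj this.1)
    have h2 := congrArg Subtype.val (Sum.inr.inj this.2)
    simp only at h1 h2
    subst h1 h2
    rfl
  calc (N.card : ℝ) ≤ Nat.card H.edgeSet := by exact_mod_cast hE
    _ ≤ _ := h1
    _ ≤ _ := by
      apply mul_le_mul_of_nonneg_left hW (minorDensity_nonneg G)

lemma num_final (E m k N δ p z D : ℝ) (hDr : 1 ≤ D) (hδ : 1 / 2 ≤ δ) (hp : p = 1 / (2 * D))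
    (hp0 : 0 < p) (hz0 : 0 ≤ z) (hEpos : 0 < E) (hm0 : 0 ≤ m) (hE1 : 8 * δ * D * m ≤ E)
    (hE4 : 3 * δ * k ≤ E) (hNE' : E - m ≤ N) (hnum : 7 / 12 < z * (1 - 1 / (4 * D)))
    (hfin : N * (p * z) ≤ δ * (m + p * k)) : False := by
  have hmE : m ≤ E * (1 / (4 * D)) := by
    rw [mul_one_div, le_div_iff₀ (by positivity)]
    have : m * (4 * D) ≤ 8 * δ * D * m := by
      have : 0 ≤ m * D := by positivity
      nlinarith
    linarith
  have h1 : E * (1 - 1 / (4 * D)) ≤ N := by nlinarith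
  have h2 : E * (7 / 12) * p < N * (p * z) := by
    calc E * (7 / 12) * p < E * (z * (1 - 1 / (4 * D))) * p := by gcongr
      _ = (E * (1 - 1 / (4 * D))) * (p * z) := by ring
      _ ≤ _ := by gcongr
  have h3 : δ * m ≤ E * (p / 4) := by
    have : E * (p / 4) = E / (8 * D) := by rw [hp]; field_simp; norm_num
    rw [this, le_div_iff₀ (by positivity)]
    linarith
  have h4 : δ * (p * k) ≤ E / 3 * p := by nlinarith
  linarith

lemma half_good {V ι : Type} [Fintype V] [Fintype ι] [DecidableEq ι] [DecidableEq V]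
    {G : SimpleGraph V} {D : ℕ} (hD1 : 1 ≤ D)
    {r : V} {par : V → V} {d : V → ℕ} (T : IsTr G D r par d) (P : ι → Set V)
    (hdisj : Pairwise fun i j => Disjoint (P i) (P j)) (hconn : ∀ i, (G.induce (P i)).Connected)
    (hδ : 1 / 2 ≤ minorDensity G) (O : Finset V)
    (hO : ∀ v ∈ O, v ≠ r ∧ 8 * minorDensity G * D < (II r par P O v).card)
    (bad : Finset ι)
    (hbad : ∀ i ∈ bad, 8 * minorDensity G - 1 < (O.filter fun v => i ∈ II r par P O v).card) :
    2 * bad.card ≤ Fintype.card ι := by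
  classical
  by_contra hcon
  push Not at hcon
  set δ := minorDensity G with hδdef
  set E : ℕ := ∑ v ∈ O, (II r par P O v).card with hE
  set m : ℕ := O.card with hm
  set k : ℕ := Fintype.card ι with hk
  have hDr : (1:ℝ) ≤ D := by exact_mod_cast hD1
  -- first count
  have hE1 : 8 * δ * D * m ≤ E := by
    rw [hE]; push_cast
    calc 8 * δ * D * m = ∑ v ∈ O, 8 * δ * D := by rw [Finset.sum_const, nsmul_eq_mul]; ring
      _ ≤ _ := Finset.sum_le_sum fun v hv => (hO v hv).2.le
  have hE2 : E = ∑ i : ι, (O.filter fun v => i ∈ II r par P O v).card := by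
    have := Finset.sum_card_bipartiteAbove_eq_sum_card_bipartiteBelow (s := O)
      (t := (Finset.univ : Finset ι)) (fun v i => i ∈ II r par P O v)
    rw [hE]
    convert this using 2 with v hv
    · simp [Finset.bipartiteAbove]
    · simp [Finset.bipartiteBelow]
  have hbadpos : 0 < bad.card := by omega
  have hE3 : 6 * δ * bad.card ≤ E := by
    rw [hE2]; push_cast
    calc 6 * δ * bad.card = ∑ i ∈ bad, 6 * δ := by rw [Finset.sum_const, nsmul_eq_mul]; ring
      _ ≤ ∑ i ∈ bad, ((O.filter fun v => i ∈ II r par P O v).card : ℝ) :=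
          Finset.sum_le_sum fun i hi => by have := hbad i hi; linarith
      _ ≤ _ := Finset.sum_le_sum_of_subset_of_nonneg (Finset.subset_univ _)
          (fun _ _ _ => by positivity)
  have hEpos : (0:ℝ) < E := by
    have : (0:ℝ) < bad.card := by exact_mod_cast hbadpos
    have h2 : 0 < 6 * δ * bad.card := by positivity
    linarith
  have hE4 : 3 * δ * k ≤ E := by
    have : (k:ℝ) ≤ 2 * bad.card := by exact_mod_cast hcon.le
    nlinarith
  -- pairs
  set N : Finset (V × ι) := (O ×ˢ Finset.univ).filter
    fun q => q.2 ∈ II r par P O q.1 ∧ q.1 ∉ P q.2 with hN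
  have hNE : E ≤ N.card + m := by
    rw [hN, Finset.card_filter, Finset.sum_product, hm, Finset.card_eq_sum_ones,
      ← Finset.sum_add_distrib, hE]
    apply Finset.sum_le_sum
    intro v hv
    rw [← Finset.card_filter]
    have h1 : (Finset.univ.filter fun i => v ∈ P i).card ≤ 1 := by
      rw [Finset.card_le_one]
      intro a ha b hb
      by_contra hab
      simp only [Finset.mem_filter, Finset.mem_univ, true_and] at ha hb
      exact Set.disjoint_left.mp (hdisj hab) ha hb
    calc (II r par P O v).card ≤ ((Finset.univ.filter fun i => i ∈ II r par P O v ∧ v ∉ P i) ∪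
          (Finset.univ.filter fun i => v ∈ P i)).card := by
            apply Finset.card_le_card
            intro i hi
            simp only [Finset.mem_union, Finset.mem_filter, Finset.mem_univ, true_and]
            tauto
      _ ≤ _ := (Finset.card_union_le _ _).trans (by gcongr)
  have hev : ∀ q : V × ι, ∃ B : Finset ι, q ∈ N → (q.2 ∉ B ∧ B.card ≤ D - 1 ∧
      ∀ S : Finset ι, Disjoint S B → ∃ u ∈ P q.2, u ≠ r ∧
      Reach r par ((O : Set V) ∪ ⋃ j ∈ S, P j) (par u) q.1 ∧ q.1 ∉ ⋃ j ∈ S, P j) := by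
    intro q
    by_cases hq : q ∈ N
    · simp only [hN, Finset.mem_filter, Finset.mem_product, Finset.mem_univ, and_true,
        mem_II] at hq
      obtain ⟨hqO, ⟨x, hx, hxr⟩, hqP⟩ := hq
      obtain ⟨B, hB1, hB2, hB3⟩ := exists_event T P hdisj O q.2 hx hxr hqP
      refine ⟨B, fun _ => ⟨hB1, ?_, hB3⟩⟩
      have h1 := T.dep q.1 (hO q.1 hqO).1
      have h2 := T.le x
      omega
    · exact ⟨∅, fun h => absurd h hq⟩
  choose B hB using hev
  set p : ℝ := 1 / (2 * D) with hp
  have hp0 : 0 < p := by rw [hp]; positivity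
  have hp1 : p ≤ 1 := by
    rw [hp, div_le_one (by positivity)]; linarith
  have hS : ∀ S : Finset ι,
      ∑ q ∈ N, (if q.2 ∈ S ∧ Disjoint S (B q) then (1:ℝ) else 0) ≤ δ * (m + S.card) := by
    intro S
    rw [← Finset.sum_filter, Finset.sum_const, nsmul_eq_mul, mul_one]
    apply pairs_le T P hdisj hconn O S
    intro q hq
    rw [Finset.mem_filter] at hq
    have hqN := hq.1
    simp only [hN, Finset.mem_filter, Finset.mem_product] at hqN
    exact ⟨hqN.1.1, hq.2.1, (hB q hq.1).2.2 S hq.2.2⟩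
  have hsum : ∑ S : Finset ι, wt p S *
      ∑ q ∈ N, (if q.2 ∈ S ∧ Disjoint S (B q) then (1:ℝ) else 0) ≤ δ * (m + p * k) := by
    calc _ ≤ ∑ S : Finset ι, wt p S * (δ * (m + S.card)) :=
          Finset.sum_le_sum fun S _ =>
            mul_le_mul_of_nonneg_left (hS S) (wt_nonneg p hp0.le hp1 S)
      _ = δ * m * ∑ S : Finset ι, wt p S + δ * ∑ S : Finset ι, wt p S * (S.card : ℝ) := by
          rw [Finset.mul_sum, Finset.mul_sum, ← Finset.sum_add_distrib]
          apply Finset.sum_congr rfl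
          intro S _; ring
      _ = _ := by rw [wt_sum, wt_card]; ring
  have hlow : (N.card : ℝ) * (p * (1 - p) ^ (D - 1)) ≤ ∑ S : Finset ι, wt p S *
      ∑ q ∈ N, (if q.2 ∈ S ∧ Disjoint S (B q) then (1:ℝ) else 0) := by
    simp_rw [Finset.mul_sum]
    rw [Finset.sum_comm, ← nsmul_eq_mul, ← Finset.sum_const]
    apply Finset.sum_le_sum
    intro q hq
    rw [wt_event p q.2 (B q) (hB q hq).1]
    apply mul_le_mul_of_nonneg_left _ hp0.le
    exact pow_le_pow_of_le_one (by linarith) (by linarith) (hB q hq).2.1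
  have hnum := num_ineq D hD1
  rw [← hp] at hnum
  set z := (1 - p) ^ (D - 1) with hz
  have hz0 : 0 ≤ z := pow_nonneg (by linarith) _
  have hNE' : (E:ℝ) - m ≤ N.card := by
    have : (E:ℝ) ≤ N.card + m := by exact_mod_cast hNE
    linarith
  exact num_final E m k N.card δ p z D hDr hδ hp hp0 hz0 hEpos (Nat.cast_nonneg m) hE1 hE4 hNE' hnum
    (hlow.trans hsum)

lemma dist_le_of_classes {α β : Type} [DecidableEq β] (Γ : SimpleGraph α) (hΓ : Γ.Connected)
    (f : α → β) (F : Finset β) (hF : ∀ a, f a ∈ F) (L : ℕ)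
    (hL : ∀ a b, f a = f b → Γ.dist a b ≤ L) (u v : α) :
    Γ.dist u v + 1 ≤ (L + 1) * F.card := by
  have hy : ∀ t, t ≤ Γ.dist u v → ∃ y, Γ.dist u y = t := by
    obtain ⟨p, hp⟩ := (hΓ u v).exists_walk_length_eq_dist
    intro t ht
    refine ⟨p.getVert t, ?_⟩
    have h1 : Γ.dist u (p.getVert t) ≤ t := by
      have := SimpleGraph.dist_le (p.take t)
      rw [SimpleGraph.Walk.take_length] at this
      omega
    have h2 : Γ.dist (p.getVert t) v ≤ Γ.dist u v - t := by
      have := SimpleGraph.dist_le (p.drop t)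
      rw [SimpleGraph.Walk.drop_length] at this
      omega
    have h3 : Γ.dist u v ≤ Γ.dist u (p.getVert t) + Γ.dist (p.getVert t) v := hΓ.dist_triangle
    omega
  have hy' : ∀ t, ∃ y, t ≤ Γ.dist u v → Γ.dist u y = t := by
    intro t
    by_cases h : t ≤ Γ.dist u v
    · obtain ⟨y, hy⟩ := hy t h; exact ⟨y, fun _ => hy⟩
    · exact ⟨u, fun h' => absurd h' h⟩
  choose y hy using hy'
  have h := Finset.card_le_mul_card_image_of_maps_to (s := Finset.range (Γ.dist u v + 1)) (t := F)
    (f := fun t => f (y t)) (fun t _ => hF _) (L + 1) ?_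
  · simpa using h
  · intro b _
    set s := (Finset.range (Γ.dist u v + 1)).filter (fun t => f (y t) = b) with hs
    rcases s.eq_empty_or_nonempty with h0 | h0
    · rw [h0]; simp
    · have hsub : s ⊆ Finset.Icc (s.min' h0) (s.min' h0 + L) := by
        intro t ht
        rw [Finset.mem_Icc]
        refine ⟨Finset.min'_le _ _ ht, ?_⟩
        have hm := Finset.min'_mem s h0
        set t0 := s.min' h0
        simp only [hs, Finset.mem_filter, Finset.mem_range] at ht hm
        have h1 := hL (y t0) (y t) (hm.2.trans ht.2.symm)
        have h2 : Γ.dist u (y t) ≤ Γ.dist u (y t0) + Γ.dist (y t0) (y t) := hΓ.dist_triangle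
        rw [hy t (by omega), hy t0 (by omega)] at h2
        omega
      have := Finset.card_le_card hsub
      simp at this
      omega

/-- The tree-restricted shortcut. -/
def sc {V ι : Type} {G : SimpleGraph V} {D : ℕ} {r : V} {par : V → V} {d : V → ℕ}
    (T : IsTr G D r par d) (P : ι → Set V) (O : Set V) (i : ι) : G.Subgraph where
  verts := {w | ∃ x ∈ P i, Reach r par O x w}
  Adj a b := ((∃ x ∈ P i, Reach r par O x a) ∧ RR r par O a b) ∨
    ((∃ x ∈ P i, Reach r par O x b) ∧ RR r par O b a)
  adj_sub := by
    rintro a b (⟨-, h1, -, rfl⟩ | ⟨-, h1, -, rfl⟩)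
    · exact T.adj _ h1
    · exact (T.adj _ h1).symm
  edge_vert := by
    rintro a b (⟨h, -⟩ | ⟨⟨x, hx, hr⟩, h⟩)
    · exact h
    · exact ⟨x, hx, hr.tail h⟩
  symm := ⟨by rintro a b (h | h); exacts [Or.inr h, Or.inl h]⟩

lemma sc_congestion {V ι : Type} [Fintype ι] {G : SimpleGraph V} {D : ℕ} {r : V} {par : V → V}
    {d : V → ℕ} (T : IsTr G D r par d) (P : ι → Set V) (O : Set V) (c : ℝ) (hc : 0 ≤ c)
    (hO : ∀ v, v ≠ r → v ∉ O → ((II r par P O v).card : ℝ) ≤ c) (e : Sym2 V) :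
    ({i : ι | e ∈ (sc T P O i).edgeSet}.ncard : ℝ) ≤ c := by
  classical
  induction e with
  | h a b =>
  have main : ∀ a b, RR r par O a b →
      ({i : ι | s(a, b) ∈ (sc T P O i).edgeSet}.ncard : ℝ) ≤ c := by
    intro a b hab
    refine le_trans ?_ (hO a hab.1 hab.2.1)
    have : {i : ι | s(a, b) ∈ (sc T P O i).edgeSet} ⊆ (II r par P O a : Set ι) := by
      intro i hi
      rw [Set.mem_ofPred_eq, SimpleGraph.Subgraph.mem_edgeSet] at hi
      rw [Finset.mem_coe, mem_II]
      rcases hi with h | h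
      · exact h.1
      · exfalso
        obtain ⟨h1, -, h2⟩ := hab
        obtain ⟨-, h3, -, h4⟩ := h
        have := T.dep _ h1
        have := T.dep _ h3
        rw [← h2] at *
        rw [← h4] at *
        omega
    have := Set.ncard_le_ncard this (Set.toFinite _)
    rw [Set.ncard_coe_finset] at this
    exact_mod_cast this
  by_cases h1 : RR r par O a b
  · exact main a b h1
  by_cases h2 : RR r par O b a
  · rw [Sym2.eq_swap]; exact main b a h2
  have : {i : ι | s(a, b) ∈ (sc T P O i).edgeSet} = ∅ := by
    ext i
    simp only [Set.mem_ofPred_eq, SimpleGraph.Subgraph.mem_edgeSet, Set.mem_empty_iff_false,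
      iff_false]
    rintro (h | h)
    · exact h1 h.2
    · exact h2 h.2
  rw [this]; simpa using hc

lemma sc_diam {V ι : Type} [Fintype V] [DecidableEq V] [Fintype ι] {G : SimpleGraph V} {D : ℕ}
    {r : V} {par : V → V} [DecidableEq ι]
    {d : V → ℕ} (T : IsTr G D r par d) (P : ι → Set V) (O : Finset V) (i : ι)
    (hconn : (G.induce (P i)).Connected) (b : ℝ)
    (hb : ((O.filter fun v => i ∈ II r par P O v).card : ℝ) ≤ b - 1) :
    DiamLE (partGraph G (P i) (sc T P O i)).coe (b * (2 * D + 1)) := by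
  classical
  set K := partGraph G (P i) (sc T P O i) with hK
  have hPK : ∀ x, x ∈ P i → x ∈ K.verts := fun x hx => Or.inl hx
  have hKv : ∀ w, w ∈ K.verts → ∃ x ∈ P i, Reach r par O x w := by
    rintro w (h | h)
    · exact ⟨w, h, .refl⟩
    · exact h
  have hKv' : ∀ w, (∃ x ∈ P i, Reach r par O x w) → w ∈ K.verts := fun w h => Or.inr h
  have hstep : ∀ a b (ha : a ∈ K.verts), RR r par O a b → K.Adj a b := by
    intro a b ha h
    exact Or.inr (Or.inl ⟨hKv a ha, h⟩)
  have hwalk : ∀ x (hx : x ∈ K.verts) w, Reach r par O x w → ∃ hw : w ∈ K.verts,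
      ∃ p : K.coe.Walk ⟨x, hx⟩ ⟨w, hw⟩, p.length + d w = d x := by
    intro x hx w h
    induction h with
    | refl => exact ⟨hx, .nil, by simp⟩
    | @tail y z hr hs ih =>
      obtain ⟨hy, p, hp⟩ := ih
      have hadj := hstep _ _ hy hs
      have hadj' : K.coe.Adj ⟨y, hy⟩ ⟨z, K.edge_vert hadj.symm⟩ := by
        rw [SimpleGraph.Subgraph.coe_adj]; exact hadj
      refine ⟨K.edge_vert hadj.symm, p.concat hadj', ?_⟩
      · rw [SimpleGraph.Walk.length_concat]
        obtain ⟨h1, -, rfl⟩ := hs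
        have := T.dep _ h1
        omega
  have hPreach : ∀ x (hx : x ∈ P i) y (hy : y ∈ P i),
      K.coe.Reachable ⟨x, hPK x hx⟩ ⟨y, hPK y hy⟩ := by
    intro x hx y hy
    let φ : G.induce (P i) →g K.coe :=
      ⟨fun a => ⟨a.1, hPK a.1 a.2⟩, fun {a b} h => Or.inl ⟨a.2, b.2, h⟩⟩
    exact (hconn ⟨x, hx⟩ ⟨y, hy⟩).map φ
  have hΓ : K.coe.Connected := by
    obtain ⟨x0⟩ := hconn.nonempty
    have : Nonempty K.verts := ⟨⟨x0.1, hPK _ x0.2⟩⟩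
    have key : ∀ w : K.verts, K.coe.Reachable ⟨x0.1, hPK _ x0.2⟩ w := by
      rintro ⟨w, hw⟩
      obtain ⟨x, hx, hr⟩ := hKv w hw
      obtain ⟨_, p, -⟩ := hwalk x (hPK x hx) w hr
      exact (hPreach _ x0.2 _ hx).trans p.reachable
    exact SimpleGraph.Connected.mk fun a b => (key a).symm.trans (key b)
  refine ⟨hΓ, fun u v => ?_⟩
  choose top htop using exists_top T (O : Set V)
  have h := dist_le_of_classes K.coe hΓ (fun w => top w.1)
    (insert r (O.filter fun v => i ∈ II r par P O v)) ?_ (2 * D) ?_ u v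
  · have h1 := Finset.card_insert_le r (O.filter fun v => i ∈ II r par P O v)
    have h2 : (K.coe.dist u v : ℝ) + 1 ≤ (2 * D + 1) *
        ((insert r (O.filter fun v => i ∈ II r par P O v)).card : ℝ) := by exact_mod_cast h
    have h3 : ((insert r (O.filter fun v => i ∈ II r par P O v)).card : ℝ) ≤ b := by
      have : ((insert r (O.filter fun v => i ∈ II r par P O v)).card : ℝ) ≤
        (O.filter fun v => i ∈ II r par P O v).card + 1 := by exact_mod_cast h1
      linarith
    have h4 : (2 * (D:ℝ) + 1) *
        ((insert r (O.filter fun v => i ∈ II r par P O v)).card : ℝ) ≤ (2 * D + 1) * b := by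
      gcongr
    linarith
  · rintro ⟨w, hw⟩
    obtain ⟨x, hx, hr⟩ := hKv w hw
    obtain ⟨h1, h2⟩ := htop w
    rw [Finset.mem_insert, Finset.mem_filter, mem_II]
    rcases h2 with h2 | h2
    · exact Or.inr ⟨h2, x, hx, hr.trans h1⟩
    · exact Or.inl h2
  · rintro ⟨a, ha⟩ ⟨b, hb⟩ hab
    simp only at hab
    obtain ⟨_, p, hp⟩ := hwalk a ha (top a) (htop a).1
    have h2 := (htop b).1
    rw [← hab] at h2
    obtain ⟨_, q, hq⟩ := hwalk b hb (top a) h2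
    have := SimpleGraph.dist_le (p.append q.reverse)
    rw [SimpleGraph.Walk.length_append, SimpleGraph.Walk.length_reverse] at this
    have := T.le a
    have := T.le b
    omega

/-- Partial shortcuts for at least half of the parts. -/
lemma partial_shortcut {V ι : Type} [Fintype V] [Fintype ι] (G : SimpleGraph V)
    (hG : G.Connected) [Nontrivial V] (D : ℕ) (hD : ∀ u v : V, G.dist u v ≤ D) (P : ι → Set V)
    (hdisj : Pairwise fun i j => Disjoint (P i) (P j))
    (hconn : ∀ i, (G.induce (P i)).Connected) :
    ∃ (H : ι → G.Subgraph) (bad : Finset ι), 2 * bad.card ≤ Fintype.card ι ∧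
      (∀ e : Sym2 V, ({i : ι | e ∈ (H i).edgeSet}.ncard : ℝ) ≤ 8 * minorDensity G * D) ∧
      (∀ i, i ∉ bad →
        DiamLE (partGraph G (P i) (H i)).coe (8 * minorDensity G * (2 * D + 1))) := by
  classical
  obtain ⟨r, s, hrs⟩ := exists_pair_ne V
  obtain ⟨par, T⟩ := exists_tr G hG D hD r
  have hsd := T.dep s hrs.symm
  have hδ := half_le_minorDensity G _ _ (T.adj s hrs.symm)
  have hD1 : 1 ≤ D := by have := T.le s; omega
  obtain ⟨O', hO'⟩ := exists_O T P (8 * minorDensity G * D)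
  obtain ⟨O, rfl⟩ : ∃ O : Finset V, (O : Set V) = O' := ⟨O'.toFinset, by simp⟩
  refine ⟨sc T P O, Finset.univ.filter fun i => 8 * minorDensity G - 1 <
    (O.filter fun v => i ∈ II r par P O v).card, ?_, ?_, ?_⟩
  · exact half_good hD1 T P hdisj hconn hδ O (fun v hv => (hO' v).mp hv) _
      (fun i hi => by simpa using hi)
  · apply sc_congestion T P O _ (by positivity)
    intro v hv hvO
    by_contra h
    exact hvO ((hO' v).mpr ⟨hv, lt_of_not_ge h⟩)
  · intro i hi
    apply sc_diam T P O i (hconn i)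
    simpa using hi

lemma iterate_shortcut {V : Type} [Fintype V] (G : SimpleGraph V)
    (hG : G.Connected) [Nontrivial V] (D : ℕ) (hD : ∀ u v : V, G.dist u v ≤ D) (t : ℕ) :
    ∀ (ι : Type) [Fintype ι] (P : ι → Set V)
    (_ : Pairwise fun i j => Disjoint (P i) (P j))
    (_ : ∀ i, (G.induce (P i)).Connected), Fintype.card ι < 2 ^ t →
    ∃ (H : ι → G.Subgraph),
      (∀ e : Sym2 V, ({i : ι | e ∈ (H i).edgeSet}.ncard : ℝ) ≤ 8 * minorDensity G * D * t) ∧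
      (∀ i, DiamLE (partGraph G (P i) (H i)).coe (8 * minorDensity G * (2 * D + 1))) := by
  classical
  induction t with
  | zero =>
    intro ι _ P _ _ hc
    have : IsEmpty ι := by
      rw [← Fintype.card_eq_zero_iff]; omega
    refine ⟨fun _ => ⊥, fun e => ?_, fun i => isEmptyElim i⟩
    have : {i : ι | e ∈ ((⊥ : G.Subgraph)).edgeSet} = ∅ := by ext i; exact isEmptyElim i
    rw [this]; simp
  | succ t ih =>
    intro ι _ P hdisj hconn hc
    obtain ⟨H1, bad, hbad, hcong, hdiam⟩ := partial_shortcut G hG D hD P hdisj hconn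
    obtain ⟨H2, hcong2, hdiam2⟩ := ih bad (fun i => P i.1)
      (fun i j hij => hdisj (fun h => hij (Subtype.ext h))) (fun i => hconn i.1) (by
        rw [Fintype.card_coe]; rw [pow_succ] at hc; omega)
    refine ⟨fun i => if h : i ∈ bad then H2 ⟨i, h⟩ else H1 i, fun e => ?_, fun i => ?_⟩
    · have hsub : {i : ι | e ∈ (if h : i ∈ bad then H2 ⟨i, h⟩ else H1 i).edgeSet} ⊆
          {i : ι | e ∈ (H1 i).edgeSet} ∪ Subtype.val '' {i : bad | e ∈ (H2 i).edgeSet} := by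
        intro i hi
        rw [Set.mem_ofPred_eq] at hi
        by_cases h : i ∈ bad
        · rw [dif_pos h] at hi
          exact Or.inr ⟨⟨i, h⟩, hi, rfl⟩
        · rw [dif_neg h] at hi
          exact Or.inl hi
      have h1 := (Set.ncard_le_ncard hsub (Set.toFinite _)).trans (Set.ncard_union_le _ _)
      rw [Set.ncard_image_of_injective _ Subtype.val_injective] at h1
      have h2 := hcong e
      have h3 := hcong2 e
      have h1' : ({i : ι | e ∈ (if h : i ∈ bad then H2 ⟨i, h⟩ else H1 i).edgeSet}.ncard : ℝ) ≤
        {i : ι | e ∈ (H1 i).edgeSet}.ncard + {i : bad | e ∈ (H2 i).edgeSet}.ncard := by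
          exact_mod_cast h1
      push_cast
      linarith
    · by_cases h : i ∈ bad
      · beta_reduce; rw [dif_pos h]
        exact hdiam2 ⟨i, h⟩
      · beta_reduce; rw [dif_neg h]
        exact hdiam i h

lemma trivial_diam {V : Type} (G : SimpleGraph V) (P : Set V) (hne : P.Nonempty)
    (hP : P.Subsingleton) (b : ℝ) (hb : 0 ≤ b) : DiamLE (partGraph G P ⊥).coe b := by
  have hv : ∀ x : (partGraph G P ⊥).verts, x.1 ∈ P := by
    rintro ⟨x, h | h⟩
    · exact h
    · exact absurd h (by simp)
  have hs : ∀ x y : (partGraph G P ⊥).verts, x = y := fun x y => Subtype.ext (hP (hv x) (hv y))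
  obtain ⟨a, ha⟩ := hne
  have : Nonempty (partGraph G P ⊥).verts := ⟨⟨a, Or.inl ha⟩⟩
  refine ⟨SimpleGraph.Connected.mk fun x y => ?_, fun x y => ?_⟩
  · rw [hs x y]
  · rw [hs x y]; simpa using hb

/-- **Theorem.** Any `n`-node finite connected graph `G` with diameter `D` and minor density
`δ = δ(G)` admits, for every collection of parts `P 0, ..., P (k-1)`, a shortcut with
congestion at most `8δD⌈log₂ n⌉` and dilation at most `8δ(2D+1)`. -/
theorem shortcuts_of_minor_density
    {V : Type} [Fintype V] (G : SimpleGraph V) (hG : G.Connected)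
    (D : ℕ) (hD : ∀ u v : V, G.dist u v ≤ D)
    (δ : ℝ) (hδ : minorDensity G = δ)
    (k : ℕ) (P : Fin k → Set V)
    (hdisj : Pairwise fun i j => Disjoint (P i) (P j))
    (hconn : ∀ i, (G.induce (P i)).Connected) :
    ∃ H : Fin k → G.Subgraph,
      (∀ e : Sym2 V,
        ({i : Fin k | e ∈ (H i).edgeSet}.ncard : ℝ) ≤
          8 * δ * D * (Nat.clog 2 (Fintype.card V))) ∧
      (∀ i, DiamLE (partGraph G (P i) (H i)).coe (8 * δ * (2 * D + 1))) := by
  classical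
  subst hδ
  have hδ0 := minorDensity_nonneg G
  have hne : ∀ i, (P i).Nonempty := fun i => by
    obtain ⟨x⟩ := (hconn i).nonempty
    exact ⟨x.1, x.2⟩
  by_cases hV : Nontrivial V
  · let A := {i : Fin k // ¬ (P i).Subsingleton}
    have hcard : Fintype.card A < Fintype.card V := by
      choose g hg using hne
      let g' : A → V := fun i => g i.1
      have hinj : Function.Injective g' := by
        intro a b hab
        by_contra hne
        have hne' : a.1 ≠ b.1 := fun h => hne (Subtype.ext h)
        have h2 : g a.1 ∈ P b.1 := by
          have h3 : g a.1 = g b.1 := hab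
          rw [h3]; exact hg b.1
        exact Set.disjoint_left.mp (hdisj hne') (hg a.1) h2
      by_cases hA : Nonempty A
      · obtain ⟨⟨i, hi⟩⟩ := hA
        apply Fintype.card_lt_of_injective_not_surjective g' hinj
        intro hsurj
        rw [Set.not_subsingleton_iff] at hi
        obtain ⟨y, hy, hyg⟩ := hi.exists_ne (g i)
        obtain ⟨⟨j, hj⟩, rfl⟩ := hsurj y
        have hij : j ≠ i := by
          rintro rfl
          exact hyg rfl
        exact Set.disjoint_left.mp (hdisj hij) (hg j) hy
      · rw [not_nonempty_iff] at hA
        rw [Fintype.card_eq_zero]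
        exact Fintype.card_pos
    obtain ⟨H, hH1, hH2⟩ := iterate_shortcut G hG D hD (Nat.clog 2 (Fintype.card V)) A
      (fun i => P i.1) (fun i j hij => hdisj (fun h => hij (Subtype.ext h)))
      (fun i => hconn i.1) (hcard.trans_le (Nat.le_pow_clog (by norm_num) _))
    refine ⟨fun i => if h : ¬ (P i).Subsingleton then H ⟨i, h⟩ else ⊥, fun e => ?_, fun i => ?_⟩
    · refine le_trans ?_ (hH1 e)
      have hsub : {i : Fin k | e ∈ (if h : ¬ (P i).Subsingleton then H ⟨i, h⟩ else ⊥).edgeSet} ⊆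
          Subtype.val '' {i : A | e ∈ (H i).edgeSet} := by
        intro i hi
        rw [Set.mem_ofPred_eq] at hi
        by_cases h : ¬ (P i).Subsingleton
        · rw [dif_pos h] at hi
          exact ⟨⟨i, h⟩, hi, rfl⟩
        · rw [dif_neg h] at hi
          simp at hi
      have h1 := Set.ncard_le_ncard hsub (Set.toFinite _)
      rw [Set.ncard_image_of_injective _ Subtype.val_injective] at h1
      exact_mod_cast h1
    · by_cases h : ¬ (P i).Subsingleton
      · beta_reduce; rw [dif_pos h]
        exact hH2 ⟨i, h⟩
      · beta_reduce; rw [dif_neg h]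
        exact trivial_diam G (P i) (hne i) (not_not.mp h) _ (by positivity)
  · rw [not_nontrivial_iff_subsingleton] at hV
    refine ⟨fun _ => ⊥, fun e => ?_, fun i => ?_⟩
    · simp only [SimpleGraph.Subgraph.edgeSet_bot, Set.mem_empty_iff_false, Set.ofPred_false,
        Set.ncard_empty, Nat.cast_zero]
      positivity
    · exact trivial_diam G (P i) (hne i) (Set.subsingleton_of_subsingleton) _ (by positivity)
end

section
/- For all natural numbers δ ≥ 5 and D ≥ 2δ, there exists a finite connected graph G with diameter at most D and minor density δ(G) ≤ δ, together with a collection of parts in G, such that every shortcut for these parts has quality (congestion plus dilation) at least (δ-3)D/6 = Ω(δD). -/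
open SimpleGraph

namespace ShortcutLB

/-- `R` disjoint paths with `n` vertices, and a clique of `k` extra vertices, the `a`-th of which
is joined to position `a * s` of each path. -/
def gAdj (k s R n : ℕ) : Fin k ⊕ (Fin R × Fin n) → Fin k ⊕ (Fin R × Fin n) → Prop
  | .inl a, .inl b => a ≠ b
  | .inl a, .inr p => p.2.val = a.val * s
  | .inr p, .inl a => p.2.val = a.val * s
  | .inr p, .inr q => p.1 = q.1 ∧ (p.2.val + 1 = q.2.val ∨ q.2.val + 1 = p.2.val)

def gG (k s R n : ℕ) : SimpleGraph (Fin k ⊕ (Fin R × Fin n)) where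
  Adj := gAdj k s R n
  symm := ⟨by
    rintro (a | p) (b | q) h
    · exact Ne.symm h
    · exact h
    · exact h
    · exact ⟨h.1.symm, h.2.symm⟩⟩
  loopless := ⟨by
    rintro (a | p) h
    · exact h rfl
    · have := h.2
      omega⟩

/-- horizontal coordinate -/
def pot (k s R n : ℕ) : Fin k ⊕ (Fin R × Fin n) → ℕ
  | .inl a => a.val * s
  | .inr p => p.2.val

lemma walk_pot {V : Type*} (G : SimpleGraph V) (x : V → ℕ)
    (hx : ∀ u v, G.Adj u v → x v ≤ x u + 1) {u v : V} (p : G.Walk u v) :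
    x v ≤ x u + p.length := by
  induction p with
  | nil => simp
  | cons h p ih =>
    have := hx _ _ h
    rw [Walk.length_cons]
    omega

lemma to_apex (k s R : ℕ) (hs : 0 < s) (v : Fin k ⊕ (Fin R × Fin (k * s))) :
    ∃ a : Fin k, ∃ p : (gG k s R (k * s)).Walk v (.inl a), p.length ≤ s := by
  rcases v with a | ⟨r, x⟩
  · exact ⟨a, Walk.nil, by simp⟩
  · have key : ∀ (a : Fin k) (t : ℕ) (x : Fin (k * s)), x.val = a.val * s + t →
        ∃ p : (gG k s R (k * s)).Walk (.inr (r, x)) (.inl a), p.length = t + 1 := by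
      intro a t
      induction t with
      | zero =>
        intro x hx
        exact ⟨Walk.cons (show (gG k s R (k * s)).Adj (.inr (r, x)) (.inl a) from hx) Walk.nil,
          by simp⟩
      | succ t ih =>
        intro x hx
        have hlt : a.val * s + t < k * s := by have := x.2; omega
        obtain ⟨p, hp⟩ := ih ⟨a.val * s + t, hlt⟩ rfl
        have hadj : (gG k s R (k * s)).Adj (.inr (r, x)) (.inr (r, ⟨a.val * s + t, hlt⟩)) :=
          ⟨rfl, Or.inr (by simp only; omega)⟩
        exact ⟨Walk.cons hadj p, by simp [hp]⟩
    have hlt : x.val / s < k := Nat.div_lt_of_lt_mul (lt_of_lt_of_eq x.2 (mul_comm k s))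
    obtain ⟨p, hp⟩ := key ⟨x.val / s, hlt⟩ (x.val % s) x (by
      exact (Nat.div_add_mod' _ _).symm)
    refine ⟨_, p, ?_⟩
    have := Nat.mod_lt x.val hs
    omega

lemma walk_all (k s R : ℕ) (hs : 0 < s) (u v : Fin k ⊕ (Fin R × Fin (k * s))) :
    ∃ p : (gG k s R (k * s)).Walk u v, p.length ≤ 2 * s + 1 := by
  obtain ⟨a, p, hp⟩ := to_apex k s R hs u
  obtain ⟨b, q, hq⟩ := to_apex k s R hs v
  by_cases h : a = b
  · subst h
    refine ⟨p.append q.reverse, ?_⟩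
    rw [Walk.length_append, Walk.length_reverse]
    omega
  · refine ⟨p.append (Walk.cons (show (gG k s R (k * s)).Adj (.inl a) (.inl b) from h)
      q.reverse), ?_⟩
    rw [Walk.length_append, Walk.length_cons, Walk.length_reverse]
    omega

/-- the `i`-th path -/
def part (k R n : ℕ) (i : Fin R) : Set (Fin k ⊕ (Fin R × Fin n)) :=
  {v | ∃ x, v = .inr (i, x)}

lemma part_conn (k s R n : ℕ) (hn : 0 < n) (i : Fin R) :
    ((gG k s R n).induce (part k R n i)).Connected := by
  have key : ∀ (t : ℕ) (ht : t < n), ((gG k s R n).induce (part k R n i)).Reachable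
      ⟨.inr (i, ⟨0, hn⟩), _, rfl⟩ ⟨.inr (i, ⟨t, ht⟩), _, rfl⟩ := by
    intro t
    induction t with
    | zero => intro ht; exact Reachable.refl _
    | succ t ih =>
      intro ht
      refine (ih (by omega)).trans (Adj.reachable ?_)
      exact ⟨rfl, Or.inl rfl⟩
  rw [connected_iff_exists_forall_reachable]
  refine ⟨⟨.inr (i, ⟨0, hn⟩), _, rfl⟩, ?_⟩
  rintro ⟨_, x, rfl⟩
  exact key x.1 x.2

/-- If an apex-free branch set contains `(r, x)` but not `(r, x+1)`, then everything lies in row `r`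
at positions at most `x`. -/
lemma branch_right (k s R n : ℕ) (S : Set (Fin k ⊕ (Fin R × Fin n)))
    (hc : ((gG k s R n).induce S).Connected) (hA : ∀ a, .inl a ∉ S) (r : Fin R)
    (x y : Fin n) (hxy : x.val + 1 = y.val) (hx : .inr (r, x) ∈ S) (hy : .inr (r, y) ∉ S)
    (r' : Fin R) (z : Fin n) (hz : .inr (r', z) ∈ S) : r' = r ∧ z.val ≤ x.val := by
  obtain ⟨p⟩ := hc.preconnected ⟨_, hx⟩ ⟨_, hz⟩
  have key : ∀ (u v : S) (_ : ((gG k s R n).induce S).Walk u v),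
      (∃ w : Fin n, u.val = .inr (r, w) ∧ w.val ≤ x.val) →
      (∃ w : Fin n, v.val = .inr (r, w) ∧ w.val ≤ x.val) := by
    intro u v p
    induction p with
    | nil => exact id
    | @cons u v w h p ih =>
      rintro ⟨t, ht, htx⟩
      apply ih
      obtain ⟨u, hu⟩ := u
      obtain ⟨v, hv⟩ := v
      simp only at ht
      subst ht
      rcases v with a | ⟨r2, t2⟩
      · exact absurd hv (hA a)
      · have h' : r = r2 ∧ (t.val + 1 = t2.val ∨ t2.val + 1 = t.val) := h
        obtain ⟨rfl, h'⟩ := h'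
        refine ⟨t2, rfl, ?_⟩
        by_contra hcon
        have : t2 = y := Fin.ext (by omega)
        subst this
        exact hy hv
  obtain ⟨w, hw, hwx⟩ := key _ _ p ⟨x, rfl, le_refl _⟩
  simp only [Sum.inr.injEq, Prod.mk.injEq] at hw
  exact ⟨hw.1, by rw [hw.2]; exact hwx⟩

lemma edges_le (k s R n : ℕ) (W : Type) [Fintype W] (H : SimpleGraph W)
    (hm : IsMinor (gG k s R n) H) :
    Nat.card H.edgeSet ≤ (k + 1) * Nat.card W := by
  classical
  obtain ⟨f, -, hconn, hdisj, hadj⟩ := hm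
  have huniq : ∀ w₁ w₂ v, v ∈ f w₁ → v ∈ f w₂ → w₁ = w₂ := by
    intro w₁ w₂ v h1 h2
    by_contra hne
    exact Set.disjoint_left.1 (hdisj hne) h1 h2
  rcases isEmpty_or_nonempty W with hW | hW
  · have : IsEmpty (Sym2 W) := inferInstance
    have : IsEmpty H.edgeSet := ⟨fun e => this.false e.1⟩
    simp
  let owner : Fin k → W := fun a => Classical.epsilon fun w => .inl a ∈ f w
  let N : W → W → Prop := fun w w' => w ≠ w' ∧ ∃ (r : Fin R) (x y : Fin n),
    x.val + 1 = y.val ∧ .inr (r, x) ∈ f w ∧ .inr (r, y) ∈ f w'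
  let next : W → W := fun w => Classical.epsilon (N w)
  let g : W × Option (Fin k) → Sym2 W := fun p =>
    match p.2 with
    | none => s(p.1, next p.1)
    | some a => s(p.1, owner a)
  have hown : ∀ w a, .inl a ∈ f w → owner a = w := by
    intro w a h
    exact huniq _ _ _ (Classical.epsilon_spec (p := fun w => .inl a ∈ f w) ⟨w, h⟩) h
  have hnext : ∀ w w', (∀ a, .inl a ∉ f w) → N w w' → next w = w' := by
    intro w w' hA h
    obtain ⟨hne1, r1, x1, y1, e1, hx1, hy1⟩ : N w (next w) := Classical.epsilon_spec ⟨w', h⟩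
    obtain ⟨hne2, r2, x2, y2, e2, hx2, hy2⟩ := h
    have ny1 : .inr (r1, y1) ∉ f w := fun h => hne1 (huniq _ _ _ h hy1)
    have ny2 : .inr (r2, y2) ∉ f w := fun h => hne2 (huniq _ _ _ h hy2)
    have a1 := branch_right k s R n (f w) (hconn w) hA r1 x1 y1 e1 hx1 ny1 r2 x2 hx2
    have a2 := branch_right k s R n (f w) (hconn w) hA r2 x2 y2 e2 hx2 ny2 r1 x1 hx1
    have e3 : y1 = y2 := Fin.ext (by omega)
    rw [a2.1, e3] at hy1
    exact huniq _ _ _ hy1 hy2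
  have hsub : H.edgeSet ⊆ Set.range g := by
    intro e
    induction e using Sym2.ind with
    | _ w₁ w₂ =>
    intro he
    have he' : H.Adj w₁ w₂ := he
    by_cases h1 : ∃ a, .inl a ∈ f w₁
    · obtain ⟨a, ha⟩ := h1
      refine ⟨(w₂, some a), ?_⟩
      simp only [g]
      rw [hown _ _ ha, Sym2.eq_swap]
    by_cases h2 : ∃ a, .inl a ∈ f w₂
    · obtain ⟨a, ha⟩ := h2
      refine ⟨(w₁, some a), ?_⟩
      simp only [g]
      rw [hown _ _ ha]
    push Not at h1 h2
    obtain ⟨u, hu, v, hv, huv⟩ := hadj _ _ he'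
    rcases u with a | ⟨r, x⟩
    · exact absurd hu (h1 a)
    rcases v with a | ⟨r', y⟩
    · exact absurd hv (h2 a)
    have h' : r = r' ∧ (x.val + 1 = y.val ∨ y.val + 1 = x.val) := huv
    obtain ⟨rfl, h' | h'⟩ := h'
    · refine ⟨(w₁, none), ?_⟩
      simp only [g]
      rw [hnext _ _ h1 ⟨he'.ne, r, x, y, h', hu, hv⟩]
    · refine ⟨(w₂, none), ?_⟩
      simp only [g]
      rw [hnext _ _ h2 ⟨he'.ne.symm, r, y, x, h', hv, hu⟩, Sym2.eq_swap]
  calc Nat.card H.edgeSet ≤ Nat.card (Set.range g) := Nat.card_mono (Set.toFinite _) hsub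
    _ ≤ Nat.card (W × Option (Fin k)) := Finite.card_range_le g
    _ = (k + 1) * Nat.card W := by
      simp [Nat.card_prod, Nat.card_eq_fintype_card, mul_comm]

lemma density (k s R n : ℕ) : minorDensity (gG k s R n) ≤ ((k + 1 : ℕ) : ℝ) := by
  apply Real.sSup_le _ (by positivity)
  rintro d ⟨W, _, H, hm, rfl⟩
  apply div_le_of_le_mul₀ (by positivity) (by positivity)
  exact_mod_cast edges_le k s R n W H hm

/-- A part with dilation below the path length uses a clique edge in its shortcut. -/
lemma uses_edge (k s R n d : ℕ) (hn : 0 < n) (hd : d < n - 1) (i : Fin R)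
    (H : (gG k s R n).Subgraph)
    (hc : (partGraph (gG k s R n) (part k R n i) H).coe.Connected)
    (hdist : ∀ u v, (partGraph (gG k s R n) (part k R n i) H).coe.dist u v ≤ d) :
    ∃ ab : Fin k × Fin k, s(Sum.inl ab.1, Sum.inl ab.2) ∈ H.edgeSet := by
  by_contra hno
  push Not at hno
  let Q := partGraph (gG k s R n) (part k R n i) H
  have hmem : ∀ x, Sum.inr (i, x) ∈ Q.verts := fun x => Or.inl ⟨x, rfl⟩
  let u : Q.verts := ⟨_, hmem ⟨0, hn⟩⟩
  let v : Q.verts := ⟨_, hmem ⟨n - 1, by omega⟩⟩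
  obtain ⟨p, hp⟩ := hc.exists_walk_length_eq_dist u v
  have h1 := walk_pot Q.coe (fun v => pot k s R n v.1) (by
    rintro ⟨a, ha⟩ ⟨b, hb⟩ hab
    have hG : (gG k s R n).Adj a b := Q.adj_sub hab
    have hab' : Q.Adj a b := hab
    rcases a with a | ⟨r, x⟩ <;> rcases b with b | ⟨r', y⟩
    · exfalso
      rcases hab' with h | h
      · obtain ⟨⟨x, hx⟩, -⟩ := h
        cases hx
      · exact hno (a, b) h
    · have h : y.val = a.val * s := hG
      simp only [pot]; omega
    · have h : x.val = b.val * s := hG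
      simp only [pot]; omega
    · have h : r = r' ∧ (x.val + 1 = y.val ∨ y.val + 1 = x.val) := hG
      simp only [pot]; omega) p
  have h2 := hdist u v
  have h3 : p.length ≤ d := by rw [hp]; exact h2
  simp only [u, v, pot] at h1
  omega

end ShortcutLB

/-- **Lemma (lower bound, full shortcuts).** For all naturals `δ ≥ 5` and `D ≥ 2δ`, there
exists a finite connected graph `G` with diameter at most `D` and minor density
`δ(G) ≤ δ`, together with a collection of parts in `G`, such that every shortcut for these
parts of congestion `c` and dilation `d` has quality `c + d ≥ (δ-3)·D/6`. -/
theorem shortcut_quality_lower_bound (δ D : ℕ) (hδ : 5 ≤ δ) (hD : 2 * δ ≤ D) :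
    ∃ (V : Type) (_ : Fintype V) (G : SimpleGraph V) (m : ℕ) (P : Fin m → Set V),
      G.Connected ∧
      (∀ u v : V, G.dist u v ≤ D) ∧
      minorDensity G ≤ δ ∧
      (Pairwise fun i j => Disjoint (P i) (P j)) ∧
      (∀ i, (G.induce (P i)).Connected) ∧
      (∀ (H : Fin m → G.Subgraph) (c d : ℕ),
        (∀ i, (partGraph G (P i) (H i)).coe.Connected ∧
          ∀ u v, (partGraph G (P i) (H i)).coe.dist u v ≤ d) →
        (∀ e : Sym2 V, {i : Fin m | e ∈ (H i).edgeSet}.ncard ≤ c) →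
        (δ - 3) * D ≤ 6 * (c + d)) := by
  classical
  obtain ⟨k, rfl⟩ : ∃ k, δ = k + 3 := ⟨δ - 3, by omega⟩
  have hk : 2 ≤ k := by omega
  obtain ⟨s, hs⟩ : ∃ s, s = (D - 1) / 2 := ⟨_, rfl⟩
  have hs0 : 0 < s := by omega
  have hn : 0 < k * s := by positivity
  let R := k * k * (k * D)
  refine ⟨_, inferInstance, ShortcutLB.gG k s R (k * s), R, ShortcutLB.part k R (k * s),
    ?_, ?_, ?_, ?_, ?_, ?_⟩
  · haveI : Nonempty (Fin k ⊕ (Fin R × Fin (k * s))) := ⟨.inl ⟨0, by omega⟩⟩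
    exact ⟨fun u v => ⟨(ShortcutLB.walk_all k s R hs0 u v).choose⟩⟩
  · intro u v
    obtain ⟨p, hp⟩ := ShortcutLB.walk_all k s R hs0 u v
    have := dist_le p
    omega
  · refine (ShortcutLB.density k s R (k * s)).trans ?_
    exact_mod_cast (by omega : k + 1 ≤ k + 3)
  · intro i j hij
    rw [Set.disjoint_left]
    rintro _ ⟨x, rfl⟩ ⟨y, hy⟩
    simp only [Sum.inr.injEq, Prod.mk.injEq] at hy
    exact hij hy.1
  · exact ShortcutLB.part_conn k s R (k * s) hn
  · intro H c d hdil hcong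
    have e3 : k + 3 - 3 = k := by omega
    rw [e3]
    by_contra hcon
    push Not at hcon
    have hd : d < k * s - 1 := by
      have h1 : D ≤ 2 * s + 2 := by omega
      have h2 : k * D ≤ k * (2 * s + 2) := Nat.mul_le_mul_left _ h1
      have h3 : k * 4 ≤ k * s := Nat.mul_le_mul_left _ (by omega)
      rw [mul_add, mul_left_comm] at h2
      omega
    have huse := fun i => ShortcutLB.uses_edge k s R (k * s) d hn hd i (H i)
      (hdil i).1 (hdil i).2
    choose φ hφ using huse
    have hcard : R ≤ c * (k * k) := by
      have := Finset.card_le_mul_card_image_of_maps_to (s := (Finset.univ : Finset (Fin R)))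
        (t := (Finset.univ : Finset (Fin k × Fin k))) (f := φ) (fun _ _ => Finset.mem_univ _) c
        (by
          intro b _
          refine le_trans ?_ (hcong s(Sum.inl b.1, Sum.inl b.2))
          rw [← Set.ncard_coe_finset]
          apply Set.ncard_le_ncard _ (Set.toFinite _)
          intro i hi
          simp only [Finset.coe_filter, Finset.mem_univ, true_and, Set.mem_setOf_eq] at hi
          have := hφ i
          rw [hi] at this
          exact this)
      simpa using this
    have h4 : k * D ≤ c := by
      have h5 : (k * k) * (k * D) ≤ (k * k) * c := by
        rw [mul_comm (k * k) c]; exact hcard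
      exact Nat.le_of_mul_le_mul_left h5 (by positivity)
    omega
end

section
/- For every finite graph G, let r(G) denote the largest r such that the complete graph K_r is a minor of G. Then (r(G) - 1)/2 ≤ δ(G) ≤ 8·r(G)·√(log₂ r(G)); in particular δ(G) = Θ̃(r(G)). -/
open SimpleGraph

/-- The complete-graph minor size `r(G)`: the largest `r` such that the complete graph
`K_r` is a minor of `G`. -/
noncomputable def completeMinorSize {V : Type} [Fintype V] (G : SimpleGraph V) : ℕ :=
  sSup {r : ℕ | IsMinor G (⊤ : SimpleGraph (Fin r))}

/-- Subgraphs along an injection are minors. -/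
lemma isMinor_of_inj {V W : Type} (G : SimpleGraph V) (H : SimpleGraph W) (g : W → V)
    (hg : Function.Injective g) (h : ∀ a b, H.Adj a b → G.Adj (g a) (g b)) : IsMinor G H := by
  refine ⟨fun w => {g w}, fun w => Set.singleton_nonempty _, fun w => ?_, ?_, ?_⟩
  · rw [SimpleGraph.connected_iff_exists_forall_reachable]
    refine ⟨⟨g w, rfl⟩, ?_⟩
    rintro ⟨x, hx⟩
    have : x = g w := hx
    subst this
    exact Reachable.refl _
  · intro a b hab
    simp only [Set.disjoint_singleton]
    exact fun h => hab (hg h)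
  · intro a b hab
    exact ⟨g a, rfl, g b, rfl, h a b hab⟩

lemma reach_mono {V : Type} (G : SimpleGraph V) {s t : Set V} (hst : s ⊆ t) {x y : V}
    (hx : x ∈ s) (hy : y ∈ s) (h : (G.induce s).Reachable ⟨x, hx⟩ ⟨y, hy⟩) :
    (G.induce t).Reachable ⟨x, hst hx⟩ ⟨y, hst hy⟩ :=
  h.map (SimpleGraph.induceHomOfLE G hst).toHom

lemma isMinor_trans {V W U : Type} {G : SimpleGraph V} {H : SimpleGraph W} {K : SimpleGraph U}
    (h1 : IsMinor G H) (h2 : IsMinor H K) : IsMinor G K := by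
  obtain ⟨f, fne, fc, fd, fa⟩ := h1
  obtain ⟨g, gne, gc, gd, ga⟩ := h2
  refine ⟨fun k => {v | ∃ w ∈ g k, v ∈ f w}, ?_, ?_, ?_, ?_⟩
  · intro k
    obtain ⟨w, hw⟩ := gne k
    obtain ⟨v, hv⟩ := fne w
    exact ⟨v, w, hw, hv⟩
  · intro k
    obtain ⟨w0, hw0⟩ := gne k
    obtain ⟨v0, hv0⟩ := fne w0
    have sub : ∀ w ∈ g k, f w ⊆ {v | ∃ w ∈ g k, v ∈ f w} := fun w hw v hv => ⟨w, hw, hv⟩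
    have inner : ∀ w (hw : w ∈ g k) x (hx : x ∈ f w) y (hy : y ∈ f w),
        (G.induce {v | ∃ w ∈ g k, v ∈ f w}).Reachable ⟨x, sub w hw hx⟩ ⟨y, sub w hw hy⟩ := by
      intro w hw x hx y hy
      exact reach_mono G (sub w hw) hx hy ((fc w).preconnected _ _)
    have key : ∀ a b : g k, (H.induce (g k)).Walk a b → ∀ x (hx : x ∈ f a) y (hy : y ∈ f b),
        (G.induce {v | ∃ w ∈ g k, v ∈ f w}).Reachable ⟨x, sub a a.2 hx⟩ ⟨y, sub b b.2 hy⟩ := by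
      intro a b p
      induction p with
      | nil => 
        intro x hx y hy
        exact inner _ (Subtype.coe_prop _) x hx y hy
      | @cons a c b h p ih =>
        intro x hx y hy
        obtain ⟨u, hu, v, hv, huv⟩ := fa a.1 c.1 h
        refine (inner a.1 a.2 x hx u hu).trans (Reachable.trans ?_ (ih v hv y hy))
        apply SimpleGraph.Adj.reachable
        exact huv
    rw [SimpleGraph.connected_iff_exists_forall_reachable]
    refine ⟨⟨v0, w0, hw0, hv0⟩, ?_⟩
    rintro ⟨y, w, hw, hy⟩
    obtain ⟨p⟩ := (gc k).preconnected ⟨w0, hw0⟩ ⟨w, hw⟩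
    exact key _ _ p v0 hv0 y hy
  · intro a b hab
    rw [Set.disjoint_left]
    rintro v ⟨w, hw, hv⟩ ⟨w', hw', hv'⟩
    by_cases hww : w = w'
    · subst hww
      exact Set.disjoint_left.1 (gd hab) hw hw'
    · exact Set.disjoint_left.1 (fd hww) hv hv'
  · intro a b hab
    obtain ⟨w, hw, w', hw', hww⟩ := ga a b hab
    obtain ⟨u, hu, v, hv, huv⟩ := fa w w' hww
    exact ⟨u, ⟨w, hw, hu⟩, v, ⟨w', hw', hv⟩, huv⟩

lemma isMinor_card_le {V W : Type} [Fintype V] [Fintype W] {G : SimpleGraph V}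
    {H : SimpleGraph W} (h : IsMinor G H) : Fintype.card W ≤ Fintype.card V := by
  obtain ⟨f, fne, -, fd, -⟩ := h
  choose g hg using fne
  refine Fintype.card_le_of_injective g ?_
  intro a b hab
  by_contra hne
  exact Set.disjoint_left.1 (fd hne) (hg a) (hab ▸ hg b)

lemma isMinor_induce {V : Type} (G : SimpleGraph V) (s : Set V) : IsMinor G (G.induce s) :=
  isMinor_of_inj _ _ (fun x => x.1) Subtype.val_injective (fun _ _ h => h)

/-- Adding an apex. -/
lemma isMinor_apex {V : Type} (G : SimpleGraph V) (v : V) (t : ℕ)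
    (h : IsMinor (G.induce (G.neighborSet v)) (⊤ : SimpleGraph (Fin t))) :
    IsMinor G (⊤ : SimpleGraph (Fin (t+1))) := by
  obtain ⟨f, fne, fc, fd, fa⟩ := isMinor_trans (isMinor_of_inj (G.induce (G.neighborSet v))
    (G.induce (G.neighborSet v)) id Function.injective_id (fun _ _ h => h)) h
  -- images of the branch sets in `V`
  let g : Fin t → Set V := fun i => Subtype.val '' (f i)
  have gN : ∀ i, ∀ x ∈ g i, G.Adj v x := by
    rintro i x ⟨y, hy, rfl⟩
    exact y.2
  have gc : ∀ i, (G.induce (g i)).Connected := by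
    intro i
    rw [SimpleGraph.connected_iff_exists_forall_reachable]
    obtain ⟨x0, hx0⟩ := fne i
    refine ⟨⟨x0.1, x0, hx0, rfl⟩, ?_⟩
    rintro ⟨_, y, hy, rfl⟩
    have := (fc i).preconnected ⟨x0, hx0⟩ ⟨y, hy⟩
    let φ : ((G.induce (G.neighborSet v)).induce (f i)) →g (G.induce (g i)) :=
      { toFun := fun z => ⟨z.1.1, z.1, z.2, rfl⟩
        map_rel' := fun h => h }
    exact this.map φ
  refine ⟨Fin.cons {v} g, ?_, ?_, ?_, ?_⟩
  · intro w
    refine Fin.cases ?_ (fun i => ?_) w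
    · simp
    · simpa [g] using fne i
  · intro w
    refine Fin.cases ?_ (fun i => ?_) w
    · rw [SimpleGraph.connected_iff_exists_forall_reachable]
      refine ⟨⟨v, rfl⟩, ?_⟩
      rintro ⟨x, hx⟩
      have : x = v := hx
      subst this
      exact Reachable.refl _
    · exact gc i
  · have hd : ∀ i, Disjoint ({v} : Set V) (g i) := by
      intro i
      rw [Set.disjoint_singleton_left]
      intro hv
      exact G.loopless.irrefl _ (gN i v hv)
    intro a b
    refine Fin.cases ?_ (fun i => ?_) a <;> refine Fin.cases ?_ (fun j => ?_) b
    · simp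
    · intro _; exact hd j
    · intro _; exact (hd i).symm
    · intro hij
      have hij' : i ≠ j := fun h => hij (by rw [h])
      simp only [Fin.cons_succ, g]
      exact (Set.disjoint_image_iff Subtype.val_injective).2 (fd hij')
  · intro a b
    refine Fin.cases ?_ (fun i => ?_) a <;> refine Fin.cases ?_ (fun j => ?_) b
    · simp
    · intro _
      obtain ⟨x, hx⟩ := fne j
      exact ⟨v, rfl, x.1, ⟨x, hx, rfl⟩, x.2⟩
    · intro _
      obtain ⟨x, hx⟩ := fne i
      exact ⟨x.1, ⟨x, hx, rfl⟩, v, rfl, G.adj_symm x.2⟩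
    · intro hij
      have hij' : i ≠ j := fun h => hij.ne (by rw [h])
      obtain ⟨x, hx, y, hy, hxy⟩ := fa i j hij'
      exact ⟨x.1, ⟨x, hx, rfl⟩, y.1, ⟨y, hy, rfl⟩, hxy⟩

/-- Vertex deletion. -/
lemma minor_delete {W : Type} [Fintype W] (H : SimpleGraph W) (x : W) :
    ∃ (W' : Type) (_ : Fintype W') (H' : SimpleGraph W'), IsMinor H H' ∧
      Fintype.card W' + 1 = Fintype.card W ∧
      Nat.card H.edgeSet ≤ Nat.card H'.edgeSet + Nat.card (H.neighborSet x) := by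
  classical
  refine ⟨({x}ᶜ : Set W), inferInstance, H.induce {x}ᶜ, isMinor_induce _ _, ?_, ?_⟩
  · have := Fintype.card_compl_set ({x} : Set W)
    have h2 : 0 < Fintype.card W := Fintype.card_pos_iff.2 ⟨x⟩
    simp at this ⊢
    omega
  · have h1 := H.card_edgeFinset_induce_compl_singleton x
    rw [Nat.card_eq_fintype_card, Nat.card_eq_fintype_card, Nat.card_eq_fintype_card,
      SimpleGraph.card_neighborSet_eq_degree, ← SimpleGraph.edgeFinset_card,
      ← SimpleGraph.edgeFinset_card]
    have : (H.induce {x}ᶜ).edgeFinset.card = H.edgeFinset.card - H.degree x := by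
      rw [← H.card_edgeFinset_deleteIncidenceSet x]
      convert h1
    omega

/-- Edge contraction. -/
lemma minor_contract {W : Type} [Fintype W] (H : SimpleGraph W) (x y : W) (hxy : H.Adj x y) :
    ∃ (W' : Type) (_ : Fintype W') (H' : SimpleGraph W'), IsMinor H H' ∧
      Fintype.card W' + 1 = Fintype.card W ∧
      Nat.card H.edgeSet ≤ Nat.card H'.edgeSet + Nat.card (H.commonNeighbors x y) + 1 := by
  classical
  have hne : x ≠ y := hxy.ne
  let g : W → {w // w ≠ y} := fun w => if h : w = y then ⟨x, hne⟩ else ⟨w, h⟩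
  let H' : SimpleGraph {w // w ≠ y} :=
    { Adj := fun u v => u ≠ v ∧ ∃ a b, H.Adj a b ∧ g a = u ∧ g b = v
      symm := ⟨by
        rintro u v ⟨h, a, b, hab, ha, hb⟩
        exact ⟨h.symm, b, a, hab.symm, hb, ha⟩⟩
      loopless := ⟨fun u h => h.1 rfl⟩ }
  refine ⟨{w // w ≠ y}, inferInstance, H', ?_, ?_, ?_⟩
  · refine ⟨fun u => {w | g w = u}, ?_, ?_, ?_, ?_⟩
    · intro u
      exact ⟨u.1, by simp [g, u.2]⟩
    · intro u
      have hg : g u.1 = u := by simp [g, u.2]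
      rw [SimpleGraph.connected_iff_exists_forall_reachable]
      refine ⟨⟨u.1, hg⟩, ?_⟩
      rintro ⟨w, hw⟩
      by_cases hwy : w = y
      · subst hwy
        have : u = ⟨x, hne⟩ := by
          rw [← (show g w = u from hw)]; simp [g]
        subst this
        apply SimpleGraph.Adj.reachable
        exact hxy
      · have : w = u.1 := by
          rw [← (show g w = u from hw)]; simp [g, hwy]
        subst this
        exact Reachable.refl _
    · intro u v huv
      rw [Set.disjoint_left]
      intro w h1 h2
      exact huv (h1.symm.trans h2)
    · rintro u v ⟨-, a, b, hab, ha, hb⟩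
      exact ⟨a, ha, b, hb, hab⟩
  · have := Fintype.card_subtype_compl (fun w => w = y)
    have h2 : 0 < Fintype.card W := Fintype.card_pos_iff.2 ⟨x⟩
    simp at this ⊢
    omega
  · let C : Finset (Sym2 W) := (H.commonNeighbors x y).toFinset.image (fun z => s(y, z))
    have hC : C.card ≤ Fintype.card (H.commonNeighbors x y) := by
      refine Finset.card_image_le.trans ?_
      rw [Set.toFinset_card]
    let S : Finset (Sym2 W) := (H.edgeFinset \ C).erase s(x, y)
    have hS : H.edgeFinset.card ≤ S.card + C.card + 1 := by
      have h1 := Finset.le_card_sdiff C H.edgeFinset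
      have h2 := Finset.pred_card_le_card_erase (s := H.edgeFinset \ C) (a := s(x, y))
      simp only [S]
      omega
    have hSle : S.card ≤ H'.edgeFinset.card := by
      refine Finset.card_le_card_of_injOn (Sym2.map g) ?_ ?_
      · intro e he
        induction e with
        | _ a b =>
          simp only [S, C, Finset.coe_erase, Finset.coe_sdiff] at he
          obtain ⟨⟨h1, h2⟩, h3⟩ := he
          have hab : H.Adj a b := by simpa using h1
          have : H'.Adj (g a) (g b) := by
            refine ⟨?_, a, b, hab, rfl, rfl⟩
            have := hab.ne
            simp only [g]
            simp only [Set.mem_singleton_iff, Sym2.eq_iff, not_or, not_and] at h3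
            split_ifs <;> simp <;> grind
          simpa using this
      · intro e he e' he' hee
        induction e with
        | _ a b =>
        induction e' with
        | _ c d =>
          simp only [S, C, Finset.coe_erase, Finset.coe_sdiff] at he he'
          obtain ⟨⟨h1, h2⟩, h3⟩ := he
          obtain ⟨⟨h1', h2'⟩, h3'⟩ := he'
          have hab : H.Adj a b := by simpa using h1
          have hcd : H.Adj c d := by simpa using h1'
          have n1 := hab.ne
          have n2 := hcd.ne
          have k1 : ∀ z, H.Adj x z → H.Adj y z → s(a,b) ≠ s(y,z) := by
            intro z hz hz' h
            apply h2
            simp only [Finset.coe_image, Set.mem_image, Finset.mem_coe, Set.mem_toFinset]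
            exact ⟨z, ⟨hz, hz'⟩, h.symm⟩
          have k2 : ∀ z, H.Adj x z → H.Adj y z → s(c,d) ≠ s(y,z) := by
            intro z hz hz' h
            apply h2'
            simp only [Finset.coe_image, Set.mem_image, Finset.mem_coe, Set.mem_toFinset]
            exact ⟨z, ⟨hz, hz'⟩, h.symm⟩
          have hs1 := hab.symm
          have hs2 := hcd.symm
          simp only [Set.mem_singleton_iff] at h3 h3'
          simp only [Sym2.map_mk, Sym2.eq_iff, ne_eq, g] at *
          clear_value S C
          clear h1 h2 h1' h2' hS hC S C
          split_ifs at hee <;> simp only [Subtype.mk.injEq] at hee <;> grind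
    rw [Nat.card_eq_fintype_card, Nat.card_eq_fintype_card, Nat.card_eq_fintype_card,
       ← SimpleGraph.edgeFinset_card, ← SimpleGraph.edgeFinset_card]
    have e1 : Fintype.card (H.commonNeighbors x y) = Fintype.card ↑(H.commonNeighbors x y) := rfl
    omega

lemma exists_min_minor {V : Type} [Fintype V] (G : SimpleGraph V) (P : ℕ → ℕ → Prop)
    (h : P (Fintype.card V) (Nat.card G.edgeSet)) :
    ∃ (W : Type) (_ : Fintype W) (H : SimpleGraph W), IsMinor G H ∧
      P (Fintype.card W) (Nat.card H.edgeSet) ∧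
      (∀ x, ∃ e', Nat.card H.edgeSet ≤ e' + Nat.card (H.neighborSet x) ∧
        ¬ P (Fintype.card W - 1) e') ∧
      (∀ x y, H.Adj x y → ∃ e', Nat.card H.edgeSet ≤ e' + Nat.card (H.commonNeighbors x y) + 1 ∧
        ¬ P (Fintype.card W - 1) e') := by
  classical
  let R : ℕ → Prop := fun n => ∃ (W : Type) (_ : Fintype W) (H : SimpleGraph W), IsMinor G H ∧
    Fintype.card W = n ∧ P n (Nat.card H.edgeSet)
  have hR : ∃ n, R n := ⟨_, V, inferInstance, G,
    isMinor_of_inj _ _ id Function.injective_id (fun _ _ h => h), rfl, h⟩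
  obtain ⟨W, iW, H, hGH, hc, hP⟩ := Nat.find_spec hR
  have hmin : ∀ n, n < Fintype.card W → ¬ R n := fun n hn => Nat.find_min hR (hc ▸ hn)
  refine ⟨W, iW, H, hGH, hc ▸ hP, ?_, ?_⟩
  · intro x
    obtain ⟨W', iW', H', h1, h2, h3⟩ := minor_delete H x
    refine ⟨_, h3, fun hp => hmin (Fintype.card W - 1) (by omega) ?_⟩
    exact ⟨W', iW', H', isMinor_trans hGH h1, by omega, hp⟩
  · intro x y hxy
    obtain ⟨W', iW', H', h1, h2, h3⟩ := minor_contract H x y hxy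
    refine ⟨_, h3, fun hp => hmin (Fintype.card W - 1) (by omega) ?_⟩
    exact ⟨W', iW', H', isMinor_trans hGH h1, by omega, hp⟩

lemma two_edges {W : Type} [Fintype W] (H : SimpleGraph W) :
    ∑ v, Nat.card (H.neighborSet v) = 2 * Nat.card H.edgeSet := by
  classical
  have := H.sum_degrees_eq_twice_card_edges
  rw [Nat.card_eq_fintype_card, ← SimpleGraph.edgeFinset_card, ← this]
  refine Finset.sum_congr rfl fun v _ => ?_
  rw [Nat.card_eq_fintype_card, SimpleGraph.card_neighborSet_eq_degree]

lemma edges_le_sq {W : Type} [Fintype W] (H : SimpleGraph W) :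
    2 * Nat.card H.edgeSet ≤ Fintype.card W * Fintype.card W := by
  rw [← two_edges]
  calc ∑ v, Nat.card (H.neighborSet v) ≤ ∑ v : W, Fintype.card W := by
        refine Finset.sum_le_sum fun v _ => ?_
        rw [← Nat.card_eq_fintype_card]
        exact Nat.card_le_card_of_injective _ Subtype.val_injective
    _ = _ := by simp

lemma exists_low_degree {W : Type} [Fintype W] [Nonempty W] (H : SimpleGraph W) :
    ∃ v, Nat.card (H.neighborSet v) * Fintype.card W ≤ 2 * Nat.card H.edgeSet := by
  by_contra hcon
  push Not at hcon
  have h := two_edges H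
  have : ∑ v : W, 2 * Nat.card H.edgeSet < ∑ v, Nat.card (H.neighborSet v) * Fintype.card W :=
    Finset.sum_lt_sum_of_nonempty Finset.univ_nonempty (fun v _ => hcon v)
  rw [← Finset.sum_mul (f := fun v => Nat.card (H.neighborSet v)), h] at this
  simp only [Finset.sum_const, Finset.card_univ, smul_eq_mul] at this
  nlinarith

lemma card_nbr_induce {W : Type} [Fintype W] (H : SimpleGraph W) (v : W)
    (u : H.neighborSet v) :
    Nat.card ((H.induce (H.neighborSet v)).neighborSet u) = Nat.card (H.commonNeighbors v u) := by
  refine Nat.card_congr ?_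
  refine ⟨fun z => ⟨z.1.1, z.1.2, z.2⟩, fun z => ⟨⟨z.1, z.2.1⟩, z.2.2⟩, fun z => rfl, fun z => rfl⟩

/-- First reduction. -/
lemma stage_one {V : Type} [Fintype V] [Nonempty V] (G : SimpleGraph V) (k : ℝ) (hk : 0 < k)
    (h : k * Fintype.card V ≤ Nat.card G.edgeSet) :
    ∃ (κ : ℝ) (U : Type) (_ : Fintype U) (J : SimpleGraph U), k ≤ κ ∧ Nonempty U ∧
      IsMinor G J ∧ (Fintype.card U : ℝ) ≤ 2 * κ ∧
      (∀ u, κ < Nat.card (J.neighborSet u) + 1) ∧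
      ∀ t, IsMinor J (⊤ : SimpleGraph (Fin t)) → IsMinor G (⊤ : SimpleGraph (Fin (t + 1))) := by
  classical
  obtain ⟨W, iW, H, hGH, ⟨hn, hP⟩, hdel, hcon⟩ := exists_min_minor G
    (fun n e => 1 ≤ n ∧ k * (n : ℝ) ≤ e) ⟨Fintype.card_pos, h⟩
  have : Nonempty W := Fintype.card_pos_iff.1 hn
  obtain ⟨v, hv⟩ := exists_low_degree H
  set n := Fintype.card W with hndef
  set e := Nat.card H.edgeSet with hedef
  have hnR : (1 : ℝ) ≤ n := by exact_mod_cast hn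
  have he : (0 : ℝ) < e := lt_of_lt_of_le (by positivity) hP
  have hn2 : 2 ≤ n := by
    have hsq := edges_le_sq H
    have h0 : 0 < e := by exact_mod_cast he
    rw [← hndef, ← hedef] at hsq
    by_contra hlt
    have hn1 : n = 1 := by omega
    rw [hn1] at hsq
    omega
  have hcast : ((n - 1 : ℕ) : ℝ) = n - 1 := by push_cast [Nat.cast_sub hn]; ring
  have hκ : ∀ e' : ℕ, ∀ c : ℝ, (e : ℝ) ≤ e' + c → ¬ (1 ≤ n - 1 ∧ k * ((n - 1 : ℕ) : ℝ) ≤ e') →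
      (e : ℝ) / n < c := by
    intro e' c h1 h2
    have h3 : (e' : ℝ) < k * (n - 1) := by
      by_contra h4
      exact h2 ⟨by omega, by rw [hcast]; linarith⟩
    rw [div_lt_iff₀ (by linarith)]
    have h5 : (e : ℝ) - c < k * (n - 1) := by linarith
    nlinarith
  have hdeg : 0 < Nat.card (H.neighborSet v) := by
    obtain ⟨e', h1, h2⟩ := hdel v
    have := hκ e' (Nat.card (H.neighborSet v)) (by exact_mod_cast h1) h2
    have h3 : (0 : ℝ) < e / n := by positivity
    exact_mod_cast h3.trans this
  refine ⟨e / n, H.neighborSet v, inferInstance, H.induce (H.neighborSet v), ?_, ?_,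
    isMinor_trans hGH (isMinor_induce _ _), ?_, ?_, ?_⟩
  · rw [le_div_iff₀ (by linarith)]; exact hP
  · exact (Nat.card_pos_iff.1 hdeg).1
  · rw [Nat.card_eq_fintype_card] at hv
    rw [← mul_div_assoc, le_div_iff₀ (by linarith)]
    exact_mod_cast hv
  · intro u
    rw [card_nbr_induce]
    obtain ⟨e', h1, h2⟩ := hcon v u.1 u.2
    exact hκ e' _ (by rw [← add_assoc]; exact_mod_cast h1) h2
  · intro t ht
    exact isMinor_trans hGH (isMinor_apex H v t ht)

lemma mader (t : ℕ) : ∀ {V : Type} [Fintype V] [Nonempty V] (G : SimpleGraph V),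
    2 ^ t * Fintype.card V ≤ Nat.card G.edgeSet → IsMinor G (⊤ : SimpleGraph (Fin (t + 3))) := by
  induction t with
  | zero =>
    intro V _ _ G h
    obtain ⟨κ, U, iU, J, hκ, hU, -, -, hd, hap⟩ := stage_one G 1 one_pos (by
      have : ((2 ^ 0 * Fintype.card V : ℕ) : ℝ) ≤ Nat.card G.edgeSet := by exact_mod_cast h
      simpa using this)
    apply hap
    obtain ⟨u⟩ := hU
    have h1 : (0 : ℝ) < Nat.card (J.neighborSet u) := by linarith [hd u]
    have h2 : 0 < Nat.card (J.neighborSet u) := by exact_mod_cast h1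
    obtain ⟨w, hw⟩ := (Nat.card_pos_iff.1 h2).1
    have hw' : J.Adj u w := hw
    refine isMinor_of_inj _ _ ![u, w] ?_ ?_
    · intro a b; fin_cases a <;> fin_cases b <;> simp [hw'.ne, hw'.ne']
    · intro a b; fin_cases a <;> fin_cases b <;> simp [hw', hw'.symm]
  | succ t ih =>
    intro V _ _ G h
    obtain ⟨κ, U, iU, J, hκ, hU, -, -, hd, hap⟩ := stage_one G (2 ^ (t + 1)) (by positivity)
      (by exact_mod_cast h)
    apply hap
    apply ih
    have h1 : ∀ u, 2 ^ (t + 1) ≤ Nat.card (J.neighborSet u) := by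
      intro u
      have h2 : ((2 ^ (t + 1) : ℕ) : ℝ) < ((Nat.card (J.neighborSet u) + 1 : ℕ) : ℝ) := by
        push_cast
        exact lt_of_le_of_lt hκ (hd u)
      have := Nat.cast_lt.1 h2
      omega
    have h2 : ∑ u : U, 2 ^ (t + 1) ≤ ∑ u, Nat.card (J.neighborSet u) :=
      Finset.sum_le_sum fun u _ => h1 u
    rw [two_edges] at h2
    simp only [Finset.sum_const, Finset.card_univ, smul_eq_mul] at h2
    rw [pow_succ] at h2
    nlinarith

/-- Second reduction: a minor with minimum degree about three quarters of the order. -/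
lemma stage_two {V : Type} [Fintype V] [Nonempty V] (G : SimpleGraph V) (k : ℝ) (hk : 10 ≤ k)
    (h : k * Fintype.card V ≤ Nat.card G.edgeSet) :
    ∃ (M : ℝ) (U : Type) (_ : Fintype U) (J : SimpleGraph U), (k - 2) / 2 ≤ M ∧ Nonempty U ∧
      IsMinor G J ∧ (Fintype.card U : ℝ) ≤ M ∧
      (∀ u, 3 / 4 * M - 1 / 4 < Nat.card (J.neighborSet u) + 1) := by
  classical
  obtain ⟨κ, U, iU, J, hκ, hU, hGJ, hc, hd, -⟩ := stage_one G k (by linarith) h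
  have hx0 : (1 : ℝ) ≤ Fintype.card U := by exact_mod_cast Fintype.card_pos
  set x0 : ℝ := (Fintype.card U : ℝ) with hx0def
  set e0 : ℝ := (Nat.card J.edgeSet : ℝ) with he0def
  have he0 : x0 * (κ - 1) ≤ 2 * e0 := by
    have h2 : ∑ u : U, (κ - 1) ≤ ∑ u, (Nat.card (J.neighborSet u) : ℝ) :=
      Finset.sum_le_sum fun u _ => by linarith [hd u]
    rw [← Nat.cast_sum, two_edges] at h2
    simp only [Finset.sum_const, Finset.card_univ, nsmul_eq_mul] at h2
    push_cast at h2
    exact h2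
  set Q : ℝ := e0 ^ 2 / x0 ^ 3 with hQdef
  have hQ : (κ - 2) / 8 ≤ Q := by
    rw [hQdef, le_div_iff₀ (by positivity)]
    have h1 : 0 ≤ x0 * (κ - 1) := mul_nonneg (by linarith) (by linarith)
    have h2 : (x0 * (κ - 1)) ^ 2 ≤ (2 * e0) ^ 2 := pow_le_pow_left₀ h1 he0 2
    have h3 : (κ - 2) * x0 ≤ 2 * (κ - 1) ^ 2 := by
      have : (κ - 2) * x0 ≤ (κ - 2) * (2 * κ) := mul_le_mul_of_nonneg_left hc (by linarith)
      nlinarith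
    have h4 : x0 ^ 2 * ((κ - 2) * x0) ≤ x0 ^ 2 * (2 * (κ - 1) ^ 2) :=
      mul_le_mul_of_nonneg_left h3 (by positivity)
    nlinarith
  have hQpos : 0 < Q := by linarith
  obtain ⟨W, iW, H, hJH, ⟨hn, hP⟩, hdel, hcon⟩ := exists_min_minor J
    (fun n e => 1 ≤ n ∧ Q * (n : ℝ) ^ 3 ≤ (e : ℝ) ^ 2) ⟨Fintype.card_pos, by
      rw [hQdef, div_mul_cancel₀ _ (by positivity)]⟩
  have : Nonempty W := Fintype.card_pos_iff.1 hn
  obtain ⟨v, hv⟩ := exists_low_degree H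
  have hsq := edges_le_sq H
  set n := Fintype.card W with hndef
  set e := Nat.card H.edgeSet with hedef
  have hnR : (1 : ℝ) ≤ n := by exact_mod_cast hn
  have hsqR : 2 * (e : ℝ) ≤ n * n := by exact_mod_cast hsq
  have he2 : (0 : ℝ) < (e : ℝ) ^ 2 := lt_of_lt_of_le (by positivity) hP
  have he : (0 : ℝ) < e := lt_of_le_of_ne (by positivity) (by
    intro h0; rw [← h0] at he2; norm_num at he2)
  have hn2 : 2 ≤ n := by
    have h0 : 0 < e := by exact_mod_cast he
    by_contra hlt
    have : n = 1 := by omega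
    rw [this] at hsq
    omega
  have hnR2 : (2 : ℝ) ≤ n := by exact_mod_cast hn2
  have hcast : ((n - 1 : ℕ) : ℝ) = n - 1 := by push_cast [Nat.cast_sub hn]; ring
  set M : ℝ := 2 * e / n with hMdef
  have hMn : M * n = 2 * e := by rw [hMdef]; field_simp
  have hM4Q : 4 * Q ≤ M := by
    rw [hMdef, le_div_iff₀ (by linarith)]
    have h1 : Q * (n : ℝ) ^ 3 * 2 ≤ e * (n * n) := by nlinarith
    have h2 : 0 < (n : ℝ) ^ 2 := by positivity
    nlinarith
  have hκ' : ∀ e' : ℕ, ∀ c : ℝ, (e : ℝ) ≤ e' + c →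
      ¬ (1 ≤ n - 1 ∧ Q * ((n - 1 : ℕ) : ℝ) ^ 3 ≤ (e' : ℝ) ^ 2) →
      3 / 4 * M - 1 / 4 < c := by
    intro e' c h1 h2
    by_contra hcc
    push Not at hcc
    apply h2
    refine ⟨by omega, ?_⟩
    rw [hcast]
    have h3 : (e : ℝ) * ((n - 1) * (2 * n - 1)) ≤ e' * (2 * n ^ 2) := by
      have h4 : (e : ℝ) - (3 / 4 * M - 1 / 4) ≤ e' := by linarith
      have h5 : ((e : ℝ) - (3 / 4 * M - 1 / 4)) * (2 * n ^ 2) ≤ e' * (2 * n ^ 2) :=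
        mul_le_mul_of_nonneg_right h4 (by positivity)
      have h6 : M * n ^ 2 = 2 * e * n := by rw [sq, ← mul_assoc, hMn]
      nlinarith
    have h4 : 0 ≤ (e : ℝ) * ((n - 1) * (2 * n - 1)) :=
      mul_nonneg he.le (mul_nonneg (by linarith) (by linarith))
    have h5 := pow_le_pow_left₀ h4 h3 2
    have h6 : Q * ((n : ℝ) - 1) ^ 3 * (4 * n ^ 4) ≤ (e' : ℝ) ^ 2 * (4 * n ^ 4) := by
      have h7 : Q * (n : ℝ) ^ 3 * (((n : ℝ) - 1) ^ 3 * (4 * n)) ≤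
          (e : ℝ) ^ 2 * (((n : ℝ) - 1) ^ 3 * (4 * n)) :=
        mul_le_mul_of_nonneg_right hP
          (mul_nonneg (pow_nonneg (by linarith) 3) (by linarith))
      have h8 : (e : ℝ) ^ 2 * (((n : ℝ) - 1) ^ 3 * (4 * n)) ≤
          (e : ℝ) ^ 2 * (((n : ℝ) - 1) ^ 2 * (2 * n - 1) ^ 2) := by
        apply mul_le_mul_of_nonneg_left _ (by positivity)
        have : ((n : ℝ) - 1) ^ 3 * (4 * n) = ((n : ℝ) - 1) ^ 2 * ((n - 1) * (4 * n)) := by ring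
        rw [this]
        apply mul_le_mul_of_nonneg_left _ (by positivity)
        nlinarith
      calc Q * ((n : ℝ) - 1) ^ 3 * (4 * n ^ 4)
          = Q * (n : ℝ) ^ 3 * (((n : ℝ) - 1) ^ 3 * (4 * n)) := by ring
        _ ≤ (e : ℝ) ^ 2 * (((n : ℝ) - 1) ^ 2 * (2 * n - 1) ^ 2) := h7.trans h8
        _ = (e * ((n - 1) * (2 * n - 1))) ^ 2 := by ring
        _ ≤ (e' * (2 * n ^ 2)) ^ 2 := h5
        _ = _ := by ring
    exact le_of_mul_le_mul_right h6 (by positivity)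
  have hMlow : (k - 2) / 2 ≤ M := by linarith
  have hdeg : 0 < Nat.card (H.neighborSet v) := by
    obtain ⟨e', h1, h2⟩ := hdel v
    have := hκ' e' (Nat.card (H.neighborSet v)) (by exact_mod_cast h1) h2
    have h3 : (0 : ℝ) < 3 / 4 * M - 1 / 4 := by linarith
    exact_mod_cast h3.trans this
  refine ⟨M, H.neighborSet v, inferInstance, H.induce (H.neighborSet v), hMlow, ?_,
    isMinor_trans (isMinor_trans hGJ hJH) (isMinor_induce _ _), ?_, ?_⟩
  · exact (Nat.card_pos_iff.1 hdeg).1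
  · rw [Nat.card_eq_fintype_card] at hv
    rw [hMdef, le_div_iff₀ (by linarith)]
    exact_mod_cast hv
  · intro u
    rw [card_nbr_induce]
    obtain ⟨e', h1, h2⟩ := hcon v u.1 u.2
    exact hκ' e' _ (by rw [← add_assoc]; exact_mod_cast h1) h2

/-- `F σ` only depends on the values of `σ` on `J`. -/
def DepOn {V α : Type} (J : Finset V) (F : Equiv.Perm V → α) : Prop :=
  ∀ σ σ' : Equiv.Perm V, (∀ j ∈ J, σ j = σ' j) → F σ = F σ'

open Classical in
lemma swap_count {V : Type} [Fintype V] (J : Finset V) (i : V) (hi : i ∉ J)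
    (E : Equiv.Perm V → Prop) (T : Equiv.Perm V → Finset V) (hE : DepOn J E) (hT : DepOn J T)
    (c : ℕ) (hc : ∀ σ, E σ → (T σ).card ≤ c) :
    (Finset.univ.filter (fun σ : Equiv.Perm V => E σ ∧ σ i ∈ T σ)).card *
      (Fintype.card V - J.card) ≤ c * (Finset.univ.filter (fun σ : Equiv.Perm V => E σ)).card := by
  have heq : ∀ l ∈ Jᶜ, (Finset.univ.filter (fun σ : Equiv.Perm V => E σ ∧ σ l ∈ T σ)).card =
      (Finset.univ.filter (fun σ : Equiv.Perm V => E σ ∧ σ i ∈ T σ)).card := by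
    intro l hl
    have hl' : l ∉ J := by simpa using hl
    have key : ∀ σ : Equiv.Perm V, ∀ j ∈ J, (σ * Equiv.swap i l) j = σ j := by
      intro σ j hj
      have h1 : j ≠ i := fun h => hi (h ▸ hj)
      have h2 : j ≠ l := fun h => hl' (h ▸ hj)
      simp [Equiv.swap_apply_of_ne_of_ne h1 h2]
    refine Finset.card_nbij' (fun σ => σ * Equiv.swap i l) (fun σ => σ * Equiv.swap i l) ?_ ?_ ?_ ?_
    · intro σ hσ
      simp only [Finset.coe_filter, Finset.mem_univ, true_and, Set.mem_ofPred_eq] at hσ ⊢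
      rw [hE _ _ (key σ), hT _ _ (key σ)]
      simpa using hσ
    · intro σ hσ
      simp only [Finset.coe_filter, Finset.mem_univ, true_and, Set.mem_ofPred_eq] at hσ ⊢
      rw [hE _ _ (key σ), hT _ _ (key σ)]
      simpa using hσ
    · intro σ _
      simp [mul_assoc]
    · intro σ _
      simp [mul_assoc]
  have h1 : (Finset.univ.filter (fun σ : Equiv.Perm V => E σ ∧ σ i ∈ T σ)).card *
      (Fintype.card V - J.card) =
      ∑ l ∈ Jᶜ, (Finset.univ.filter (fun σ : Equiv.Perm V => E σ ∧ σ l ∈ T σ)).card := by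
    rw [Finset.sum_congr rfl heq, Finset.sum_const, Finset.card_compl, smul_eq_mul, mul_comm]
  rw [h1]
  have h2 : ∀ l, (Finset.univ.filter (fun σ : Equiv.Perm V => E σ ∧ σ l ∈ T σ)).card =
      ∑ σ ∈ Finset.univ.filter (fun σ : Equiv.Perm V => E σ), if σ l ∈ T σ then 1 else 0 := by
    intro l
    rw [← Finset.filter_filter, Finset.card_filter]
  simp_rw [h2]
  rw [Finset.sum_comm]
  calc _ ≤ ∑ σ ∈ Finset.univ.filter (fun σ : Equiv.Perm V => E σ), c := by
        refine Finset.sum_le_sum fun σ hσ => ?_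
        rw [← Finset.card_filter]
        refine le_trans ?_ (hc σ (by simpa using hσ))
        refine Finset.card_le_card_of_injOn σ ?_ σ.injective.injOn
        intro l hl
        simp only [Finset.coe_filter, Set.mem_ofPred_eq] at hl
        exact hl.2
    _ = _ := by rw [Finset.sum_const, smul_eq_mul, mul_comm]

open Classical in
lemma iter_count {V : Type} [Fintype V] (J : Finset V)
    (E : Equiv.Perm V → Prop) (T : V → Equiv.Perm V → Finset V) (hE : DepOn J E)
    (hT : ∀ i, DepOn J (T i)) (c D : ℕ) (hc : ∀ i σ, E σ → (T i σ).card ≤ c) (I : Finset V)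
    (hIJ : Disjoint I J) (hD : J.card + I.card + D ≤ Fintype.card V + 1) :
    (Finset.univ.filter (fun σ : Equiv.Perm V => E σ ∧ ∀ i ∈ I, σ i ∈ T i σ)).card *
      D ^ I.card ≤ c ^ I.card * (Finset.univ.filter (fun σ : Equiv.Perm V => E σ)).card := by
  induction I using Finset.induction_on with
  | empty => simp
  | @insert x I hx ih =>
    rw [Finset.disjoint_insert_left] at hIJ
    rw [Finset.card_insert_of_notMem hx] at hD ⊢
    have ih' := ih hIJ.2 (by omega)
    have hdis : (J ∪ I).card = J.card + I.card := Finset.card_union_of_disjoint hIJ.2.symm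
    have h1 := swap_count (J ∪ I) x (by simp [hx, hIJ.1])
      (fun σ => E σ ∧ ∀ i ∈ I, σ i ∈ T i σ) (T x) (by
        intro σ σ' h
        have hJ : ∀ j ∈ J, σ j = σ' j := fun j hj => h j (Finset.mem_union_left _ hj)
        have hI : ∀ j ∈ I, σ j = σ' j := fun j hj => h j (Finset.mem_union_right _ hj)
        have e1 := hE σ σ' hJ
        simp only [e1]
        refine propext (and_congr_right fun _ => ?_)
        refine forall₂_congr fun j hj => ?_
        rw [hI j hj, hT j σ σ' hJ])
      (by
        intro σ σ' h
        exact hT x σ σ' fun j hj => h j (Finset.mem_union_left _ hj)) c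
      (fun σ hσ => hc x σ hσ.1)
    have h2 : (Finset.univ.filter (fun σ : Equiv.Perm V => E σ ∧ ∀ i ∈ insert x I, σ i ∈ T i σ)) =
      (Finset.univ.filter (fun σ : Equiv.Perm V => (E σ ∧ ∀ i ∈ I, σ i ∈ T i σ) ∧ σ x ∈ T x σ)) := by
      ext σ
      simp only [Finset.mem_filter, Finset.mem_univ, true_and, Finset.forall_mem_insert]
      tauto
    rw [h2, pow_succ, pow_succ]
    have h3 : D ≤ Fintype.card V - (J ∪ I).card := by omega
    set A := (Finset.univ.filter (fun σ : Equiv.Perm V =>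
      (E σ ∧ ∀ i ∈ I, σ i ∈ T i σ) ∧ σ x ∈ T x σ)).card
    set B := (Finset.univ.filter (fun σ : Equiv.Perm V => (E σ ∧ ∀ i ∈ I, σ i ∈ T i σ))).card
    calc A * (D ^ I.card * D) = (A * D) * D ^ I.card := by ring
      _ ≤ (A * (Fintype.card V - (J ∪ I).card)) * D ^ I.card := by gcongr
      _ ≤ (c * B) * D ^ I.card := by
        refine Nat.mul_le_mul_right _ ?_
        convert h1
      _ = c * (B * D ^ I.card) := by ring
      _ ≤ c * (c ^ I.card * _) := Nat.mul_le_mul_left _ ih'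
      _ = _ := by ring

open Classical in
/-- vertices with no neighbour in the block. -/
noncomputable def undom {V : Type} [Fintype V] (G : SimpleGraph V) (I : Finset V)
    (σ : Equiv.Perm V) : Finset V :=
  Finset.univ.filter (fun w => ∀ j ∈ I, ¬ G.Adj (σ j) w)

lemma undom_dep {V : Type} [Fintype V] (G : SimpleGraph V) (I : Finset V) :
    DepOn I (undom G I) := by
  intro σ σ' h
  unfold undom
  ext w
  simp only [Finset.mem_filter, Finset.mem_univ, true_and]
  refine forall₂_congr fun j hj => ?_
  rw [h j hj]

def blockSet {V : Type} (I : Finset V) (σ : Equiv.Perm V) : Set V := {x | ∃ j ∈ I, σ j = x}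

open Classical in
/-- Probability that a block is disconnected. -/
lemma count_disc {V : Type} [Fintype V] (G : SimpleGraph V) (I : Finset V) (s0 : V) (hs : s0 ∈ I)
    (a1 D : ℕ)
    (ha : ∀ v, (Finset.univ.filter (fun w => w ≠ v ∧ ¬ G.Adj v w)).card ≤ a1)
    (hD : I.card + D ≤ Fintype.card V + 1) :
    (Finset.univ.filter (fun σ : Equiv.Perm V => ¬ (G.induce (blockSet I σ)).Connected)).card *
      D ^ (I.card - 1) ≤ (2 ^ (I.card - 1) - 1) * (a1 ^ (I.card - 1) *
        Fintype.card (Equiv.Perm V)) := by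
  let nn : V → Finset V := fun v => Finset.univ.filter (fun w => w ≠ v ∧ ¬ G.Adj v w)
  -- the event for a cut
  let Ev : Finset V → Finset (Equiv.Perm V) := fun S => Finset.univ.filter (fun σ =>
    ∀ x ∈ insert s0 S, ∀ y ∈ I \ insert s0 S, ¬ G.Adj (σ x) (σ y))
  have hsub : (Finset.univ.filter (fun σ : Equiv.Perm V =>
      ¬ (G.induce (blockSet I σ)).Connected)) ⊆ (I.erase s0).ssubsets.biUnion Ev := by
    intro σ hσ
    simp only [Finset.mem_filter, Finset.mem_univ, true_and] at hσ
    have hx0 : σ s0 ∈ blockSet I σ := ⟨s0, hs, rfl⟩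
    let S : Finset V := (I.erase s0).filter (fun j => ∃ hj : σ j ∈ blockSet I σ,
      (G.induce (blockSet I σ)).Reachable ⟨σ s0, hx0⟩ ⟨σ j, hj⟩)
    have hSmem : ∀ j ∈ I, (j ∈ insert s0 S ↔ ∃ hj : σ j ∈ blockSet I σ,
      (G.induce (blockSet I σ)).Reachable ⟨σ s0, hx0⟩ ⟨σ j, hj⟩) := by
      intro j hj
      simp only [S, Finset.mem_insert, Finset.mem_filter, Finset.mem_erase]
      constructor
      · rintro (rfl | h)
        · exact ⟨hx0, Reachable.refl _⟩
        · exact h.2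
      · intro h
        by_cases hjs : j = s0
        · exact Or.inl hjs
        · exact Or.inr ⟨⟨hjs, hj⟩, h⟩
    rw [Finset.mem_biUnion]
    refine ⟨S, ?_, ?_⟩
    · rw [Finset.mem_ssubsets]
      refine Finset.ssubset_iff_subset_ne.2 ⟨Finset.filter_subset _ _, fun heq => hσ ?_⟩
      rw [SimpleGraph.connected_iff_exists_forall_reachable]
      refine ⟨⟨σ s0, hx0⟩, ?_⟩
      rintro ⟨_, j, hj, rfl⟩
      have : j ∈ insert s0 S := by
        rw [heq, Finset.insert_erase hs]; exact hj
      exact ((hSmem j hj).1 this).2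
    · simp only [Ev, Finset.mem_filter, Finset.mem_univ, true_and]
      intro x hx y hy hadj
      rw [Finset.mem_sdiff] at hy
      have hxI : x ∈ I := by
        rw [Finset.mem_insert] at hx
        rcases hx with rfl | hx
        · exact hs
        · exact Finset.mem_of_mem_erase (Finset.mem_of_mem_filter _ hx)
      obtain ⟨hj, hr⟩ := (hSmem x hxI).1 hx
      apply hy.2
      rw [hSmem y hy.1]
      refine ⟨⟨y, hy.1, rfl⟩, hr.trans ?_⟩
      apply SimpleGraph.Adj.reachable
      exact hadj
  have hEv : ∀ S ∈ (I.erase s0).ssubsets, (Ev S).card * D ^ (I.card - 1) ≤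
      a1 ^ (I.card - 1) * Fintype.card (Equiv.Perm V) := by
    intro S hS
    rw [Finset.mem_ssubsets] at hS
    obtain ⟨t0, ht0, ht0S⟩ := Finset.exists_of_ssubset hS
    obtain ⟨ht0s, ht0I⟩ := Finset.mem_erase.1 ht0
    let E : Equiv.Perm V → Prop := fun σ => True ∧ ∀ i ∈ ({t0} : Finset V), σ i ∈ nn (σ s0)
    have h1 := iter_count {s0} (fun _ => True) (fun _ σ => nn (σ s0)) (fun _ _ _ => rfl)
      (fun i σ σ' h => by simp only [h s0 (by simp)]) a1 D (fun i σ _ => ha (σ s0)) {t0}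
      (by simpa using ht0s) (by
        have : 2 ≤ I.card := by
          have := Finset.card_le_card (s := {s0, t0}) (t := I) (by
            intro z hz; simp at hz; rcases hz with rfl | rfl <;> assumption)
          rwa [Finset.card_pair ht0s.symm] at this
        simp; omega)
    let R : Finset V := (I.erase s0).erase t0
    have hRc : R.card + 2 = I.card := by
      have := Finset.card_erase_add_one ht0
      have := Finset.card_erase_add_one hs
      simp only [R]; omega
    have h2 := iter_count {s0, t0} E
      (fun i σ => if i ∈ S then nn (σ t0) else nn (σ s0)) (by
        intro σ σ' h
        simp only [E, Finset.mem_singleton, forall_eq, h s0 (by simp), h t0 (by simp)])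
      (fun i σ σ' h => by simp only [h s0 (by simp), h t0 (by simp)]) a1 D
      (fun i σ _ => by split_ifs <;> exact ha _) R
      (by
        rw [Finset.disjoint_left]
        intro z hz
        simp only [R, Finset.mem_erase] at hz
        simp [hz.1, hz.2.1])
      (by rw [Finset.card_pair ht0s.symm]; omega)
    have h3 : Ev S ⊆ Finset.univ.filter (fun σ : Equiv.Perm V => E σ ∧
        ∀ i ∈ R, σ i ∈ if i ∈ S then nn (σ t0) else nn (σ s0)) := by
      intro σ hσ
      simp only [Ev, Finset.mem_filter, Finset.mem_univ, true_and] at hσ ⊢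
      have ht0' : t0 ∈ I \ insert s0 S := by simp [ht0I, ht0s, ht0S]
      refine ⟨⟨trivial, ?_⟩, ?_⟩
      · intro i hi
        rw [Finset.mem_singleton] at hi
        subst hi
        simp only [nn, Finset.mem_filter, Finset.mem_univ, true_and]
        exact ⟨fun h => ht0s (σ.injective h), hσ s0 (by simp) i ht0'⟩
      · intro i hi
        simp only [R, Finset.mem_erase] at hi
        split_ifs with hiS
        · simp only [nn, Finset.mem_filter, Finset.mem_univ, true_and]
          exact ⟨fun h => hi.1 (σ.injective h),
            fun h => hσ i (Finset.mem_insert_of_mem hiS) t0 ht0' h.symm⟩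
        · simp only [nn, Finset.mem_filter, Finset.mem_univ, true_and]
          exact ⟨fun h => hi.2.1 (σ.injective h),
            hσ s0 (by simp) i (by simp [hi.2.2, hi.2.1, hiS])⟩
    have h4 := Finset.card_le_card h3
    simp only [Finset.card_singleton, pow_one, Finset.filter_true, Finset.card_univ] at h1
    have hb : I.card - 1 = R.card + 1 := by omega
    rw [hb, pow_succ, pow_succ]
    set X := (Finset.univ.filter (fun σ : Equiv.Perm V => E σ ∧
        ∀ i ∈ R, σ i ∈ if i ∈ S then nn (σ t0) else nn (σ s0))).card
    set Y := (Finset.univ.filter (fun σ : Equiv.Perm V => E σ)).card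
    calc (Ev S).card * (D ^ R.card * D) ≤ X * (D ^ R.card * D) := by gcongr
      _ = (X * D ^ R.card) * D := by ring
      _ ≤ (a1 ^ R.card * Y) * D := by
        refine Nat.mul_le_mul_right _ ?_
        convert h2
      _ = a1 ^ R.card * (Y * D) := by ring
      _ ≤ a1 ^ R.card * (a1 * Fintype.card (Equiv.Perm V)) := by
        refine Nat.mul_le_mul_left _ ?_
        convert h1
      _ = _ := by ring
  calc _ ≤ ((I.erase s0).ssubsets.biUnion Ev).card * D ^ (I.card - 1) := by
        gcongr
    _ ≤ (∑ S ∈ (I.erase s0).ssubsets, (Ev S).card) * D ^ (I.card - 1) := by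
        gcongr
        exact Finset.card_biUnion_le
    _ = ∑ S ∈ (I.erase s0).ssubsets, (Ev S).card * D ^ (I.card - 1) := by
        rw [Finset.sum_mul]
    _ ≤ ∑ S ∈ (I.erase s0).ssubsets, a1 ^ (I.card - 1) * Fintype.card (Equiv.Perm V) :=
        Finset.sum_le_sum hEv
    _ = _ := by
        rw [Finset.sum_const, Finset.ssubsets,
          Finset.card_erase_of_mem (Finset.mem_powerset_self _), Finset.card_powerset,
          Finset.card_erase_of_mem hs, smul_eq_mul]

open Classical in
/-- Markov bound for the number of undominated vertices. -/
lemma count_undom {V : Type} [Fintype V] (G : SimpleGraph V) (I : Finset V)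
    (a D τ : ℕ)
    (ha : ∀ v, (Finset.univ.filter (fun w => ¬ G.Adj v w)).card ≤ a)
    (hD : I.card + D ≤ Fintype.card V + 1) :
    (Finset.univ.filter (fun σ : Equiv.Perm V => τ < (undom G I σ).card)).card * (τ + 1) *
      D ^ I.card ≤ Fintype.card V * (a ^ I.card * Fintype.card (Equiv.Perm V)) := by
  have h1 : ∀ w : V, (Finset.univ.filter (fun σ : Equiv.Perm V => w ∈ undom G I σ)).card *
      D ^ I.card ≤ a ^ I.card * Fintype.card (Equiv.Perm V) := by
    intro w
    have h := iter_count ∅ (fun _ => True)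
      (fun _ _ => Finset.univ.filter (fun x => ¬ G.Adj w x)) (fun _ _ _ => rfl)
      (fun i σ σ' h => rfl) a D (fun i σ _ => ha w) I (by simp) (by simpa using hD)
    simp only [Finset.filter_true, Finset.card_univ] at h
    refine le_trans (Nat.mul_le_mul_right _ (Finset.card_le_card ?_)) h
    intro σ hσ
    simp only [undom, Finset.mem_filter, Finset.mem_univ, true_and] at hσ ⊢
    exact fun i hi h => hσ i hi h.symm
  have h2 : (Finset.univ.filter (fun σ : Equiv.Perm V => τ < (undom G I σ).card)).card * (τ + 1) ≤
      ∑ w, (Finset.univ.filter (fun σ : Equiv.Perm V => w ∈ undom G I σ)).card := by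
    calc _ = ∑ σ ∈ Finset.univ.filter (fun σ : Equiv.Perm V => τ < (undom G I σ).card), (τ + 1) := by
          rw [Finset.sum_const, smul_eq_mul]
      _ ≤ ∑ σ ∈ Finset.univ.filter (fun σ : Equiv.Perm V => τ < (undom G I σ).card),
          (undom G I σ).card := by
          refine Finset.sum_le_sum fun σ hσ => ?_
          simpa using hσ
      _ ≤ ∑ σ, (undom G I σ).card :=
          Finset.sum_le_sum_of_subset (Finset.subset_univ _)
      _ = _ := by
          simp_rw [Finset.card_filter]
          rw [Finset.sum_comm]
          refine Finset.sum_congr rfl fun σ _ => ?_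
          simp
  calc _ ≤ (∑ w, (Finset.univ.filter (fun σ : Equiv.Perm V => w ∈ undom G I σ)).card) *
        D ^ I.card := by gcongr
    _ = ∑ w, (Finset.univ.filter (fun σ : Equiv.Perm V => w ∈ undom G I σ)).card *
        D ^ I.card := by rw [Finset.sum_mul]
    _ ≤ ∑ w : V, (a ^ I.card * Fintype.card (Equiv.Perm V)) :=
        Finset.sum_le_sum fun w _ => h1 w
    _ = _ := by simp

open Classical in
lemma count_pair {V : Type} [Fintype V] (G : SimpleGraph V) (I I' : Finset V)
    (hII : Disjoint I' I) (D τ : ℕ)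
    (hD : I.card + I'.card + D ≤ Fintype.card V + 1) :
    (Finset.univ.filter (fun σ : Equiv.Perm V => (undom G I σ).card ≤ τ ∧
      ∀ j ∈ I', σ j ∈ undom G I σ)).card *
      D ^ I'.card ≤ τ ^ I'.card * Fintype.card (Equiv.Perm V) := by
  have h := iter_count I (fun σ => (undom G I σ).card ≤ τ) (fun _ σ => undom G I σ)
    (fun σ σ' h => by simp only [undom_dep G I σ σ' h]) (fun _ => undom_dep G I) τ D
    (fun _ σ h => h) I' hII hD
  refine le_trans (le_of_eq ?_) (h.trans (Nat.mul_le_mul_left _ (Finset.card_le_univ _)))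
  congr!

open Classical in
/-- Extraction of a complete minor from a good permutation. -/
lemma extract_minor {V : Type} [Fintype V] (G : SimpleGraph V) (N r τ : ℕ)
    (I : Fin N → Finset V) (hne : ∀ i, (I i).Nonempty)
    (hdis : ∀ i j, i ≠ j → Disjoint (I i) (I j)) (σ : Equiv.Perm V)
    (h : r + (Finset.univ.filter (fun p : Fin N × Fin N => p.1 < p.2 ∧
        ((undom G (I p.1) σ).card ≤ τ ∧ ∀ j ∈ I p.2, σ j ∈ undom G (I p.1) σ))).card <
      (Finset.univ.filter (fun i : Fin N => (G.induce (blockSet (I i) σ)).Connected ∧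
        (undom G (I i) σ).card ≤ τ)).card) :
    IsMinor G (⊤ : SimpleGraph (Fin (r + 1))) := by
  set Bad := (Finset.univ.filter (fun p : Fin N × Fin N => p.1 < p.2 ∧
        ((undom G (I p.1) σ).card ≤ τ ∧ ∀ j ∈ I p.2, σ j ∈ undom G (I p.1) σ))) with hBad
  set Good := (Finset.univ.filter (fun i : Fin N => (G.induce (blockSet (I i) σ)).Connected ∧
        (undom G (I i) σ).card ≤ τ)) with hGood
  let K := Good \ Bad.image Prod.fst
  have hK : r + 1 ≤ K.card := by
    have h1 := Finset.le_card_sdiff (Bad.image Prod.fst) Good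
    have h2 : (Bad.image Prod.fst).card ≤ Bad.card := Finset.card_image_le
    simp only [K]
    omega
  let e := K.orderEmbOfCardLe hK
  have hmem : ∀ x, e x ∈ K := fun x => Finset.orderEmbOfCardLe_mem K hK x
  have hgood : ∀ x, (G.induce (blockSet (I (e x)) σ)).Connected ∧
        (undom G (I (e x)) σ).card ≤ τ := by
    intro x
    have := (Finset.mem_sdiff.1 (hmem x)).1
    simpa [hGood] using this
  have key : ∀ x y, x < y → ∃ u ∈ blockSet (I (e x)) σ, ∃ v ∈ blockSet (I (e y)) σ, G.Adj u v := by
    intro x y hxy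
    have hlt : e x < e y := e.strictMono hxy
    have hnb : (e x, e y) ∉ Bad := fun hb =>
      (Finset.mem_sdiff.1 (hmem x)).2 (Finset.mem_image.2 ⟨_, hb, rfl⟩)
    simp only [hBad, Finset.mem_filter, Finset.mem_univ, true_and, not_and, not_forall] at hnb
    obtain ⟨j, hj, hju⟩ := hnb hlt (hgood x).2
    simp only [undom, Finset.mem_filter, Finset.mem_univ, true_and, not_forall, not_not] at hju
    obtain ⟨i, hi, hadj⟩ := hju
    exact ⟨σ i, ⟨i, hi, rfl⟩, σ j, ⟨j, hj, rfl⟩, hadj⟩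
  refine ⟨fun x => blockSet (I (e x)) σ, ?_, fun x => (hgood x).1, ?_, ?_⟩
  · intro x
    obtain ⟨j, hj⟩ := hne (e x)
    exact ⟨σ j, j, hj, rfl⟩
  · intro x y hxy
    rw [Set.disjoint_left]
    rintro _ ⟨i, hi, rfl⟩ ⟨j, hj, hij⟩
    have : j = i := σ.injective hij
    subst this
    exact Finset.disjoint_left.1 (hdis _ _ (fun h => hxy (e.injective h))) hi hj
  · intro x y hxy
    rcases lt_or_gt_of_ne (show x ≠ y from hxy) with hl | hl
    · exact key x y hl
    · obtain ⟨u, hu, v, hv, huv⟩ := key y x hl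
      exact ⟨v, hv, u, hu, huv.symm⟩

lemma pairs_card (N : ℕ) :
    2 * (Finset.univ.filter (fun p : Fin N × Fin N => p.1 < p.2)).card ≤ N * N := by
  have h1 : (Finset.univ.filter (fun p : Fin N × Fin N => p.1 < p.2)).card =
      (Finset.univ.filter (fun p : Fin N × Fin N => p.2 < p.1)).card := by
    refine Finset.card_nbij' Prod.swap Prod.swap ?_ ?_ ?_ ?_ <;> intro p <;> simp
  have h2 : Disjoint (Finset.univ.filter (fun p : Fin N × Fin N => p.1 < p.2))
      (Finset.univ.filter (fun p : Fin N × Fin N => p.2 < p.1)) := by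
    rw [Finset.disjoint_left]
    intro p hp hq
    simp at hp hq
    exact absurd hp (not_lt.2 hq.le)
  have h3 := Finset.card_le_univ ((Finset.univ.filter (fun p : Fin N × Fin N => p.1 < p.2)) ∪
      (Finset.univ.filter (fun p : Fin N × Fin N => p.2 < p.1)))
  rw [Finset.card_union_of_disjoint h2] at h3
  simp at h3
  omega

lemma ratio_aux (A X P : ℕ) (C p : ℝ) (hX : 0 < X) (h : (A * X : ℝ) ≤ C * P)
    (hC : C ≤ p * X) : (A : ℝ) ≤ p * P := by
  have hX' : (0:ℝ) < X := by exact_mod_cast hX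
  have : (A * X : ℝ) ≤ (p * P) * X := by
    calc (A * X : ℝ) ≤ C * P := h
      _ ≤ (p * X) * P := by gcongr
      _ = _ := by ring
  exact le_of_mul_le_mul_right this hX'

open Classical in
/-- The probabilistic theorem. -/
lemma random_minor {V : Type} [Fintype V] (G : SimpleGraph V) (N b r τ a1 a D D2 : ℕ)
    (hb : 1 ≤ b) (hN : N * b ≤ Fintype.card V)
    (ha1 : ∀ v, (Finset.univ.filter (fun w => w ≠ v ∧ ¬ G.Adj v w)).card ≤ a1)
    (ha : ∀ v, (Finset.univ.filter (fun w => ¬ G.Adj v w)).card ≤ a)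
    (hD0 : 0 < D) (hD20 : 0 < D2)
    (hD : b + D ≤ Fintype.card V + 1) (hD2 : b + b + D2 ≤ Fintype.card V + 1)
    (p1 p2 p3 : ℝ) (hp3 : 0 ≤ p3)
    (h1 : (2 ^ (b - 1) - 1) * (a1 : ℝ) ^ (b - 1) ≤ p1 * (D : ℝ) ^ (b - 1))
    (h2 : Fintype.card V * (a : ℝ) ^ b ≤ p2 * ((τ + 1) * (D : ℝ) ^ b))
    (h3 : (τ : ℝ) ^ b ≤ p3 * (D2 : ℝ) ^ b)
    (hr : (r : ℝ) < N * (1 - p1 - p2) - N * N / 2 * p3) :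
    IsMinor G (⊤ : SimpleGraph (Fin (r + 1))) := by
  obtain ⟨ι⟩ : Nonempty (Fin N × Fin b ↪ V) := by
    apply Function.Embedding.nonempty_of_card_le
    simpa using hN
  let I : Fin N → Finset V := fun i => Finset.univ.map
    ⟨fun j : Fin b => ι (i, j), fun j j' h => by simpa using ι.injective h⟩
  have hIc : ∀ i, (I i).card = b := fun i => by simp [I]
  have hne : ∀ i, (I i).Nonempty := fun i => by
    rw [← Finset.card_pos, hIc]; omega
  have hdis : ∀ i j, i ≠ j → Disjoint (I i) (I j) := by
    intro i j hij
    rw [Finset.disjoint_left]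
    intro x hx hy
    simp only [I, Finset.mem_map, Finset.mem_univ, true_and, Function.Embedding.coeFn_mk] at hx hy
    obtain ⟨u, rfl⟩ := hx
    obtain ⟨v, hv⟩ := hy
    have := ι.injective hv
    simp at this
    exact hij this.1.symm
  set P := Fintype.card (Equiv.Perm V) with hP
  have hPpos : 0 < P := Fintype.card_pos
  let gd : Fin N → Equiv.Perm V → Prop := fun i σ =>
    (G.induce (blockSet (I i) σ)).Connected ∧ (undom G (I i) σ).card ≤ τ
  let bd : Fin N × Fin N → Equiv.Perm V → Prop := fun p σ =>
    (undom G (I p.1) σ).card ≤ τ ∧ ∀ j ∈ I p.2, σ j ∈ undom G (I p.1) σ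
  have c1 : ∀ i, ((Finset.univ.filter (fun σ : Equiv.Perm V =>
      ¬ (G.induce (blockSet (I i) σ)).Connected)).card : ℝ) ≤ p1 * P := by
    intro i
    obtain ⟨s0, hs0⟩ := hne i
    have h := count_disc G (I i) s0 hs0 a1 D ha1 (by rw [hIc]; exact hD)
    rw [hIc] at h
    refine ratio_aux _ (D ^ (b - 1)) P ((2 ^ (b - 1) - 1) * (a1 : ℝ) ^ (b - 1)) p1 (by positivity)
      ?_ (by push_cast; exact h1)
    have h' : (((Finset.univ.filter (fun σ : Equiv.Perm V =>
      ¬ (G.induce (blockSet (I i) σ)).Connected)).card * D ^ (b - 1) : ℕ) : ℝ) ≤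
      (((2 ^ (b - 1) - 1) * (a1 ^ (b - 1) * P) : ℕ) : ℝ) := by exact_mod_cast h
    rw [Nat.cast_mul, Nat.cast_mul, Nat.cast_mul, Nat.cast_sub Nat.one_le_two_pow] at h'
    push_cast at h' ⊢
    linarith
  have c2 : ∀ i, ((Finset.univ.filter (fun σ : Equiv.Perm V =>
      τ < (undom G (I i) σ).card)).card : ℝ) ≤ p2 * P := by
    intro i
    have h := count_undom G (I i) a D τ ha (by rw [hIc]; exact hD)
    rw [hIc] at h
    refine ratio_aux _ ((τ + 1) * D ^ b) P (Fintype.card V * (a : ℝ) ^ b) p2 (by positivity)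
      ?_ (by push_cast; exact h2)
    have h' : (((Finset.univ.filter (fun σ : Equiv.Perm V =>
      τ < (undom G (I i) σ).card)).card * (τ + 1) * D ^ b : ℕ) : ℝ) ≤
      ((Fintype.card V * (a ^ b * P) : ℕ) : ℝ) := by exact_mod_cast h
    push_cast at h' ⊢
    linarith
  have c3 : ∀ p : Fin N × Fin N, p.1 < p.2 → ((Finset.univ.filter (fun σ : Equiv.Perm V =>
      bd p σ)).card : ℝ) ≤ p3 * P := by
    intro p hp
    have h := count_pair G (I p.1) (I p.2) (hdis _ _ hp.ne') D2 τ (by rw [hIc, hIc]; exact hD2)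
    rw [hIc] at h
    refine ratio_aux _ (D2 ^ b) P ((τ : ℝ) ^ b) p3 (by positivity)
      ?_ (by push_cast; exact h3)
    have h' : (((Finset.univ.filter (fun σ : Equiv.Perm V =>
      bd p σ)).card * D2 ^ b : ℕ) : ℝ) ≤
      ((τ ^ b * P : ℕ) : ℝ) := by
      refine Nat.cast_le.2 (le_trans (le_of_eq ?_) h)
      simp only [bd]
    push_cast at h' ⊢
    linarith
  have c4 : ∀ i, (P : ℝ) * (1 - p1 - p2) ≤ ((Finset.univ.filter (fun σ : Equiv.Perm V =>
      gd i σ)).card : ℝ) := by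
    intro i
    have hsub : (Finset.univ : Finset (Equiv.Perm V)) ⊆ (Finset.univ.filter (fun σ => gd i σ)) ∪
      ((Finset.univ.filter (fun σ : Equiv.Perm V =>
        ¬ (G.induce (blockSet (I i) σ)).Connected)) ∪
       (Finset.univ.filter (fun σ : Equiv.Perm V => τ < (undom G (I i) σ).card))) := by
      intro σ _
      simp only [Finset.mem_union, Finset.mem_filter, Finset.mem_univ, true_and, gd]
      by_cases hx : (G.induce (blockSet (I i) σ)).Connected
      · rcases le_or_gt (undom G (I i) σ).card τ with hy | hy
        · exact Or.inl ⟨hx, hy⟩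
        · exact Or.inr (Or.inr hy)
      · exact Or.inr (Or.inl hx)
    have hc := (Finset.card_le_card hsub).trans ((Finset.card_union_le _ _).trans
      (Nat.add_le_add_left (Finset.card_union_le _ _) _))
    rw [Finset.card_univ] at hc
    have hc' : (P : ℝ) ≤ ((Finset.univ.filter (fun σ => gd i σ)).card : ℝ) +
      (((Finset.univ.filter (fun σ : Equiv.Perm V =>
        ¬ (G.induce (blockSet (I i) σ)).Connected)).card : ℝ) +
       ((Finset.univ.filter (fun σ : Equiv.Perm V => τ < (undom G (I i) σ).card)).card : ℝ)) := by
      exact_mod_cast hc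
    have := c1 i
    have := c2 i
    linarith
  by_contra hcon
  have hall : ∀ σ : Equiv.Perm V, (Finset.univ.filter (fun i => gd i σ)).card ≤
      r + (Finset.univ.filter (fun p : Fin N × Fin N => p.1 < p.2 ∧ bd p σ)).card := by
    intro σ
    by_contra hlt
    refine hcon (extract_minor G N r τ I hne hdis σ ?_)
    refine lt_of_le_of_lt (le_of_eq ?_) (lt_of_lt_of_le (not_le.1 hlt) (le_of_eq ?_))
    · simp only [bd]
    · simp only [gd]
  have hsum := Finset.sum_le_sum (s := Finset.univ) (fun σ _ => hall σ)
  have s1 : ∑ σ : Equiv.Perm V, (Finset.univ.filter (fun i => gd i σ)).card =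
      ∑ i, (Finset.univ.filter (fun σ : Equiv.Perm V => gd i σ)).card := by
    simp_rw [Finset.card_filter]
    exact Finset.sum_comm
  have s2 : ∑ σ : Equiv.Perm V, (Finset.univ.filter
      (fun p : Fin N × Fin N => p.1 < p.2 ∧ bd p σ)).card =
      ∑ p ∈ Finset.univ.filter (fun p : Fin N × Fin N => p.1 < p.2),
        (Finset.univ.filter (fun σ : Equiv.Perm V => bd p σ)).card := by
    simp_rw [← Finset.filter_filter, Finset.card_filter (fun p => bd p _),
      Finset.card_filter (fun σ => bd _ σ)]
    exact Finset.sum_comm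
  rw [Finset.sum_add_distrib, s1, s2, Finset.sum_const, Finset.card_univ, smul_eq_mul] at hsum
  have hsum' : (∑ i, ((Finset.univ.filter (fun σ : Equiv.Perm V => gd i σ)).card : ℝ)) ≤
      P * r + ∑ p ∈ Finset.univ.filter (fun p : Fin N × Fin N => p.1 < p.2),
        ((Finset.univ.filter (fun σ : Equiv.Perm V => bd p σ)).card : ℝ) := by
    exact_mod_cast hsum
  have t1 : (N : ℝ) * (P * (1 - p1 - p2)) ≤
      ∑ i, ((Finset.univ.filter (fun σ : Equiv.Perm V => gd i σ)).card : ℝ) := by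
    have := Finset.card_nsmul_le_sum (Finset.univ : Finset (Fin N))
      (fun i => ((Finset.univ.filter (fun σ : Equiv.Perm V => gd i σ)).card : ℝ))
      _ (fun i _ => c4 i)
    simpa using this
  have t2 : ∑ p ∈ Finset.univ.filter (fun p : Fin N × Fin N => p.1 < p.2),
        ((Finset.univ.filter (fun σ : Equiv.Perm V => bd p σ)).card : ℝ) ≤
      (N * N / 2) * (p3 * P) := by
    have := Finset.sum_le_card_nsmul (Finset.univ.filter (fun p : Fin N × Fin N => p.1 < p.2))
      (fun p => ((Finset.univ.filter (fun σ : Equiv.Perm V => bd p σ)).card : ℝ))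
      (p3 * P) (fun p hp => c3 p (by simpa using hp))
    refine this.trans ?_
    rw [nsmul_eq_mul]
    have hpc : (2 * ((Finset.univ.filter (fun p : Fin N × Fin N => p.1 < p.2)).card : ℝ)) ≤
      N * N := by exact_mod_cast pairs_card N
    have : ((Finset.univ.filter (fun p : Fin N × Fin N => p.1 < p.2)).card : ℝ) ≤ N * N / 2 := by
      linarith
    gcongr
  have hPr : (0 : ℝ) < P := by exact_mod_cast hPpos
  have := mul_lt_mul_of_pos_right hr hPr
  nlinarith

/-- Dense graphs with few vertices contain large complete minors. -/
lemma core_abs {U : Type} [Fintype U] [Nonempty U] (J : SimpleGraph U) (M : ℝ)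
    (hm : (Fintype.card U : ℝ) ≤ M)
    (hdeg : ∀ u, 3 / 4 * M - 1 / 4 < (Nat.card (J.neighborSet u) : ℝ) + 1)
    (b N r : ℕ) (hb : 1 ≤ b) (hNb : N * b ≤ Fintype.card U) (h2b : b + b ≤ Fintype.card U)
    (α₁ α lam β p₁ : ℝ) (h1 : 1 / 4 + α₁ * (b - 1) ≤ (α₁ - 1 / 4) * M) (h10 : 0 ≤ α₁)
    (h11 : α₁ ≤ 1)
    (h2 : 5 / 4 + α * (b - 1) ≤ (α - 1 / 4) * M) (h20 : 0 ≤ α) (h21 : α ≤ 1)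
    (hlam : 0 < lam) (hβ : lam * (Fintype.card U * α ^ b) ≤ β * (Fintype.card U - 2 * b + 1))
    (hβ0 : 0 ≤ β)
    (hp1 : (2 ^ (b - 1) - 1) * α₁ ^ (b - 1) ≤ p₁)
    (hr : (r : ℝ) < N * (1 - p₁ - 1 / lam) - N * N / 2 * β ^ b) :
    IsMinor J (⊤ : SimpleGraph (Fin (r + 1))) := by
  classical
  set m := Fintype.card U with hmdef
  obtain ⟨u0, hu0⟩ := Finite.exists_min (fun u => Nat.card (J.neighborSet u))
  set T := Nat.card (J.neighborSet u0) with hT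
  have hdd : ∀ u, Nat.card (J.neighborSet u) = J.degree u := fun u => by
    rw [Nat.card_eq_fintype_card, SimpleGraph.card_neighborSet_eq_degree]
  have hdlt : ∀ u, J.degree u < m := fun u => J.degree_lt_card_verts u
  have hTm : T + 1 ≤ m := by rw [hT, hdd]; exact hdlt u0
  have hT' := hdeg u0
  rw [← hT] at hT'
  have hfa : ∀ v, (Finset.univ.filter (fun w => ¬ J.Adj v w)).card = m - J.degree v := by
    intro v
    have : (Finset.univ.filter (fun w => ¬ J.Adj v w)) = (J.neighborFinset v)ᶜ := by
      ext w; simp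
    rw [this, Finset.card_compl, SimpleGraph.card_neighborFinset_eq_degree]
  have hfa1 : ∀ v, (Finset.univ.filter (fun w => w ≠ v ∧ ¬ J.Adj v w)).card + 1 =
      m - J.degree v := by
    intro v
    rw [← hfa v]
    have : (Finset.univ.filter (fun w => w ≠ v ∧ ¬ J.Adj v w)) =
      (Finset.univ.filter (fun w => ¬ J.Adj v w)).erase v := by
      ext w; simp
    rw [this]
    exact Finset.card_erase_add_one (by simp)
  have hTle : ∀ v, T ≤ J.degree v := fun v => by
    have := hu0 v
    simp only [hdd] at this
    exact this
  have hTm' : ((T : ℝ) + 1) ≤ m := by exact_mod_cast hTm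
  have hc1 : ((m - 1 - T : ℕ) : ℝ) = m - 1 - T := by
    rw [Nat.cast_sub (by omega), Nat.cast_sub (by omega)]; simp
  have hc2 : ((m - T : ℕ) : ℝ) = m - T := by
    rw [Nat.cast_sub (by omega)]
  have hcD : ((m - b + 1 : ℕ) : ℝ) = m - b + 1 := by
    rw [Nat.cast_add, Nat.cast_sub (by omega)]; simp
  have hcD2 : ((m - (b + b) + 1 : ℕ) : ℝ) = m - 2 * b + 1 := by
    rw [Nat.cast_add, Nat.cast_sub (by omega)]; push_cast; ring
  have hb1 : (1 : ℝ) ≤ b := by exact_mod_cast hb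
  have e1 : ((m - 1 - T : ℕ) : ℝ) ≤ α₁ * ((m - b + 1 : ℕ) : ℝ) := by
    rw [hc1, hcD]
    nlinarith [mul_le_mul_of_nonneg_left hm (sub_nonneg.2 h11)]
  have e2 : ((m - T : ℕ) : ℝ) ≤ α * ((m - b + 1 : ℕ) : ℝ) := by
    rw [hc2, hcD]
    nlinarith [mul_le_mul_of_nonneg_left hm (sub_nonneg.2 h21)]
  have hpow : (1:ℝ) ≤ 2 ^ (b - 1) := one_le_pow₀ (by norm_num)
  refine random_minor J N b r ⌊lam * (m * α ^ b)⌋₊ (m - 1 - T) (m - T) (m - b + 1)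
    (m - (b + b) + 1) hb hNb ?_ ?_ (by omega) (by omega) (by omega) (by omega) p₁ (1 / lam) (β ^ b)
    (by positivity) ?_ ?_ ?_ hr
  · intro v
    have := hfa1 v
    have := hTle v
    have h : (Finset.univ.filter (fun w => w ≠ v ∧ ¬ J.Adj v w)).card ≤ m - 1 - T := by omega
    convert h
  · intro v
    have := hfa v
    have := hTle v
    have h : (Finset.univ.filter (fun w => ¬ J.Adj v w)).card ≤ m - T := by omega
    convert h
  · calc _ ≤ (2 ^ (b - 1) - 1) * (α₁ * ((m - b + 1 : ℕ) : ℝ)) ^ (b - 1) := by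
          apply mul_le_mul_of_nonneg_left _ (by linarith)
          gcongr
      _ = ((2 ^ (b - 1) - 1) * α₁ ^ (b - 1)) * ((m - b + 1 : ℕ) : ℝ) ^ (b - 1) := by
          rw [mul_pow]; ring
      _ ≤ _ := by gcongr
  · have hfl := Nat.lt_floor_add_one (lam * (m * α ^ b))
    calc _ ≤ (m : ℝ) * (α * ((m - b + 1 : ℕ) : ℝ)) ^ b := by gcongr
      _ = (1 / lam) * ((lam * (m * α ^ b)) * ((m - b + 1 : ℕ) : ℝ) ^ b) := by
          rw [mul_pow]; field_simp
      _ ≤ _ := by gcongr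
  · rw [← mul_pow]
    gcongr
    rw [hcD2]
    exact (Nat.floor_le (by positivity)).trans hβ

lemma logb_lower (p q r : ℕ) (hq : 0 < q) (hr : 0 < r) (h : 2 ^ p ≤ r ^ q) :
    (p : ℝ) / q ≤ Real.logb 2 r := by
  have hq' : (0:ℝ) < q := by exact_mod_cast hq
  have hr' : (0:ℝ) < r := by exact_mod_cast hr
  rw [div_le_iff₀ hq', mul_comm, ← Real.logb_pow, Real.le_logb_iff_rpow_le (by norm_num)
    (by positivity), Real.rpow_natCast]
  exact_mod_cast h

lemma core_small {W : Type} [Fintype W] [Nonempty W] (H : SimpleGraph W) (r : ℕ) (h1 : 1 ≤ r)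
    (h9 : r ≤ 9)
    (h : 8 * (r : ℝ) * Real.sqrt (Real.logb 2 r) * Fintype.card W < Nat.card H.edgeSet) :
    IsMinor H (⊤ : SimpleGraph (Fin (r + 1))) := by
  classical
  rcases Nat.lt_or_ge r 2 with hr | hr
  · obtain rfl : r = 1 := by omega
    simp at h
    obtain ⟨x, y, hxy⟩ : ∃ x y, H.Adj x y := by
      obtain ⟨e, he⟩ := h
      simp only [Finset.mem_filter, Finset.mem_univ, true_and] at he
      induction e using Sym2.ind with
      | _ x y => exact ⟨x, y, he⟩
    refine isMinor_of_inj _ _ (fun i : Fin 2 => if i = 0 then x else y) ?_ ?_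
    · intro i j hij
      fin_cases i <;> fin_cases j <;> simp_all [hxy.ne, hxy.ne.symm]
    · intro i j hij
      fin_cases i <;> fin_cases j <;> simp_all [hxy.symm]
  · obtain ⟨t, rfl⟩ : ∃ t, r = t + 2 := ⟨r - 2, by omega⟩
    have hs : (2:ℝ) ^ t ≤ 8 * ((t + 2 : ℕ) : ℝ) * Real.sqrt (Real.logb 2 ((t + 2 : ℕ) : ℝ)) := by
      rcases Nat.lt_or_ge t 7 with ht | ht
      · have : (1:ℝ) ≤ Real.sqrt (Real.logb 2 ((t + 2 : ℕ) : ℝ)) := by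
          rw [Real.one_le_sqrt]
          have := logb_lower 1 1 (t + 2) (by norm_num) (by omega) (by rw [pow_one, pow_one]; omega)
          simpa using this
        calc (2:ℝ) ^ t ≤ 8 * ((t + 2 : ℕ) : ℝ) * 1 := by
              interval_cases t <;> norm_num
          _ ≤ _ := by gcongr
      · obtain rfl : t = 7 := by omega
        have : (16 / 9:ℝ) ≤ Real.sqrt (Real.logb 2 ((7 + 2 : ℕ) : ℝ)) := by
          apply Real.le_sqrt_of_sq_le
          have := logb_lower 256 81 (7 + 2) (by norm_num) (by omega) (by norm_num)
          refine le_trans ?_ this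
          norm_num
        calc (2:ℝ) ^ 7 ≤ 8 * ((7 + 2 : ℕ) : ℝ) * (16 / 9) := by norm_num
          _ ≤ _ := by gcongr
    apply mader t H
    have : ((2 ^ t * Fintype.card W : ℕ) : ℝ) ≤ Nat.card H.edgeSet := by
      push_cast
      refine le_trans ?_ h.le
      gcongr
    exact_mod_cast this

lemma core_mid {U : Type} [Fintype U] [Nonempty U] (J : SimpleGraph U) (M : ℝ)
    (hm : (Fintype.card U : ℝ) ≤ M)
    (hdeg : ∀ u, 3 / 4 * M - 1 / 4 < (Nat.card (J.neighborSet u) : ℝ) + 1)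
    (r : ℕ) (h10 : 10 ≤ r) (h16 : r ≤ 16) (hM : 4 * r * 1.822 - 1 ≤ M)
    (hmm : 3 / 4 * M - 1 / 4 < Fintype.card U) :
    IsMinor J (⊤ : SimpleGraph (Fin (r + 1))) := by
  have hr10 : (10:ℝ) ≤ r := by exact_mod_cast h10
  have key : ∀ N : ℕ, ((3 * N : ℕ) : ℝ) ≤ 5.466 * r - 1 →
      (r : ℝ) < N * (1 - 0.2044 - 1 / 6) - N * N / 2 * 0.1384 ^ 3 →
      IsMinor J (⊤ : SimpleGraph (Fin (r + 1))) := by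
    intro N hN hr
    have hNm : ((N * 3 : ℕ) : ℝ) ≤ Fintype.card U := by
      rw [mul_comm]; linarith
    have h6 : ((3 + 3 : ℕ) : ℝ) ≤ Fintype.card U := by
      push_cast; linarith
    refine core_abs J M hm hdeg 3 N r (by norm_num) (by exact_mod_cast hNm) (by exact_mod_cast h6)
      0.261 0.2755 6 0.1384 0.2044 ?_ (by norm_num) (by norm_num) ?_ (by norm_num) (by norm_num)
      (by norm_num) ?_ (by norm_num) (by norm_num) hr
    · push_cast; linarith
    · push_cast; linarith
    · push_cast; linarith
  interval_cases r
  · exact key 17 (by norm_num) (by norm_num)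
  · exact key 19 (by norm_num) (by norm_num)
  · exact key 21 (by norm_num) (by norm_num)
  · exact key 23 (by norm_num) (by norm_num)
  · exact key 25 (by norm_num) (by norm_num)
  · exact key 26 (by norm_num) (by norm_num)
  · exact key 28 (by norm_num) (by norm_num)

lemma core_large {U : Type} [Fintype U] [Nonempty U] (J : SimpleGraph U) (M : ℝ)
    (hm : (Fintype.card U : ℝ) ≤ M)
    (hdeg : ∀ u, 3 / 4 * M - 1 / 4 < (Nat.card (J.neighborSet u) : ℝ) + 1)
    (r c : ℕ) (h17 : 17 ≤ r) (hc : 2 ≤ c) (hrc : r ≤ 2 ^ ((c + 1) ^ 2))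
    (hM : 4 * r * (c : ℝ) - 1 ≤ M)
    (hmm : 3 / 4 * M - 1 / 4 < Fintype.card U) :
    IsMinor J (⊤ : SimpleGraph (Fin (r + 1))) := by
  have hr17 : (17:ℝ) ≤ r := by exact_mod_cast h17
  have hc2 : (2:ℝ) ≤ c := by exact_mod_cast hc
  have hrc17 : (17:ℝ) * c ≤ r * c := by gcongr
  have hrc2 : (r:ℝ) * 2 ≤ r * c := by gcongr
  obtain ⟨N, hN1, hN2⟩ : ∃ N : ℕ, 2 * N + 3 ≥ 3 * r ∧ 2 * N + 2 ≤ 3 * r :=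
    ⟨3 * r / 2 - 1, by omega, by omega⟩
  have hN1' : (3:ℝ) * r ≤ 2 * N + 3 := by exact_mod_cast hN1
  have hN2' : (2:ℝ) * N + 2 ≤ 3 * r := by exact_mod_cast hN2
  have hNm : ((N * (c + 2) : ℕ) : ℝ) ≤ Fintype.card U := by
    push_cast
    have : (2 * N : ℝ) * (c + 2) ≤ (3 * r - 2) * (c + 2) := by gcongr; linarith
    nlinarith
  have h6 : ((c + 2 + (c + 2) : ℕ) : ℝ) ≤ Fintype.card U := by
    push_cast; linarith
  have hβ : (r : ℝ) * (8.8 * 0.27 ^ (c + 2)) ^ (c + 2) ≤ 0.01 := by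
    have e : ((2:ℝ) ^ ((c + 1) ^ 2)) = 2 * (2 ^ c) ^ (c + 2) := by
      rw [← pow_mul, ← pow_succ']; ring_nf
    have hr' : (r : ℝ) ≤ 2 ^ ((c + 1) ^ 2) := by exact_mod_cast hrc
    have h54 : (0.54:ℝ) ^ (c + 2) ≤ 0.54 ^ 4 :=
      pow_le_pow_of_le_one (by norm_num) (by norm_num) (by omega)
    calc (r : ℝ) * (8.8 * 0.27 ^ (c + 2)) ^ (c + 2)
        ≤ 2 ^ ((c + 1) ^ 2) * (8.8 * 0.27 ^ (c + 2)) ^ (c + 2) := by gcongr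
      _ = 2 * (2.2 * 0.54 ^ (c + 2)) ^ (c + 2) := by
          rw [e, mul_assoc, ← mul_pow]
          congr 2
          rw [show (0.54:ℝ) = 2 * 0.27 by norm_num, mul_pow, pow_add 2 c 2]
          ring
      _ ≤ 2 * (0.2) ^ (c + 2) := by
          gcongr
          refine le_trans (mul_le_mul_of_nonneg_left h54 (by norm_num)) (by norm_num)
      _ ≤ 2 * (0.2) ^ 4 := by
          have : (0.2:ℝ) ^ (c + 2) ≤ 0.2 ^ 4 :=
            pow_le_pow_of_le_one (by norm_num) (by norm_num) (by omega)
          gcongr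
      _ ≤ 0.01 := by norm_num
  refine core_abs J M hm hdeg (c + 2) N r (by omega) (by exact_mod_cast hNm) (by exact_mod_cast h6)
      0.26 0.27 8 (8.8 * 0.27 ^ (c + 2)) 0.1407 ?_ (by norm_num) (by norm_num) ?_ (by norm_num)
      (by norm_num) (by norm_num) ?_ (by positivity) ?_ ?_
  · push_cast; linarith
  · push_cast; linarith
  · have hp : (0:ℝ) < 0.27 ^ (c + 2) := by positivity
    push_cast
    have : (8:ℝ) * Fintype.card U ≤ 8.8 * (Fintype.card U - 2 * (c + 2) + 1) := by linarith
    nlinarith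
  · rw [show c + 2 - 1 = c + 1 by omega]
    have h52 : (0.52:ℝ) ^ (c + 1) ≤ 0.52 ^ 3 :=
      pow_le_pow_of_le_one (by norm_num) (by norm_num) (by omega)
    calc _ ≤ (2:ℝ) ^ (c + 1) * 0.26 ^ (c + 1) := by gcongr; linarith
      _ = 0.52 ^ (c + 1) := by rw [← mul_pow]; norm_num
      _ ≤ _ := h52.trans (by norm_num)
  · set B := (8.8 * (0.27:ℝ) ^ (c + 2)) ^ (c + 2) with hB
    have hB0 : 0 ≤ B := by positivity
    have h1 : (N:ℝ) * B ≤ 0.015 := by nlinarith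
    have h2 : (N:ℝ) * N / 2 * B ≤ N * 0.0075 := by nlinarith [(Nat.cast_nonneg N : (0:ℝ) ≤ N)]
    linarith

/-- The core theorem. -/
lemma core_thm {W : Type} [Fintype W] [Nonempty W] (H : SimpleGraph W) (r : ℕ) (h1 : 1 ≤ r)
    (h : 8 * (r : ℝ) * Real.sqrt (Real.logb 2 r) * Fintype.card W < Nat.card H.edgeSet) :
    IsMinor H (⊤ : SimpleGraph (Fin (r + 1))) := by
  rcases Nat.lt_or_ge r 10 with h9 | h10
  · exact core_small H r h1 (by omega) h
  have hr10 : (10:ℝ) ≤ r := by exact_mod_cast h10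
  have hl10 : (3.32:ℝ) ≤ Real.logb 2 r := by
    have := logb_lower 83 25 r (by norm_num) (by omega)
      ((by norm_num : 2 ^ 83 ≤ 10 ^ 25).trans (Nat.pow_le_pow_left h10 25))
    refine le_trans (by norm_num) this
  have hs : (1.822:ℝ) ≤ Real.sqrt (Real.logb 2 r) := by
    apply Real.le_sqrt_of_sq_le
    linarith
  set s := Real.sqrt (Real.logb 2 r) with hsdef
  obtain ⟨M, U, _, J, hM, hU, hHJ, hm, hdeg⟩ := stage_two H (8 * r * s) (by nlinarith) h.le
  refine isMinor_trans hHJ ?_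
  have hmm : 3 / 4 * M - 1 / 4 < (Fintype.card U : ℝ) := by
    obtain ⟨u⟩ := hU
    classical
    have h1 := hdeg u
    have h2 : Nat.card (J.neighborSet u) + 1 ≤ Fintype.card U := by
      rw [Nat.card_eq_fintype_card, SimpleGraph.card_neighborSet_eq_degree]
      exact J.degree_lt_card_verts u
    have h3 : (Nat.card (J.neighborSet u) : ℝ) + 1 ≤ Fintype.card U := by exact_mod_cast h2
    linarith
  rcases Nat.lt_or_ge r 17 with h16 | h17
  · exact core_mid J M hm hdeg r h10 (by omega) (by nlinarith) hmm
  · have hl : 4 < Real.logb 2 r := by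
      rw [Real.lt_logb_iff_rpow_lt (by norm_num) (by linarith)]
      have : (17:ℝ) ≤ r := by exact_mod_cast h17
      norm_num
      linarith
    have hs2 : 2 < s := by
      apply Real.lt_sqrt_of_sq_lt
      linarith
    have hceil : 2 < ⌈s⌉₊ := Nat.lt_ceil.2 (by exact_mod_cast hs2)
    obtain ⟨c, hc⟩ : ∃ c, ⌈s⌉₊ = c + 1 := ⟨⌈s⌉₊ - 1, by omega⟩
    have hcs : (c : ℝ) < s := Nat.lt_ceil.1 (by omega)
    have hsc : s ≤ c + 1 := by
      have := Nat.le_ceil s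
      rw [hc] at this
      exact_mod_cast this
    refine core_large J M hm hdeg r c h17 (by omega) ?_ ?_ hmm
    · have hle : Real.logb 2 r ≤ ((c:ℝ) + 1) ^ 2 := by
        rw [← Real.sqrt_le_left (by positivity)]
        exact hsc
      rw [Real.logb_le_iff_le_rpow (by norm_num) (by linarith)] at hle
      have : ((c:ℝ) + 1) ^ 2 = (((c + 1) ^ 2 : ℕ) : ℝ) := by push_cast; ring
      rw [this, Real.rpow_natCast] at hle
      exact_mod_cast hle
    · nlinarith

/-- **Lemma** (Thomason). For every finite graph `G`,
`(r(G) - 1)/2 ≤ δ(G) ≤ 8·r(G)·√(log₂ r(G))`, where `r(G)` is the largest `r` such that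
`K_r` is a minor of `G` and `δ(G)` is the minor density of `G`. -/
theorem minorDensity_le_and_ge_completeMinorSize
    {V : Type} [Fintype V] [Nonempty V] (G : SimpleGraph V) :
    ((completeMinorSize G : ℝ) - 1) / 2 ≤ minorDensity G ∧
    minorDensity G ≤
      8 * (completeMinorSize G : ℝ) * Real.sqrt (Real.logb 2 (completeMinorSize G)) := by
  have hbdd : BddAbove {r : ℕ | IsMinor G (⊤ : SimpleGraph (Fin r))} :=
    ⟨Fintype.card V, fun r hr => by simpa using isMinor_card_le hr⟩
  have hone : IsMinor G (⊤ : SimpleGraph (Fin 1)) := by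
    obtain ⟨v⟩ := ‹Nonempty V›
    refine isMinor_of_inj _ _ (fun _ => v) (fun i j _ => Subsingleton.elim i j) ?_
    intro a b hab
    exact absurd (Subsingleton.elim a b) hab
  have hmem : IsMinor G (⊤ : SimpleGraph (Fin (completeMinorSize G))) :=
    Nat.sSup_mem (s := {r : ℕ | IsMinor G (⊤ : SimpleGraph (Fin r))}) ⟨1, hone⟩ hbdd
  have hge1 : 1 ≤ completeMinorSize G := le_csSup hbdd hone
  constructor
  · refine le_csSup ?_ ⟨Fin (completeMinorSize G), inferInstance, ⊤, hmem, ?_⟩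
    · refine ⟨Fintype.card V, ?_⟩
      rintro d ⟨W, _, H, hH, rfl⟩
      have h1 := isMinor_card_le hH
      have h2 := edges_le_sq H
      rw [Nat.card_eq_fintype_card (α := W)]
      have h1' : (Fintype.card W : ℝ) ≤ Fintype.card V := by exact_mod_cast h1
      have h2' : (2 * (Nat.card H.edgeSet : ℝ)) ≤ Fintype.card W * Fintype.card W := by
        exact_mod_cast h2
      apply div_le_of_le_mul₀ (by positivity) (by positivity)
      have : (0:ℝ) ≤ Nat.card H.edgeSet := by positivity
      have : (Fintype.card W * Fintype.card W : ℝ) ≤ Fintype.card V * Fintype.card W := by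
        gcongr
      linarith
    · have hr : (0:ℝ) < completeMinorSize G := by exact_mod_cast hge1
      have he : Nat.card (⊤ : SimpleGraph (Fin (completeMinorSize G))).edgeSet =
          (completeMinorSize G).choose 2 := by
        rw [Nat.card_eq_fintype_card, ← SimpleGraph.edgeFinset_card,
          SimpleGraph.card_edgeFinset_top_eq_card_choose_two, Fintype.card_fin]
      rw [he, Nat.cast_choose_two, Nat.card_fin]
      field_simp
  · refine csSup_le ⟨_, Fin 1, inferInstance, ⊤, hone, rfl⟩ ?_
    rintro d ⟨W, _, H, hH, rfl⟩
    by_contra hlt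
    rw [not_le] at hlt
    rcases isEmpty_or_nonempty W with hW | hW
    · simp at hlt
      have : (0:ℝ) ≤ 8 * (completeMinorSize G : ℝ) *
        Real.sqrt (Real.logb 2 (completeMinorSize G)) := by positivity
      linarith
    · have hpos : (0:ℝ) < Nat.card W := by exact_mod_cast Nat.card_pos
      rw [lt_div_iff₀ hpos, Nat.card_eq_fintype_card (α := W)] at hlt
      have h := isMinor_trans hH (core_thm H _ hge1 hlt)
      have : completeMinorSize G + 1 ≤ completeMinorSize G := le_csSup hbdd h
      omega
end

section
/- Any finite connected graph G with n vertices, diameter D, and treewidth at most k admits, for every collection of parts, a shortcut with congestion at most 8kD·⌈log₂ n⌉ and dilation at most 8k(2D+1); in particular, such graphs admit shortcuts with congestion O(kD log n) and dilation O(kD). -/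
open SimpleGraph

/-- `G` has treewidth at most `k`: there is a tree decomposition of `G` all of whose bags
have at most `k + 1` vertices. -/
def HasTreewidthLE {V : Type} (G : SimpleGraph V) (k : ℕ) : Prop :=
  ∃ (ι : Type) (_ : Fintype ι) (T : SimpleGraph ι) (B : ι → Set V),
    T.IsTree ∧
    (∀ v : V, ∃ i, v ∈ B i) ∧
    (∀ v : V, (T.induce {i | v ∈ B i}).Connected) ∧
    (∀ u v : V, G.Adj u v → ∃ i, u ∈ B i ∧ v ∈ B i) ∧
    (∀ i, (B i).ncard ≤ k + 1)

/-- The top node of a connected subset of a rooted tree. -/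
lemma tree_top {ι : Type} {T : SimpleGraph ι} (hT : T.IsTree) (ρ : ι) (S : Set ι)
    (hS : (T.induce S).Connected) :
    ∃ t ∈ S, ∀ s ∈ S, ∀ p : T.Walk s ρ, p.IsPath →
      t ∈ p.support ∧ ∀ x ∈ p.support, T.dist t ρ ≤ T.dist x ρ → x ∈ S := by
  classical
  obtain ⟨⟨t0, ht0⟩⟩ := hS.nonempty
  obtain ⟨t, htS, hmin⟩ := exists_minimalFor_of_wellFoundedLT (fun x => x ∈ S)
    (fun x => T.dist x ρ) ⟨t0, ht0⟩
  have hmin' : ∀ x ∈ S, T.dist t ρ ≤ T.dist x ρ := by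
    intro x hx
    by_contra h
    push Not at h
    have : T.dist t ρ ≤ T.dist x ρ := hmin hx h.le
    omega
  refine ⟨t, htS, ?_⟩
  intro s hs p hp
  obtain ⟨w, hw⟩ := hS.exists_isPath ⟨s, hs⟩ ⟨t, htS⟩
  obtain ⟨q, hq, hqd⟩ := hT.connected.exists_path_of_dist t ρ
  let f : T.induce S →g T := (Embedding.induce S).toHom
  have hf : ∀ x, f x = x.1 := fun x => rfl
  let w' : T.Walk s t := w.map f
  have hw' : w'.IsPath := hw.map Subtype.val_injective
  have hw'S : ∀ x ∈ w'.support, x ∈ S := by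
    intro x hx
    have hx' : x ∈ (w.map f).support := hx
    rw [Walk.support_map] at hx'
    obtain ⟨y, _, rfl⟩ := List.mem_map.1 hx'
    exact y.2
  have htail : ∀ x ∈ q.support.tail, T.dist x ρ < T.dist t ρ := by
    intro x hx
    cases q with
    | nil => simp at hx
    | cons h q' =>
      simp only [Walk.support_cons, List.tail_cons] at hx
      have h1 := dist_le (q'.dropUntil x hx)
      have h2 := q'.length_dropUntil_le_length hx
      simp only [Walk.length_cons] at hqd
      omega
  have happ : (w'.append q).IsPath := by
    rw [Walk.isPath_def, Walk.support_append, List.nodup_append]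
    refine ⟨hw'.support_nodup, hq.support_nodup.tail, ?_⟩
    intro a ha b hb hab
    subst hab
    have := htail a hb
    have := hmin' a (hw'S a ha)
    omega
  have heq : p = w'.append q := by
    have := (hT.isAcyclic.subsingleton_path s ρ).elim ⟨p, hp⟩ ⟨_, happ⟩
    exact congrArg Subtype.val this
  subst heq
  constructor
  · rw [Walk.mem_support_append_iff]; left; simp
  · intro x hx hd
    rw [Walk.support_append, List.mem_append] at hx
    rcases hx with hx | hx
    · exact hw'S x hx
    · have := htail x hx
      omega

/-- The set of nodes whose bag meets a connected set is connected. -/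
lemma nodes_connected {V ι : Type} {G : SimpleGraph V} {T : SimpleGraph ι} {B : ι → Set V}
    (h2 : ∀ v : V, (T.induce {i | v ∈ B i}).Connected)
    (h3 : ∀ u v : V, G.Adj u v → ∃ i, u ∈ B i ∧ v ∈ B i)
    (X : Set V) (hX : (G.induce X).Connected) :
    (T.induce {i | ∃ v ∈ X, v ∈ B i}).Connected := by
  have key1 : ∀ v (hv : v ∈ X) i j (hi : v ∈ B i) (hj : v ∈ B j),
      (T.induce {i | ∃ v ∈ X, v ∈ B i}).Reachable ⟨i, v, hv, hi⟩ ⟨j, v, hv, hj⟩ := by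
    intro v hv i j hi hj
    have := (h2 v).preconnected ⟨i, hi⟩ ⟨j, hj⟩
    exact this.map (T.induceHomOfLE
      (s := {i | v ∈ B i}) (s' := {i | ∃ v ∈ X, v ∈ B i}) (fun i hi => ⟨v, hv, hi⟩)).toHom
  have key2 : ∀ (u v : X) (w : (G.induce X).Walk u v) i j (hi : u.1 ∈ B i) (hj : v.1 ∈ B j),
      (T.induce {i | ∃ v ∈ X, v ∈ B i}).Reachable ⟨i, u.1, u.2, hi⟩ ⟨j, v.1, v.2, hj⟩ := by
    intro u v w
    induction w with
    | nil => intro i j hi hj; exact key1 _ (Subtype.prop _) _ _ hi hj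
    | cons h p ih =>
      intro i j hi hj
      obtain ⟨l, hl1, hl2⟩ := h3 _ _ h
      exact (key1 _ (Subtype.prop _) i l hi hl1).trans (ih l j hl2 hj)
  rw [connected_iff]
  constructor
  · rintro ⟨i, u, hu, hi⟩ ⟨j, v, hv, hj⟩
    obtain ⟨w⟩ := hX.preconnected ⟨u, hu⟩ ⟨v, hv⟩
    exact key2 _ _ w i j hi hj
  · obtain ⟨⟨v, hv⟩⟩ := hX.nonempty
    obtain ⟨⟨i, hi⟩⟩ := (h2 v).nonempty
    exact ⟨⟨i, v, hv, hi⟩⟩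

/-- Only few disjoint sets meet a small bag. -/
lemma few_meet {V α : Type} [Finite V] (A : Finset α) (CA : α → Set V)
    (hd : ∀ a ∈ A, ∀ b ∈ A, a ≠ b → Disjoint (CA a) (CA b)) (X : Set V) (k : ℕ)
    (hX : X.ncard ≤ k) [DecidablePred fun a => (CA a ∩ X).Nonempty] :
    (A.filter (fun a => (CA a ∩ X).Nonempty)).card ≤ k := by
  refine le_trans ?_ hX
  rcases (A.filter (fun a => (CA a ∩ X).Nonempty)).eq_empty_or_nonempty with h0 | ⟨a0, ha0⟩
  · simp [h0]
  have hne : Nonempty V := ⟨(Finset.mem_filter.1 ha0).2.some⟩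
  have hex : ∀ a ∈ A.filter (fun a => (CA a ∩ X).Nonempty), ∃ v, v ∈ CA a ∧ v ∈ X := by
    intro a ha
    exact (Finset.mem_filter.1 ha).2
  choose! f hf1 hf2 using hex
  rw [← Set.ncard_coe_finset]
  refine Set.ncard_le_ncard_of_injOn f ?_ ?_ (Set.toFinite X)
  · intro a ha
    exact hf2 a ha
  · intro a ha b hb hab
    by_contra hne
    have ha' := (Finset.mem_filter.1 (Finset.mem_coe.1 ha)).1
    have hb' := (Finset.mem_filter.1 (Finset.mem_coe.1 hb)).1
    have h1 := hf1 a ha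
    have h2 := hf1 b hb
    rw [← hab] at h2
    exact Set.disjoint_left.1 (hd a ha' b hb' hne) h1 h2

/-- Two families of disjoint connected sets in a graph of small treewidth have few
intersecting pairs. -/
lemma incidence_bound {V α β : Type} [Finite V] {G : SimpleGraph V} {k : ℕ}
    {ι : Type} {T : SimpleGraph ι} {B : ι → Set V} (hT : T.IsTree)
    (h2 : ∀ v : V, (T.induce {i | v ∈ B i}).Connected)
    (h3 : ∀ u v : V, G.Adj u v → ∃ i, u ∈ B i ∧ v ∈ B i)
    (h4 : ∀ i, (B i).ncard ≤ k + 1)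
    (A : Finset α) (CA : α → Set V) (A' : Finset β) (CB : β → Set V)
    (hA : ∀ a ∈ A, (G.induce (CA a)).Connected)
    (hB : ∀ a ∈ A', (G.induce (CB a)).Connected)
    (hdA : ∀ a ∈ A, ∀ b ∈ A, a ≠ b → Disjoint (CA a) (CA b))
    (hdB : ∀ a ∈ A', ∀ b ∈ A', a ≠ b → Disjoint (CB a) (CB b))
    [DecidablePred fun p : α × β => (CA p.1 ∩ CB p.2).Nonempty] :
    ((A ×ˢ A').filter (fun p => (CA p.1 ∩ CB p.2).Nonempty)).card
      ≤ (k + 1) * (A.card + A'.card) := by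
  classical
  obtain ⟨ρ⟩ := hT.connected.nonempty
  have tA : ∀ a ∈ A, ∃ t, t ∈ {i | ∃ v ∈ CA a, v ∈ B i} ∧
      ∀ s ∈ {i | ∃ v ∈ CA a, v ∈ B i}, ∀ p : T.Walk s ρ, p.IsPath →
      t ∈ p.support ∧ ∀ x ∈ p.support, T.dist t ρ ≤ T.dist x ρ →
        x ∈ {i | ∃ v ∈ CA a, v ∈ B i} := fun a ha =>
    tree_top hT ρ _ (nodes_connected h2 h3 _ (hA a ha))
  have tB : ∀ a ∈ A', ∃ t, t ∈ {i | ∃ v ∈ CB a, v ∈ B i} ∧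
      ∀ s ∈ {i | ∃ v ∈ CB a, v ∈ B i}, ∀ p : T.Walk s ρ, p.IsPath →
      t ∈ p.support ∧ ∀ x ∈ p.support, T.dist t ρ ≤ T.dist x ρ →
        x ∈ {i | ∃ v ∈ CB a, v ∈ B i} := fun a ha =>
    tree_top hT ρ _ (nodes_connected h2 h3 _ (hB a ha))
  have : Nonempty ι := ⟨ρ⟩
  choose! f hf1 hf2 using tA
  choose! g hg1 hg2 using tB
  have hsub : (A ×ˢ A').filter (fun p => (CA p.1 ∩ CB p.2).Nonempty) ⊆
      A.biUnion (fun a => (A'.filter (fun b => (CB b ∩ B (f a)).Nonempty)).image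
        (fun b => (a, b))) ∪
      A'.biUnion (fun b => (A.filter (fun a => (CA a ∩ B (g b)).Nonempty)).image
        (fun a => (a, b))) := by
    rintro ⟨a, b⟩ hab
    simp only [Finset.mem_filter, Finset.mem_product] at hab
    obtain ⟨⟨ha, hb⟩, v, hva, hvb⟩ := hab
    obtain ⟨⟨s, hs⟩⟩ := (h2 v).nonempty
    obtain ⟨p, hp⟩ := hT.connected.exists_isPath s ρ
    have ea := hf2 a ha s ⟨v, hva, hs⟩ p hp
    have eb := hg2 b hb s ⟨v, hvb, hs⟩ p hp
    rw [Finset.mem_union]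
    rcases le_total (T.dist (f a) ρ) (T.dist (g b) ρ) with h | h
    · right
      obtain ⟨x, hx1, hx2⟩ := ea.2 _ eb.1 h
      simp only [Finset.mem_biUnion, Finset.mem_image, Finset.mem_filter]
      exact ⟨b, hb, a, ⟨ha, x, hx1, hx2⟩, rfl⟩
    · left
      obtain ⟨x, hx1, hx2⟩ := eb.2 _ ea.1 h
      simp only [Finset.mem_biUnion, Finset.mem_image, Finset.mem_filter]
      exact ⟨a, ha, b, ⟨hb, x, hx1, hx2⟩, rfl⟩
  refine (Finset.card_le_card hsub).trans ((Finset.card_union_le _ _).trans ?_)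
  have e1 := Finset.card_biUnion_le_card_mul A
    (fun a => (A'.filter (fun b => (CB b ∩ B (f a)).Nonempty)).image (fun b => (a, b))) (k + 1)
    (fun a _ => Finset.card_image_le.trans (few_meet A' CB hdB _ _ (h4 _)))
  have e2 := Finset.card_biUnion_le_card_mul A'
    (fun b => (A.filter (fun a => (CA a ∩ B (g b)).Nonempty)).image (fun a => (a, b))) (k + 1)
    (fun a _ => Finset.card_image_le.trans (few_meet A CA hdA _ _ (h4 _)))
  calc _ ≤ A.card * (k + 1) + A'.card * (k + 1) := add_le_add e1 e2
    _ = _ := by ring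

/-- Dilation of a graph covered by few blocks. -/
lemma dilation_bound {U A V : Type} [Finite V] {W : SimpleGraph U} {J : SimpleGraph A}
    (hJ : J.Connected) (f : J →g W) (top : U → V) (D b : ℕ)
    (h1 : ∀ u v, top u = top v → ∃ w : W.Walk u v, w.length ≤ 2 * D)
    (h2 : ∀ u, ∃ a, top (f a) = top u)
    (h3 : (Set.range (fun a => top (f a))).ncard ≤ b) :
    W.Connected ∧ ∀ u v, W.dist u v ≤ b * (2 * D + 1) := by
  classical
  let R := Set.range (fun a => top (f a))
  have : Fintype R := Fintype.ofFinite R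
  let Q : SimpleGraph R := SimpleGraph.fromRel
    (fun x y => ∃ a a', J.Adj a a' ∧ top (f a) = x ∧ top (f a') = y)
  let φ : A → R := fun a => ⟨top (f a), a, rfl⟩
  have hQr : ∀ a a' (w : J.Walk a a'), Q.Reachable (φ a) (φ a') := by
    intro a a' w
    induction w with
    | nil => rfl
    | @cons x y z h p ih =>
      refine Reachable.trans ?_ ih
      by_cases he : φ x = φ y
      · rw [he]
      · apply Adj.reachable
        rw [SimpleGraph.fromRel_adj]
        exact ⟨he, Or.inl ⟨x, y, h, rfl, rfl⟩⟩
  have hwalk : ∀ (x y : R) (q : Q.Walk x y) (u v : U), top u = x → top v = y →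
      ∃ w : W.Walk u v, w.length ≤ q.length * (2 * D + 1) + 2 * D := by
    intro x y q
    induction q with
    | nil =>
      intro u v hu hv
      obtain ⟨w, hw⟩ := h1 u v (hu.trans hv.symm)
      exact ⟨w, by simpa using hw⟩
    | @cons x y z h p ih =>
      intro u v hu hv
      rw [SimpleGraph.fromRel_adj] at h
      obtain ⟨a, a', haa, hax, hay⟩ : ∃ a a', J.Adj a a' ∧ top (f a) = x ∧ top (f a') = y := by
        rcases h.2 with h | ⟨a, a', h, h', h''⟩
        · exact h
        · exact ⟨a', a, h.symm, h'', h'⟩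
      obtain ⟨w1, hw1⟩ := h1 u (f a) (hu.trans hax.symm)
      obtain ⟨w2, hw2⟩ := ih (f a') v hay hv
      refine ⟨w1.append (Walk.cons (f.map_adj haa) w2), ?_⟩
      simp only [Walk.length_append, Walk.length_cons]
      have : (p.length + 1) * (2 * D + 1) = p.length * (2 * D + 1) + (2 * D + 1) := by ring
      omega
  have hfin : ∀ u v, ∃ w : W.Walk u v, w.length ≤ b * (2 * D + 1) := by
    intro u v
    obtain ⟨a, ha⟩ := h2 u
    obtain ⟨a', ha'⟩ := h2 v
    obtain ⟨j⟩ := hJ.preconnected a a'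
    obtain ⟨q, hq⟩ := (hQr a a' j).exists_isPath
    obtain ⟨w, hw⟩ := hwalk _ _ q u v ha.symm ha'.symm
    refine ⟨w, hw.trans ?_⟩
    have hlt := hq.length_lt
    rw [← Nat.card_eq_fintype_card] at hlt
    have hlt' : q.length + 1 ≤ b := lt_of_lt_of_le hlt h3
    have := Nat.mul_le_mul_right (2 * D + 1) hlt'
    have : (q.length + 1) * (2 * D + 1) = q.length * (2 * D + 1) + (2 * D + 1) := by ring
    omega
  constructor
  · rw [connected_iff]
    refine ⟨fun u v => ?_, ?_⟩
    · obtain ⟨w, _⟩ := hfin u v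
      exact w.reachable
    · obtain ⟨a⟩ := hJ.nonempty
      exact ⟨f a⟩
  · intro u v
    obtain ⟨w, hw⟩ := hfin u v
    exact (dist_le w).trans hw

/-- Parent function of a breadth-first search tree. -/
lemma exists_parent {V : Type} {G : SimpleGraph V} (hG : G.Connected) (r : V) :
    ∃ par : V → V, ∀ v, v ≠ r → G.Adj v (par v) ∧ G.dist (par v) r < G.dist v r := by
  have : ∀ v, ∃ w, v ≠ r → G.Adj v w ∧ G.dist w r < G.dist v r := by
    intro v
    obtain ⟨p, hp⟩ := hG.exists_walk_length_eq_dist v r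
    cases p with
    | nil => exact ⟨r, fun h => absurd rfl h⟩
    | @cons _ w _ h q =>
      refine ⟨w, fun _ => ⟨h, ?_⟩⟩
      have := dist_le q
      simp only [Walk.length_cons] at hp
      omega
  choose f hf using this
  exact ⟨f, hf⟩

/-- The sets of parts passing through each vertex of the tree. -/
lemma exists_load {V ι : Type} [Finite V] (d : V → ℕ) (par : V → V) (r : V)
    (hpar : ∀ v, v ≠ r → d (par v) < d v) (s : Finset ι) (P : ι → Set V) (c : ℕ) :
    ∃ S : V → Finset ι, ∀ v i, i ∈ S v ↔ i ∈ s ∧ (v ∈ P i ∨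
      ∃ w, w ≠ r ∧ par w = v ∧ (S w).card < c ∧ i ∈ S w) := by
  classical
  let rel : V → V → Prop := fun a b => d b < d a
  have : IsTrans V rel := ⟨fun a b c h1 h2 => lt_trans h2 h1⟩
  have : Std.Irrefl rel := ⟨fun a h => lt_irrefl _ h⟩
  have wf : WellFounded rel := Finite.wellFounded_of_trans_of_irrefl rel
  let F : (v : V) → ((w : V) → rel w v → Finset ι) → Finset ι := fun v ih =>
    s.filter (fun i => v ∈ P i ∨ ∃ w, ∃ h : rel w v, w ≠ r ∧ par w = v ∧
      (ih w h).card < c ∧ i ∈ ih w h)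
  refine ⟨wf.fix F, ?_⟩
  intro v i
  rw [wf.fix_eq]
  simp only [F, Finset.mem_filter]
  refine and_congr_right fun _ => or_congr_right ?_
  constructor
  · rintro ⟨w, h, h1, h2, h3, h4⟩
    exact ⟨w, h1, h2, h3, h4⟩
  · rintro ⟨w, h1, h2, h3, h4⟩
    exact ⟨w, by subst h2; exact hpar w h1, h1, h2, h3, h4⟩

/-- Climbing to the first marked vertex. -/
lemma exists_climb {V : Type} (d : V → ℕ) (par : V → V) (marked : V → Prop)
    (hpar : ∀ v, ¬ marked v → d (par v) < d v) :
    ∃ top : V → V, (∀ v, marked v → top v = v) ∧ (∀ v, ¬ marked v → top v = top (par v)) := by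
  classical
  let wf := (measure d).wf
  let F : (v : V) → ((w : V) → (measure d).rel w v → V) → V := fun v ih =>
    if h : marked v then v else ih (par v) (hpar v h)
  refine ⟨wf.fix F, ?_, ?_⟩
  · intro v hv
    rw [wf.fix_eq]
    simp [F, hv]
  · intro v hv
    rw [wf.fix_eq]
    simp [F, hv]

/-- One round: at least two thirds of the parts obtain a good shortcut. -/
lemma shortcut_round
    {V : Type} [Fintype V] (G : SimpleGraph V) (hG : G.Connected)
    (D : ℕ) (hD : ∀ u v : V, G.dist u v ≤ D) (hD1 : 1 ≤ D)
    (k : ℕ) (hk1 : 1 ≤ k) (htw : HasTreewidthLE G k)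
    {m : ℕ} (P : Fin m → Set V)
    (hdisj : Pairwise fun i j => Disjoint (P i) (P j))
    (hconn : ∀ i, (G.induce (P i)).Connected) (s : Finset (Fin m)) :
    ∃ (H : Fin m → G.Subgraph) (bad : Finset (Fin m)), 3 * bad.card ≤ s.card ∧
      (∀ e : Sym2 V, {i : Fin m | i ∈ s ∧ e ∈ (H i).edgeSet}.ncard ≤ 8 * k * D) ∧
      (∀ i ∈ s, i ∉ bad → (partGraph G (P i) (H i)).coe.Connected ∧
        ∀ u v, (partGraph G (P i) (H i)).coe.dist u v ≤ 8 * k * (2 * D + 1)) := by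
  classical
  obtain ⟨ι, _, T, B, hT, -, hB2, hB3, hB4⟩ := htw
  obtain ⟨r⟩ := hG.nonempty
  obtain ⟨par, hpar⟩ := exists_parent hG r
  set c := 8 * k * D with hc
  obtain ⟨S, hS⟩ := exists_load (fun v => G.dist v r) par r (fun v hv => (hpar v hv).2) s P c
  let marked : V → Prop := fun v => v = r ∨ c ≤ (S v).card
  have hmarked : ∀ v, ¬ marked v → v ≠ r ∧ (S v).card < c := by
    intro v hv
    simp only [marked] at hv
    push Not at hv
    exact hv
  obtain ⟨top, htop1, htop2⟩ := exists_climb (fun v => G.dist v r) par marked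
    (fun v hv => (hpar v (hmarked v hv).1).2)
  -- basic properties of `top` and `S`
  have hSs : ∀ v i, i ∈ S v → i ∈ s := fun v i h => ((hS v i).1 h).1
  have hSP : ∀ i ∈ s, ∀ v ∈ P i, i ∈ S v := fun i hi v hv => (hS v i).2 ⟨hi, Or.inl hv⟩
  have hSup : ∀ v i, ¬ marked v → i ∈ S v → i ∈ S (par v) := by
    intro v i hv hi
    exact (hS _ i).2 ⟨hSs v i hi, Or.inr ⟨v, (hmarked v hv).1, rfl, (hmarked v hv).2, hi⟩⟩
  have hdown : ∀ n v, D - G.dist v r = n → ∀ i ∈ S v, ∃ u ∈ P i, top u = top v := by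
    intro n
    induction n using Nat.strong_induction_on with
    | _ n ih =>
      intro v hv i hi
      rcases (hS v i).1 hi with ⟨_, h | ⟨w, hw1, hw2, hw3, hw4⟩⟩
      · exact ⟨v, h, rfl⟩
      · have h1 := (hpar w hw1).2
        rw [hw2] at h1
        have h2 := hD w r
        obtain ⟨u, hu, hu'⟩ := ih (D - G.dist w r) (by omega) w rfl i hw4
        refine ⟨u, hu, hu'.trans ?_⟩
        rw [htop2 w, hw2]
        simp only [marked]
        push Not
        exact ⟨hw1, hw3⟩
  have htopmarked : ∀ n v, G.dist v r = n → marked (top v) := by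
    intro n
    induction n using Nat.strong_induction_on with
    | _ n ih =>
      intro v hv
      by_cases h : marked v
      · rw [htop1 v h]; exact h
      · rw [htop2 v h]
        have := (hpar v (hmarked v h).1).2
        exact ih _ (by omega) (par v) rfl
  -- the components
  let K : Finset V := Finset.univ.filter marked
  let O : Finset V := Finset.univ.filter (fun v => c ≤ (S v).card)
  let C : V → Set V := fun x => {v | top v = x}
  have hK : K.card ≤ O.card + 1 := by
    have : K ⊆ insert r O := by
      intro v hv
      simp only [K, O, marked, Finset.mem_filter, Finset.mem_univ, true_and,
        Finset.mem_insert] at hv ⊢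
      exact hv
    exact (Finset.card_le_card this).trans (Finset.card_insert_le _ _)
  have hCconn : ∀ x ∈ K, (G.induce (C x)).Connected := by
    intro x hx
    have hx' : marked x := (Finset.mem_filter.1 hx).2
    have hxC : x ∈ C x := htop1 x hx'
    have key : ∀ n v, G.dist v r = n → ∀ hv : v ∈ C x,
        (G.induce (C x)).Reachable ⟨v, hv⟩ ⟨x, hxC⟩ := by
      intro n
      induction n using Nat.strong_induction_on with
      | _ n ih =>
        intro v hvn hv
        by_cases h : marked v
        · have h1 := htop1 v h
          have h2 : top v = x := hv
          have h3 : v = x := h1.symm.trans h2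
          subst h3
          rfl
        · have h1 := htop2 v h
          have h2 := hpar v (hmarked v h).1
          have hpv : par v ∈ C x := h1.symm.trans hv
          have := ih _ (by omega) (par v) rfl hpv
          refine Reachable.trans (Adj.reachable ?_) this
          exact h2.1
    rw [connected_iff]
    refine ⟨?_, ⟨⟨x, hxC⟩⟩⟩
    rintro ⟨u, hu⟩ ⟨v, hv⟩
    exact (key _ u rfl hu).trans (key _ v rfl hv).symm
  have hI := incidence_bound hT hB2 hB3 hB4 K C s P hCconn (fun i _ => hconn i)
    (fun a _ b _ hab => Set.disjoint_left.2 (fun v h1 h2 => hab (Eq.trans (Eq.symm h1) h2)))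
    (fun a _ b _ hab => hdisj hab)
  set I := (K ×ˢ s).filter (fun p => (C p.1 ∩ P p.2).Nonempty) with hIdef
  -- lower bounds on incidences
  have hI1 : O.card * c ≤ I.card := by
    have hsub : O.sigma (fun x => S x) ⊆
        (I.image (fun p => (⟨p.1, p.2⟩ : Σ _ : V, Fin m))) := by
      rintro ⟨x, i⟩ hxi
      simp only [Finset.mem_sigma] at hxi
      have hxs : c ≤ (S x).card := (Finset.mem_filter.1 hxi.1).2
      obtain ⟨u, hu, hu'⟩ := hdown _ x rfl i hxi.2
      rw [htop1 x (Or.inr hxs)] at hu'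
      refine Finset.mem_image.2 ⟨(x, i), ?_, rfl⟩
      simp only [hIdef, K, Finset.mem_filter, Finset.mem_product, Finset.mem_univ, true_and]
      exact ⟨⟨Or.inr hxs, hSs x i hxi.2⟩, u, hu', hu⟩
    have h1 := (Finset.card_le_card hsub).trans Finset.card_image_le
    rw [Finset.card_sigma] at h1
    refine le_trans ?_ h1
    rw [← smul_eq_mul]
    exact Finset.card_nsmul_le_sum _ _ _ (fun x hx => (Finset.mem_filter.1 hx).2)
  let tops : Fin m → Finset V := fun i => K.filter (fun x => (C x ∩ P i).Nonempty)
  let bad : Finset (Fin m) := s.filter (fun i => 8 * k < (tops i).card)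
  have hI2 : bad.card * (8 * k + 1) ≤ I.card := by
    have hsub : bad.sigma (fun i => tops i) ⊆
        (I.image (fun p => (⟨p.2, p.1⟩ : Σ _ : Fin m, V))) := by
      rintro ⟨i, x⟩ hxi
      simp only [Finset.mem_sigma] at hxi
      have hi := (Finset.mem_filter.1 hxi.1).1
      have hx := Finset.mem_filter.1 hxi.2
      refine Finset.mem_image.2 ⟨(x, i), ?_, rfl⟩
      simp only [hIdef, Finset.mem_filter, Finset.mem_product]
      exact ⟨⟨hx.1, hi⟩, hx.2⟩
    have h1 := (Finset.card_le_card hsub).trans Finset.card_image_le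
    rw [Finset.card_sigma] at h1
    refine le_trans ?_ h1
    rw [← smul_eq_mul]
    exact Finset.card_nsmul_le_sum _ _ _ (fun x hx => (Finset.mem_filter.1 hx).2)
  have hbad : 3 * bad.card ≤ s.card := by
    have e1 : O.card * (8 * k) ≤ I.card := by
      refine le_trans (Nat.mul_le_mul_left _ ?_) hI1
      rw [hc]
      exact Nat.le_mul_of_pos_right _ hD1
    have e2 : I.card ≤ (2 * k) * (O.card + 1 + s.card) :=
      hI.trans (Nat.mul_le_mul (by omega) (by omega))
    by_contra hcon
    push Not at hcon
    have e3 : s.card + 1 ≤ 3 * bad.card := hcon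
    have e4 : (s.card + 1) * (8 * k) ≤ 3 * bad.card * (8 * k) := Nat.mul_le_mul_right _ e3
    nlinarith
  -- the shortcut
  let cl : Fin m → V → V → Prop := fun i a b => ¬ marked a ∧ par a = b ∧ i ∈ S a
  have hcl : ∀ i a b, cl i a b → G.Adj a b := by
    rintro i a b ⟨h1, rfl, _⟩
    exact (hpar a (hmarked a h1).1).1
  let H : Fin m → G.Subgraph := fun i =>
    { verts := {v | i ∈ S v}
      Adj := fun a b => cl i a b ∨ cl i b a
      adj_sub := by
        rintro a b (h | h)
        · exact hcl i _ _ h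
        · exact (hcl i _ _ h).symm
      edge_vert := by
        rintro a b (h | h)
        · exact h.2.2
        · obtain ⟨h1, rfl, h3⟩ := h
          exact hSup _ _ h1 h3
      symm := ⟨fun a b h => h.symm⟩ }
  refine ⟨H, bad, hbad, ?_, ?_⟩
  · intro e
    induction e using Sym2.ind with
    | _ a b =>
      have hset : {i : Fin m | i ∈ s ∧ s(a, b) ∈ (H i).edgeSet} ⊆
          {i | cl i a b} ∪ {i | cl i b a} := by
        rintro i ⟨_, hi⟩
        exact hi
      have hone : ∀ a b, {i | cl i a b}.ncard ≤ c := by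
        intro a b
        by_cases h : marked a
        · have : {i | cl i a b} = ∅ := by
            ext i; simp [cl, h]
          simp [this]
        · have : {i | cl i a b} ⊆ (S a : Set (Fin m)) := fun i hi => hi.2.2
          have h1 := Set.ncard_le_ncard this (Set.toFinite _)
          rw [Set.ncard_coe_finset] at h1
          exact h1.trans (hmarked a h).2.le
      by_cases hab : ∃ j, cl j a b
      · obtain ⟨j, hj1, hj2, _⟩ := hab
        have : {i | cl i b a} = ∅ := by
          ext i
          simp only [Set.mem_ofPred_eq, Set.mem_empty_iff_false, iff_false]
          rintro ⟨h1, h2, _⟩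
          have e1 := (hpar a (hmarked a hj1).1).2
          have e2 := (hpar b (hmarked b h1).1).2
          rw [hj2] at e1
          rw [h2] at e2
          omega
        rw [this, Set.union_empty] at hset
        exact (Set.ncard_le_ncard hset (Set.toFinite _)).trans (hone a b)
      · have : {i | cl i a b} = ∅ := by
          ext i
          simp only [Set.mem_ofPred_eq, Set.mem_empty_iff_false, iff_false]
          exact fun h => hab ⟨i, h⟩
        rw [this, Set.empty_union] at hset
        exact (Set.ncard_le_ncard hset (Set.toFinite _)).trans (hone b a)
  · intro i hi hib
    set W := partGraph G (P i) (H i) with hW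
    have hverts : ∀ v, v ∈ W.verts ↔ i ∈ S v := by
      intro v
      have : v ∈ W.verts ↔ v ∈ P i ∨ i ∈ S v := Iff.rfl
      rw [this]
      exact ⟨fun h => h.elim (hSP i hi v) id, Or.inr⟩
    have hadjH : ∀ a b, (H i).Adj a b → W.Adj a b := fun a b h =>
      (Subgraph.sup_adj (G₁ := (⊤ : G.Subgraph).induce (P i))).2 (Or.inr h)
    have hadjP : ∀ a b, a ∈ P i → b ∈ P i → G.Adj a b → W.Adj a b := fun a b ha hb h =>
      (Subgraph.sup_adj (G₂ := H i)).2 (Or.inl ⟨ha, hb, h⟩)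
    have hup : ∀ n (u : W.verts), G.dist u.1 r = n →
        ∃ t : W.verts, t.1 = top u.1 ∧ ∃ w : W.coe.Walk u t, w.length ≤ n := by
      intro n
      induction n using Nat.strong_induction_on with
      | _ n ih =>
        intro u hu
        by_cases h : marked u.1
        · exact ⟨u, (htop1 _ h).symm, Walk.nil, Nat.zero_le _⟩
        · have hiu := (hverts _).1 u.2
          have h1 := (hpar _ (hmarked _ h).1).2
          have hp := hSup _ _ h hiu
          obtain ⟨t, ht, w, hw⟩ := ih (G.dist (par u.1) r) (by omega)
            ⟨par u.1, (hverts _).2 hp⟩ rfl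
          have hadj : W.coe.Adj u ⟨par u.1, (hverts _).2 hp⟩ :=
            hadjH _ _ (Or.inl ⟨h, rfl, hiu⟩)
          refine ⟨t, ht.trans (htop2 _ h).symm, Walk.cons hadj w, ?_⟩
          rw [Walk.length_cons]
          omega
    let f : G.induce (P i) →g W.coe :=
      { toFun := fun a => ⟨a.1, (hverts _).2 (hSP i hi a.1 a.2)⟩
        map_rel' := fun {a b} h => hadjP a.1 b.1 a.2 b.2 h }
    refine dilation_bound (hconn i) f (fun u => top u.1) D (8 * k) ?_ ?_ ?_
    · intro u v huv
      obtain ⟨t, ht, w, hw⟩ := hup _ u rfl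
      obtain ⟨t', ht', w', hw'⟩ := hup _ v rfl
      have htt : t = t' := Subtype.ext (ht.trans (huv.trans ht'.symm))
      subst htt
      refine ⟨w.append w'.reverse, ?_⟩
      simp only [Walk.length_append, Walk.length_reverse]
      have := hD u.1 r
      have := hD v.1 r
      omega
    · intro u
      obtain ⟨a, ha, ha'⟩ := hdown _ u.1 rfl i ((hverts _).1 u.2)
      exact ⟨⟨a, ha⟩, ha'⟩
    · have hle : (tops i).card ≤ 8 * k := by
        by_contra hcon
        exact hib (Finset.mem_filter.2 ⟨hi, not_le.1 hcon⟩)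
      refine le_trans ?_ hle
      rw [← Set.ncard_coe_finset]
      refine Set.ncard_le_ncard ?_ (Set.toFinite _)
      rintro x ⟨a, rfl⟩
      refine Finset.mem_coe.2 (Finset.mem_filter.2 ⟨?_, a.1, rfl, a.2⟩)
      exact Finset.mem_filter.2 ⟨Finset.mem_univ _, htopmarked _ _ rfl⟩

/-- Combine a round with a shortcut for the remaining parts. -/
lemma shortcut_iterate
    {V : Type} [Fintype V] (G : SimpleGraph V) (hG : G.Connected)
    (D : ℕ) (hD : ∀ u v : V, G.dist u v ≤ D) (hD1 : 1 ≤ D)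
    (k : ℕ) (hk1 : 1 ≤ k) (htw : HasTreewidthLE G k)
    {m : ℕ} (P : Fin m → Set V)
    (hdisj : Pairwise fun i j => Disjoint (P i) (P j))
    (hconn : ∀ i, (G.induce (P i)).Connected) (L : ℕ) :
    ∀ s : Finset (Fin m), s.card ≤ 2 ^ L → (L = 0 → s = ∅) →
    ∃ (H : Fin m → G.Subgraph),
      (∀ e : Sym2 V, {i : Fin m | i ∈ s ∧ e ∈ (H i).edgeSet}.ncard ≤ 8 * k * D * L) ∧
      (∀ i ∈ s, (partGraph G (P i) (H i)).coe.Connected ∧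
        ∀ u v, (partGraph G (P i) (H i)).coe.dist u v ≤ 8 * k * (2 * D + 1)) := by
  classical
  induction L with
  | zero =>
    intro s _ h
    have := h rfl
    subst this
    exact ⟨fun _ => ⊥, by simp, by simp⟩
  | succ L ih =>
    intro s hs _
    obtain ⟨H, bad, hb, hc, hg⟩ :=
      shortcut_round G hG D hD hD1 k hk1 htw P hdisj hconn s
    obtain ⟨H', hc', hg'⟩ := ih bad (by rw [pow_succ] at hs; omega) (by
      rintro rfl
      simp only [zero_add, pow_one] at hs
      exact Finset.card_eq_zero.1 (by omega))
    refine ⟨fun i => if i ∈ bad then H' i else H i, ?_, ?_⟩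
    · intro e
      have hsub : {i : Fin m | i ∈ s ∧ e ∈ (if i ∈ bad then H' i else H i).edgeSet} ⊆
          {i : Fin m | i ∈ s ∧ e ∈ (H i).edgeSet} ∪ {i | i ∈ bad ∧ e ∈ (H' i).edgeSet} := by
        rintro i ⟨hi, he⟩
        by_cases h : i ∈ bad
        · rw [if_pos h] at he
          exact Or.inr ⟨h, he⟩
        · rw [if_neg h] at he
          exact Or.inl ⟨hi, he⟩
      refine (Set.ncard_le_ncard hsub (Set.toFinite _)).trans
        ((Set.ncard_union_le _ _).trans ?_)
      have := hc e
      have := hc' e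
      rw [Nat.mul_succ]
      omega
    · intro i hi
      by_cases h : i ∈ bad
      · have he : (if i ∈ bad then H' i else H i) = H' i := if_pos h
        beta_reduce
        rw [he]
        exact hg' i h
      · have he : (if i ∈ bad then H' i else H i) = H i := if_neg h
        beta_reduce
        rw [he]
        exact hg i hi h

/-- **Corollary.** Any finite connected graph `G` with `n` vertices, diameter `D`, and
treewidth at most `k` admits, for every collection of parts, a shortcut with congestion at
most `8kD⌈log₂ n⌉` and dilation at most `8k(2D+1)`. -/
theorem shortcuts_of_treewidth
    {V : Type} [Fintype V] (G : SimpleGraph V) (hG : G.Connected)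
    (D : ℕ) (hD : ∀ u v : V, G.dist u v ≤ D)
    (k : ℕ) (htw : HasTreewidthLE G k)
    (m : ℕ) (P : Fin m → Set V)
    (hdisj : Pairwise fun i j => Disjoint (P i) (P j))
    (hconn : ∀ i, (G.induce (P i)).Connected) :
    ∃ H : Fin m → G.Subgraph,
      (∀ e : Sym2 V,
        {i : Fin m | e ∈ (H i).edgeSet}.ncard ≤ 8 * k * D * Nat.clog 2 (Fintype.card V)) ∧
      (∀ i, (partGraph G (P i) (H i)).coe.Connected ∧
        ∀ u v, (partGraph G (P i) (H i)).coe.dist u v ≤ 8 * k * (2 * D + 1)) := by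
  classical
  have hne : ∀ i, (P i).Nonempty := by
    intro i
    obtain ⟨⟨v, hv⟩⟩ := (hconn i).nonempty
    exact ⟨v, hv⟩
  by_cases hn : Fintype.card V ≤ 1
  · have hsub : Subsingleton V := Fintype.card_le_one_iff_subsingleton.1 hn
    refine ⟨fun _ => ⊥, by simp, ?_⟩
    intro i
    have hd : ∀ u v, (partGraph G (P i) ⊥).coe.dist u v = 0 := by
      intro u v
      have : u = v := Subtype.ext (hsub.elim _ _)
      subst this
      exact dist_self
    refine ⟨?_, fun u v => by rw [hd]; exact Nat.zero_le _⟩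
    rw [connected_iff]
    constructor
    · intro u v
      have : u = v := Subtype.ext (hsub.elim _ _)
      subst this
      rfl
    · obtain ⟨v, hv⟩ := hne i
      exact ⟨⟨v, Or.inl hv⟩⟩
  · push Not at hn
    obtain ⟨a, b, hab⟩ := Fintype.one_lt_card_iff.1 hn
    have hD1 : 1 ≤ D := (hG.pos_dist_of_ne hab).trans_le (hD a b)
    have hk1 : 1 ≤ k := by
      by_contra hk
      obtain ⟨ι, _, T, B, hT, -, hB2, hB3, hB4⟩ := htw
      obtain ⟨w⟩ := hG.preconnected a b
      cases w with
      | nil => exact hab rfl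
      | @cons _ c _ h _ =>
        obtain ⟨i, h1, h2⟩ := hB3 _ _ h
        have h4 := hB4 i
        have h5 : (B i).ncard ≤ 1 := by omega
        exact h.ne ((Set.ncard_le_one (Set.toFinite _)).1 h5 _ h1 _ h2)
    have hm : m ≤ Fintype.card V := by
      choose f hf using hne
      have hinj : Function.Injective f := by
        intro i j hij
        by_contra hne
        have h1 := hf i
        rw [hij] at h1
        exact Set.disjoint_left.1 (hdisj hne) h1 (hf j)
      simpa using Fintype.card_le_of_injective f hinj
    obtain ⟨H, h1, h2⟩ := shortcut_iterate G hG D hD hD1 k hk1 htw P hdisj hconn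
      (Nat.clog 2 (Fintype.card V)) Finset.univ
      (by
        rw [Finset.card_univ, Fintype.card_fin]
        exact hm.trans (Nat.le_pow_clog (by norm_num) _))
      (by
        intro h
        have := Nat.clog_pos (b := 2) (by norm_num) hn
        omega)
    exact ⟨H, by simpa using h1, fun i => h2 i (Finset.mem_univ i)⟩
end
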